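/- Let q = p^f be a power of a prime p, let d ≥ 1 and k > 0, take v = t, and suppose S̃_d(-k) = Σ_{a monic of degree d, t ∤ a} a^k ≠ 0. Let W_d(k) be the set of (d+1)-tuples (m_0,…,m_d) of nonnegative integers such that m_0 + … + m_d = k with no carrying of base-p digits, m_i > 0 and (q-1) | m_i for 1 ≤ i ≤ d−1, and (q-1) | m_d. Then the weight w(m) = d·m_0 + (d-1)·m_1 + … + 1·m_{d-1} attains its minimum over W_d(k) at a unique tuple, and the t-adic valuation v_t(S̃_d(-k)) equals this minimum. -/

import Mathlib

/-!
Expanding `a ^ k` by the multinomial theorem and summing over the coefficients of `a` gives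
`rPowerSum F X d k = ∑ m, tupleCoeff F m * X ^ wt m` (`rPowerSum_eq`). By Kummer's theorem
(`multinomial_not_dvd_iff`) and the values of the power sums of a finite field, the coefficient of
`m` is nonzero exactly when `m ∈ Wset` (`tupleCoeff_ne_zero_iff`). So everything follows once the
weight is known to have a unique minimiser on `Wset` (`exists_unique_min`).

Write `q = p ^ f`. The base-`p` digits of `k` are regarded as a stock of items: position `j` holds as
many items of weight `p ^ j` as its digit says, and a tuple without carrying distributes these items
over the bins `0, …, d`. The weight of the tuple is the sum over `l < d` of the weights of the
contents of the bins `0, …, l`. Divisibility by `q - 1` only depends on the number of items in each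
residue class of positions modulo `f`. Hence for given class counts it is best that the bins
`0, …, l` hold the lightest items of each class, for all `l` at once, and this is the only best
choice (`DigSeq.phi_le`). What remains is an optimisation problem for the class counts `c i h`, with
`h` in the cyclic group `ZMod f`. The divisibility conditions say that
`c i h = p * τ i h + β i h - τ i (h + 1)` with nonnegative integers `τ i h`, the cut variables
(`exists_cut`), where `β i h = p - 1` for the bins `i ≥ 1`, and `β 0` encodes the residue of `k`.
This problem is `Sys`; its solutions correspond to the tuples of minimal weight by
`WSeq.exists_feas`, `WSeq.cost_le` and `exists_WSeq`.

Uniqueness of the optimum (`Sys.Opt.unique`) is proved by exchange arguments. Lowering cut variables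
along a walk around the cycle, which moves to the nearest bin with a positive cut variable whenever
necessary, never raises the cost (`Sys.Feas.step`); a closed walk would strictly save weight, so at
an optimum all cut variables vanish at some common cut (`Sys.Opt.exists_tight`). If two optima had
different class totals, consider the heaviest item used by only one of them, say an item of class
`a`. The optimum using it has the larger total of the cut variables at `a` (`Sys.Opt.cut_neg`),
whence it leaves unused an item of an earlier class `b`, lighter than some item that it uses, with
no tight cut between the two classes. A walk from `b` exchanges the two and saves weight
(`Sys.Opt.no_wall`). So the class totals agree, and induction on the number of bins
(`Sys.Opt.restrict`) determines all the partial totals.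
-/

open Polynomial

open scoped Classical

/-- The monic polynomial `X^d + c_{d-1} X^{d-1} + ... + c_0` determined by its lower
coefficients `c : Fin d → F`; these parametrize the monic polynomials of degree `d`. -/
noncomputable def monicPoly (F : Type) [Field F] (d : ℕ) (c : Fin d → F) : F[X] :=
  X ^ d + ∑ i : Fin d, C (c i) * X ^ (i : ℕ)

/-- `S_d(-k) = Σ_{a monic of degree d} a^k`. -/
noncomputable def powerSum (F : Type) [Field F] [Fintype F] (d k : ℕ) : F[X] :=
  ∑ c : Fin d → F, monicPoly F d c ^ k

/-- `S̃_d(-k) = Σ_{a monic of degree d, v ∤ a} a^k`. -/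
noncomputable def rPowerSum (F : Type) [Field F] [Fintype F] (v : F[X]) (d k : ℕ) : F[X] :=
  ∑ c : Fin d → F, if v ∣ monicPoly F d c then 0 else monicPoly F d c ^ k

/-- `∑ i, m i = k` with no carrying of base-`p` digits. -/
def NoCarry (p : ℕ) {n : ℕ} (m : Fin n → ℕ) (k : ℕ) : Prop :=
  (∑ i, m i = k) ∧
    ∀ j : ℕ, (∑ i, (Nat.digits p (m i)).getD j 0) = (Nat.digits p k).getD j 0

/-- `U_d(k)`. -/
def Uset (p q d k : ℕ) : Set (Fin (d + 1) → ℕ) :=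
  {m | NoCarry p m k ∧ ∀ i : Fin (d + 1), 0 < (i : ℕ) → 0 < m i ∧ (q - 1) ∣ m i}

/-- `V_d(k)`. -/
def Vset (p q d k : ℕ) : Set (Fin (d + 1) → ℕ) :=
  {m | m ∈ Uset p q d k ∧ 0 < m 0}

/-- `W_d(k)`, the index set for the restricted power sum at `v = t`. -/
def Wset (p q d k : ℕ) : Set (Fin (d + 1) → ℕ) :=
  {m | NoCarry p m k ∧
      (∀ i : Fin (d + 1), 0 < (i : ℕ) → (i : ℕ) < d → 0 < m i ∧ (q - 1) ∣ m i) ∧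
      (q - 1) ∣ m (Fin.last d)}

/-- the weight `d·m_0 + (d-1)·m_1 + ⋯ + 1·m_{d-1}`. -/
def wt {d : ℕ} (m : Fin (d + 1) → ℕ) : ℕ := ∑ i : Fin (d + 1), (d - (i : ℕ)) * m i

/-- `L_k = min_{0 ≤ i ≤ f-1} l(k·p^i)/(q-1)` where `l` is the base-`q` digit sum. -/
noncomputable def Lval (q p f k : ℕ) : ℚ :=
  (Finset.Icc 0 (f - 1)).inf' ⟨0, by simp⟩
    (fun i => ((Nat.digits q (k * p ^ i)).sum : ℚ) / ((q : ℚ) - 1))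

/-- the `v`-adic multiple zeta value at negative integers `s_1, …, s_r`. -/
noncomputable def zetaV (F : Type) [Field F] [Fintype F] (v : F[X]) {r : ℕ}
    (s : Fin r → ℤ) : F[X] :=
  ∑ᶠ d ∈ {d : Fin r → ℕ | StrictAnti d}, ∏ i, rPowerSum F v (d i) (-(s i)).toNat

/-- the multiple zeta value at negative integers `s_1, …, s_r`. -/
noncomputable def zetaMZV (F : Type) [Field F] [Fintype F] {r : ℕ} (s : Fin r → ℤ) : F[X] :=
  ∑ᶠ d ∈ {d : Fin r → ℕ | StrictAnti d}, ∏ i, powerSum F (d i) (-(s i)).toNat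

/-- the trivial-zero condition for a prime of degree `e`. -/
def TrivialZeroCond (q p f : ℕ) {r : ℕ} (s : Fin r → ℤ) (e : ℕ) : Prop :=
  (∃ i : Fin r, s i < 0 ∧
      Lval q p f (-(s i)).toNat + (e : ℚ) < ((r - 1 - (i : ℕ) : ℕ) : ℚ)) ∨
  (∃ i j : Fin r, j < i ∧ s i < 0 ∧ s j < 0 ∧
      (r - 1 - (i : ℕ) : ℕ) < e ∧
      Lval q p f (-(s i)).toNat < ((r - 1 - (i : ℕ) : ℕ) : ℚ) ∧
      Lval q p f (-(s j)).toNat < (((i : ℕ) - (j : ℕ) : ℕ) : ℚ))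

set_option linter.unusedSectionVars false

/-! ### Weights of the items of one class -/

/-- The function supported at the single bin `j`, with value `x` there. -/
def sg (j : ℕ) (x : ℤ) (i : ℕ) : ℤ := if i = j then x else 0

lemma sum_sg (j l : ℕ) (x : ℤ) :
    ∑ i ∈ Finset.range l, sg j x i = if j < l then x else 0 := by
  simp [sg, Finset.sum_ite_eq', Finset.mem_range]

/-- Change of cost, within one class, when the counts `n i` are changed by
`Δ i`. -/
def clsCost (φ : ℤ → ℤ) (n Δ : ℕ → ℤ) (d : ℕ) : ℤ :=
  ∑ l ∈ Finset.range d, (φ (∑ i ∈ Finset.range (l + 1), n i + ∑ i ∈ Finset.range (l + 1), Δ i)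
    - φ (∑ i ∈ Finset.range (l + 1), n i))

/-- The item weights of one class: positive, nondecreasing, and growing by a factor `q` every
`p - 1` items. -/
structure OneClass (p q : ℤ) (φ : ℤ → ℤ) : Prop where
  pos : ∀ t, 0 ≤ t → 1 ≤ φ (t + 1) - φ t
  mono : ∀ s t, 0 ≤ s → s ≤ t → φ (s + 1) - φ s ≤ φ (t + 1) - φ t
  gap : ∀ t, 0 ≤ t → q * (φ (t + 1) - φ t) ≤ φ (t + p) - φ (t + p - 1)

namespace OneClass

variable {p q : ℤ} {φ : ℤ → ℤ}

lemma le (H : OneClass p q φ) {s t : ℤ} (hs : 0 ≤ s) (hst : s ≤ t) : φ s ≤ φ t := by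
  obtain ⟨m, rfl⟩ : ∃ m : ℕ, t = s + m := ⟨(t - s).toNat, by omega⟩
  clear hst
  induction m with
  | zero => simp
  | succ m ih =>
    have := H.pos (s + m) (by omega)
    push_cast
    rw [← add_assoc]
    omega

/-- Convexity: adding `B` items costs more on top of a larger stack. -/
lemma convex (H : OneClass p q φ) {s t B : ℤ} (hs : 0 ≤ s) (hst : s ≤ t) (hB : 0 ≤ B) :
    φ (s + B) - φ s ≤ φ (t + B) - φ t := by
  obtain ⟨m, rfl⟩ : ∃ m : ℕ, B = m := ⟨B.toNat, by omega⟩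
  clear hB
  induction m with
  | zero => simp
  | succ m ih =>
    have := H.mono (s + m) (t + m) (by omega) (by omega)
    push_cast
    rw [← add_assoc, ← add_assoc]
    omega

lemma cost_le (H : OneClass p q φ) {n Δ : ℕ → ℤ} {d : ℕ}
    (hn : ∀ i < d, 0 ≤ n i + Δ i)
    (hD : ∀ l ≤ d, ∑ i ∈ Finset.range l, Δ i ≤ 0) : clsCost φ n Δ d ≤ 0 := by
  unfold clsCost
  apply Finset.sum_nonpos
  intro l hl
  rw [Finset.mem_range] at hl
  have h1 : 0 ≤ ∑ i ∈ Finset.range (l + 1), (n i + Δ i) :=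
    Finset.sum_nonneg fun i hi => hn i (by rw [Finset.mem_range] at hi; omega)
  rw [Finset.sum_add_distrib] at h1
  have h2 := hD (l + 1) (by omega)
  have := H.le h1 (t := ∑ i ∈ Finset.range (l + 1), n i) (by linarith)
  linarith

/-- If all partial changes are nonpositive and the class total drops, the saving is at least the
weight of the top item. -/
lemma cost_le_top (H : OneClass p q φ) {n Δ : ℕ → ℤ} {d : ℕ}
    (hn : ∀ i < d, 0 ≤ n i + Δ i)
    (hD : ∀ l ≤ d, ∑ i ∈ Finset.range l, Δ i ≤ 0)
    (hd : ∑ i ∈ Finset.range d, Δ i ≤ -1) :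
    clsCost φ n Δ d ≤ -(φ (∑ i ∈ Finset.range d, n i) - φ (∑ i ∈ Finset.range d, n i - 1)) := by
  rcases d with _ | d
  · simp at hd
  have h0 := H.cost_le (d := d) (n := n) (Δ := Δ) (fun i hi => hn i (by omega))
    (fun l hl => hD l (by omega))
  unfold clsCost at *
  rw [Finset.sum_range_succ]
  have h1 : 0 ≤ ∑ i ∈ Finset.range (d + 1), (n i + Δ i) :=
    Finset.sum_nonneg fun i hi => hn i (by rw [Finset.mem_range] at hi; omega)
  rw [Finset.sum_add_distrib] at h1
  have := H.le h1 (t := ∑ i ∈ Finset.range (d + 1), n i - 1) (by linarith)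
  linarith

/-- Geometric growth: the weights of the next item at the levels `j < l ≤ m` sum up to less than
`q / (q - 1)` times the last of them. -/
lemma geom (H : OneClass p q φ) (hp : 2 ≤ p) {n : ℕ → ℤ} {j : ℕ} (m : ℕ) (hjm : j < m)
    (hn0 : ∀ i < m, 0 ≤ n i) (hn : ∀ i < m, j < i → p - 1 ≤ n i) :
    (q - 1) * ∑ l ∈ Finset.Ioc j m, (φ (∑ i ∈ Finset.range l, n i + 1) -
      φ (∑ i ∈ Finset.range l, n i)) <
    q * (φ (∑ i ∈ Finset.range m, n i + 1) - φ (∑ i ∈ Finset.range m, n i)) := by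
  induction m, hjm using Nat.le_induction with
  | base =>
    have h0 : 0 ≤ ∑ i ∈ Finset.range (j + 1), n i :=
      Finset.sum_nonneg fun i hi => hn0 i (by rw [Finset.mem_range] at hi; omega)
    have := H.pos _ h0
    simp only [Nat.succ_eq_add_one] at *
    rw [Finset.sum_Ioc_succ_top (by omega)]
    simp
    linarith
  | succ m hjm ih =>
    have h0 : 0 ≤ ∑ i ∈ Finset.range m, n i :=
      Finset.sum_nonneg fun i hi => hn0 i (by rw [Finset.mem_range] at hi; omega)
    have ih := ih (fun i hi => hn0 i (by omega)) (fun i hi => hn i (by omega))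
    rw [Finset.sum_Ioc_succ_top (by omega), mul_add]
    have h1 := H.gap _ h0
    have h2 := hn m (by omega) (by omega)
    have h3 := H.mono (∑ i ∈ Finset.range m, n i + p - 1) (∑ i ∈ Finset.range (m + 1), n i)
      (by omega) (by rw [Finset.sum_range_succ]; omega)
    rw [sub_add_cancel] at h3
    linarith

end OneClass

/-! ### The optimisation problem and the exchange principle -/

/-- The data of the optimisation problem: `f` cyclically arranged classes; `φ h N` is the weight of
the `N` lightest items of class `h`; `β i h` is the offset of bin `i` in class `h`. -/
structure Sys (f : ℕ) [NeZero f] where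
  p : ℤ
  q : ℤ
  hp : 2 ≤ p
  hq : 2 ≤ q
  β : ℕ → ZMod f → ℤ
  β_zero : ∀ h, 0 ≤ β 0 h
  β_pos : ∀ i h, 1 ≤ i → β i h = p - 1
  φ : ZMod f → ℤ → ℤ
  cls : ∀ h, OneClass p q (φ h)
  /-- weights of items of different classes differ by a factor at least `2` -/
  sep : ∀ h h' s t, h ≠ h' → 0 ≤ s → 0 ≤ t →
    2 * (φ h (s + 1) - φ h s) ≤ φ h' (t + 1) - φ h' t ∨
    2 * (φ h' (t + 1) - φ h' t) ≤ φ h (s + 1) - φ h s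
  /-- a set of items all lighter than a given item is lighter than that item in total -/
  small : ∀ (u w : ZMod f → ℤ) (a : ZMod f) (t : ℤ), 0 ≤ t → (∀ h, 0 ≤ u h) → (∀ h, u h ≤ w h) →
    (∀ h, u h < w h → φ h (w h) - φ h (w h - 1) < φ a (t + 1) - φ a t) →
    ∑ h, (φ h (w h) - φ h (u h)) < φ a (t + 1) - φ a t

namespace Sys

variable {f : ℕ} [NeZero f] (S : Sys f)

lemma β_nonneg (i : ℕ) (h : ZMod f) : 0 ≤ S.β i h := by
  rcases Nat.eq_zero_or_pos i with rfl | hi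
  · exact S.β_zero h
  · rw [S.β_pos i h hi]
    have := S.hp
    omega

/-- The number of items of class `h` in bin `i`, in terms of the cut variables `τ`. -/
def cnt (τ : ℕ → ZMod f → ℤ) (i : ℕ) (h : ZMod f) : ℤ := S.p * τ i h + S.β i h - τ i (h + 1)

/-- The number of items of class `h` in the bins below `l`. -/
def tot (τ : ℕ → ZMod f → ℤ) (l : ℕ) (h : ZMod f) : ℤ := ∑ i ∈ Finset.range l, S.cnt τ i h

/-- Feasibility: cut variables and counts are nonnegative, and the stock `L` is not exceeded. -/
structure Feas (d : ℕ) (L : ZMod f → ℤ) (τ : ℕ → ZMod f → ℤ) : Prop where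
  τ_nonneg : ∀ i < d, ∀ h, 0 ≤ τ i h
  cnt_nonneg : ∀ i < d, ∀ h, 0 ≤ S.cnt τ i h
  tot_le : ∀ h, S.tot τ d h ≤ L h

/-- The total weight of the chain of partial totals. -/
def cost (d : ℕ) (τ : ℕ → ZMod f → ℤ) : ℤ :=
  ∑ l ∈ Finset.range d, ∑ h, S.φ h (S.tot τ (l + 1) h)

/-- Optimality among feasible configurations. -/
structure Opt (d : ℕ) (L : ZMod f → ℤ) (τ : ℕ → ZMod f → ℤ) : Prop where
  feas : S.Feas d L τ
  le : ∀ τ', S.Feas d L τ' → S.cost d τ ≤ S.cost d τ'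

/-- Reindexing of the cyclic index from a base point. -/
lemma sum_base (b : ZMod f) (G : ZMod f → ℤ) :
    ∑ h, G h = ∑ s ∈ Finset.range f, G (b + (s : ZMod f)) := by
  symm
  apply Finset.sum_bij' (fun (s : ℕ) _ => b + (s : ZMod f)) (fun h _ => (h - b).val)
  · intro s _; simp
  · intro h _; simpa using ZMod.val_lt (h - b)
  · intro s hs
    rw [Finset.mem_range] at hs
    simp [ZMod.val_natCast, Nat.mod_eq_of_lt hs]
  · intro h _
    simp
  · intro s _; rfl

lemma exists_base (b h : ZMod f) : ∃ s < f, h = b + (s : ZMod f) :=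
  ⟨(h - b).val, ZMod.val_lt _, by simp⟩

variable {S}

lemma Feas.tot_nonneg {d : ℕ} {L : ZMod f → ℤ} {τ : ℕ → ZMod f → ℤ} (H : S.Feas d L τ)
    {l : ℕ} (hl : l ≤ d) (h : ZMod f) : 0 ≤ S.tot τ l h :=
  Finset.sum_nonneg fun i hi => H.cnt_nonneg i (by rw [Finset.mem_range] at hi; omega) h

lemma Feas.tot_mono {d : ℕ} {L : ZMod f → ℤ} {τ : ℕ → ZMod f → ℤ} (H : S.Feas d L τ)
    {l m : ℕ} (hlm : l ≤ m) (hm : m ≤ d) (h : ZMod f) : S.tot τ l h ≤ S.tot τ m h := by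
  apply Finset.sum_le_sum_of_subset_of_nonneg
  · exact Finset.range_mono hlm
  · intro i hi _
    exact H.cnt_nonneg i (by rw [Finset.mem_range] at hi; omega) h

/-- The exchange principle: a cyclic change `δ` of the cut variables that keeps feasibility cannot
decrease the cost of an optimum. -/
lemma Opt.exch {d : ℕ} {L : ZMod f → ℤ} {τ : ℕ → ZMod f → ℤ} (H : S.Opt d L τ)
    (b : ZMod f) (δ : ℕ → ℕ → ℤ) (h0 : ∀ i < d, δ i 0 = δ i f)
    (h1 : ∀ i < d, ∀ s < f, δ i s ≤ τ i (b + (s : ZMod f)))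
    (h2 : ∀ s < f, ∀ i < d, 0 ≤ S.cnt τ i (b + (s : ZMod f)) + (δ i (s + 1) - S.p * δ i s))
    (h3 : ∀ s < f, S.tot τ d (b + (s : ZMod f)) +
      ∑ i ∈ Finset.range d, (δ i (s + 1) - S.p * δ i s) ≤ L (b + (s : ZMod f))) :
    0 ≤ ∑ s ∈ Finset.range f, clsCost (S.φ (b + (s : ZMod f)))
      (fun i => S.cnt τ i (b + (s : ZMod f))) (fun i => δ i (s + 1) - S.p * δ i s) d := by
  set τ' : ℕ → ZMod f → ℤ := fun i h => τ i h - δ i (h - b).val with hτ'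
  have e1 : ∀ i, ∀ s < f, τ' i (b + (s : ZMod f)) = τ i (b + (s : ZMod f)) - δ i s := by
    intro i s hs
    simp [hτ', ZMod.val_natCast, Nat.mod_eq_of_lt hs]
  have e2 : ∀ i < d, ∀ s < f, τ' i (b + (s : ZMod f) + 1) =
      τ i (b + (s : ZMod f) + 1) - δ i (s + 1) := by
    intro i hi s hs
    rcases Nat.lt_or_ge (s + 1) f with h | h
    · have := e1 i (s + 1) h
      push_cast at this
      rwa [← add_assoc] at this
    · have hsf : s + 1 = f := by omega
      have h5 : b + (s : ZMod f) + 1 = b := by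
        have : ((s + 1 : ℕ) : ZMod f) = 0 := by rw [hsf]; simp
        push_cast at this
        rw [add_assoc, this, add_zero]
      have := e1 i 0 (by omega)
      rw [h5, hsf, ← h0 i hi]
      simpa using this
  have e3 : ∀ i < d, ∀ s < f, S.cnt τ' i (b + (s : ZMod f)) =
      S.cnt τ i (b + (s : ZMod f)) + (δ i (s + 1) - S.p * δ i s) := by
    intro i hi s hs
    unfold cnt
    rw [e1 i s hs, e2 i hi s hs]
    ring
  have e4 : ∀ l ≤ d, ∀ s < f, S.tot τ' l (b + (s : ZMod f)) =
      S.tot τ l (b + (s : ZMod f)) + ∑ i ∈ Finset.range l, (δ i (s + 1) - S.p * δ i s) := by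
    intro l hl s hs
    unfold tot
    rw [← Finset.sum_add_distrib]
    exact Finset.sum_congr rfl fun i hi => e3 i (by rw [Finset.mem_range] at hi; omega) s hs
  have hF : S.Feas d L τ' := by
    refine ⟨?_, ?_, ?_⟩
    · intro i hi h
      obtain ⟨s, hs, rfl⟩ := exists_base b h
      rw [e1 i s hs]
      linarith [h1 i hi s hs]
    · intro i hi h
      obtain ⟨s, hs, rfl⟩ := exists_base b h
      rw [e3 i hi s hs]
      exact h2 s hs i hi
    · intro h
      obtain ⟨s, hs, rfl⟩ := exists_base b h
      rw [e4 d le_rfl s hs]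
      exact h3 s hs
  have hle := H.le τ' hF
  unfold cost at hle
  rw [← sub_nonneg, ← Finset.sum_sub_distrib] at hle
  unfold clsCost
  rw [Finset.sum_comm]
  refine hle.trans (le_of_eq ?_)
  apply Finset.sum_congr rfl
  intro l hl
  rw [Finset.mem_range] at hl
  rw [← Finset.sum_sub_distrib, sum_base b]
  apply Finset.sum_congr rfl
  intro s hs
  rw [Finset.mem_range] at hs
  rw [e4 (l + 1) (by omega) s hs]
  rfl

/-- A change `Δ` of the counts of class `h` that keeps feasibility and costs at most `B`. -/
structure ClassOK (S : Sys f) (d : ℕ) (L : ZMod f → ℤ) (τ : ℕ → ZMod f → ℤ) (h : ZMod f)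
    (Δ : ℕ → ℤ) (B : ℤ) : Prop where
  nonneg : ∀ i < d, 0 ≤ S.cnt τ i h + Δ i
  le : S.tot τ d h + ∑ i ∈ Finset.range d, Δ i ≤ L h
  cost : clsCost (S.φ h) (fun i => S.cnt τ i h) Δ d ≤ B

lemma Opt.exch' {d : ℕ} {L : ZMod f → ℤ} {τ : ℕ → ZMod f → ℤ} (H : S.Opt d L τ)
    (b : ZMod f) (δ : ℕ → ℕ → ℤ) (h0 : ∀ i < d, δ i 0 = δ i f)
    (h1 : ∀ i < d, ∀ s < f, δ i s ≤ τ i (b + (s : ZMod f))) (B : ℕ → ℤ)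
    (h2 : ∀ s < f, S.ClassOK d L τ (b + (s : ZMod f)) (fun i => δ i (s + 1) - S.p * δ i s) (B s)) :
    0 ≤ ∑ s ∈ Finset.range f, B s := by
  have := H.exch b δ h0 h1 (fun s hs => (h2 s hs).nonneg) (fun s hs => (h2 s hs).le)
  refine this.trans (Finset.sum_le_sum fun s hs => (h2 s ?_).cost)
  rwa [Finset.mem_range] at hs

/-- `small`, with classes indexed from a base point. -/
lemma small_base (S : Sys f) (b : ZMod f) (u w : ℕ → ℤ) (a : ZMod f) (t : ℤ) (ht : 0 ≤ t)
    (hu : ∀ s < f, 0 ≤ u s) (hw : ∀ s < f, u s ≤ w s)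
    (hx : ∀ s < f, u s < w s → S.φ (b + (s : ZMod f)) (w s) - S.φ (b + (s : ZMod f)) (w s - 1) <
      S.φ a (t + 1) - S.φ a t) :
    ∑ s ∈ Finset.range f, (S.φ (b + (s : ZMod f)) (w s) - S.φ (b + (s : ZMod f)) (u s)) <
      S.φ a (t + 1) - S.φ a t := by
  have := S.small (fun h => u (h - b).val) (fun h => w (h - b).val) a t ht
    (fun h => hu _ (ZMod.val_lt _)) (fun h => hw _ (ZMod.val_lt _)) (fun h hh => by
      have := hx _ (ZMod.val_lt (h - b)) hh
      simpa using this)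
  rw [sum_base b] at this
  refine lt_of_eq_of_lt (Finset.sum_congr rfl fun s hs => ?_) this
  rw [Finset.mem_range] at hs
  simp [ZMod.val_natCast, Nat.mod_eq_of_lt hs]

end Sys

/-! ### Walks through free bins -/

lemma sum_levels (G : ℕ → ℤ) {j' j d : ℕ} (hj : j ≤ d) :
    ∑ l ∈ Finset.range d, (if j' < l + 1 ∧ l + 1 ≤ j then G (l + 1) else 0) =
      ∑ l ∈ Finset.Ioc j' j, G l := by
  have h1 := Finset.sum_Ico_add' (fun l => if j' < l ∧ l ≤ j then G l else 0) 0 d 1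
  rw [Finset.range_eq_Ico, h1]
  have h2 : ∀ l, (if j' < l ∧ l ≤ j then G l else 0) =
      if l ∈ Finset.Ioc j' j then G l else 0 := by
    intro l
    simp [Finset.mem_Ioc]
  simp only [h2]
  rw [Finset.sum_ite_mem]
  congr 1
  ext l
  simp only [Finset.mem_inter, Finset.mem_Ico, Finset.mem_Ioc]
  omega

namespace OneClass

variable {p q : ℤ} {φ : ℤ → ℤ}

/-- Replacing `p * c ≥ p` items of bin `j` by one item of an earlier bin `j'` strictly saves weight,
if the bins strictly between are well filled. -/
lemma cost_switch (H : OneClass p q φ) (hp : 2 ≤ p) (hq : 2 ≤ q) {n : ℕ → ℤ} {j' j d : ℕ} {c : ℤ}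
    (hc : 1 ≤ c) (hj' : j' < j) (hjd : j < d) (hn0 : ∀ i < d, 0 ≤ n i)
    (hn : ∀ i < j, j' < i → p - 1 ≤ n i) (hnj : p * c ≤ n j) :
    clsCost φ n (fun i => sg j' 1 i - p * sg j c i) d ≤ -1 := by
  have hpc : 2 ≤ p * c := by nlinarith
  have hN : ∀ l ≤ d, 0 ≤ ∑ i ∈ Finset.range l, n i := fun l hl =>
    Finset.sum_nonneg fun i hi => hn0 i (by rw [Finset.mem_range] at hi; omega)
  have hNm : ∀ l m, l ≤ m → m ≤ d → ∑ i ∈ Finset.range l, n i ≤ ∑ i ∈ Finset.range m, n i := by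
    intro l m hlm hm
    apply Finset.sum_le_sum_of_subset_of_nonneg (Finset.range_mono hlm)
    intro i hi _
    exact hn0 i (by rw [Finset.mem_range] at hi; omega)
  have hjN : ∑ i ∈ Finset.range j, n i + p * c ≤ ∑ i ∈ Finset.range (j + 1), n i := by
    rw [Finset.sum_range_succ]; omega
  obtain ⟨e, rfl⟩ : ∃ e, d = e + 1 := ⟨d - 1, by omega⟩
  have hD : ∀ l, ∑ i ∈ Finset.range l, (sg j' 1 i - p * sg j c i) =
      (if j' < l then 1 else 0) - p * (if j < l then c else 0) := by
    intro l
    rw [Finset.sum_sub_distrib, ← Finset.mul_sum, sum_sg, sum_sg]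
  unfold clsCost
  simp only [hD]
  rw [Finset.sum_range_succ]
  have h1 : ∑ l ∈ Finset.range e, (φ (∑ i ∈ Finset.range (l + 1), n i +
      ((if j' < l + 1 then 1 else 0) - p * (if j < l + 1 then c else 0))) -
        φ (∑ i ∈ Finset.range (l + 1), n i)) ≤
      ∑ l ∈ Finset.Ioc j' j, (φ (∑ i ∈ Finset.range l, n i + 1) - φ (∑ i ∈ Finset.range l, n i)) := by
    rw [← sum_levels _ (show j ≤ e by omega)]
    apply Finset.sum_le_sum
    intro l hl
    rw [Finset.mem_range] at hl
    by_cases h1 : j' < l + 1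
    · by_cases h2 : j < l + 1
      · rw [if_pos h1, if_pos h2, if_neg (by omega)]
        have h3 := hNm (j + 1) (l + 1) (by omega) (by omega)
        have h4 := hN j (by omega)
        have := H.le (s := ∑ i ∈ Finset.range (l + 1), n i + (1 - p * c))
          (t := ∑ i ∈ Finset.range (l + 1), n i) (by omega) (by omega)
        omega
      · rw [if_pos h1, if_neg h2, if_pos (by omega)]
        simp
    · rw [if_neg h1, if_neg (by omega : ¬ j < l + 1), if_neg (by omega)]
      simp
  rw [if_pos (by omega), if_pos (by omega)]
  have h2 := H.geom hp j hj' (fun i hi => hn0 i (by omega)) hn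
  have h3 := hNm (j + 1) (e + 1) (by omega) (by omega)
  have h4 := hN j (by omega)
  have h5 := H.le (s := ∑ i ∈ Finset.range (e + 1), n i + (1 - p * c))
          (t := ∑ i ∈ Finset.range (e + 1), n i - 1) (by omega) (by omega)
  have h6 := H.gap _ h4
  have h7 := H.mono (∑ i ∈ Finset.range j, n i + p - 1) (∑ i ∈ Finset.range (e + 1), n i - 1)
    (by omega) (by nlinarith)
  rw [sub_add_cancel, sub_add_cancel] at h7
  have h8 : 0 ≤ ∑ l ∈ Finset.Ioc j' j,
      (φ (∑ i ∈ Finset.range l, n i + 1) - φ (∑ i ∈ Finset.range l, n i)) := by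
    apply Finset.sum_nonneg
    intro l hl
    rw [Finset.mem_Ioc] at hl
    linarith [H.pos _ (hN l (by omega))]
  nlinarith

/-- Adding one item to bin `j`, with all later bins well filled, costs less than twice the weight
of the next free item. -/
lemma cost_start (H : OneClass p q φ) (hp : 2 ≤ p) (hq : 2 ≤ q) {n : ℕ → ℤ} {j d : ℕ}
    (hjd : j < d) (hn0 : ∀ i < d, 0 ≤ n i) (hn : ∀ i < d, j < i → p - 1 ≤ n i) :
    clsCost φ n (fun i => sg j 1 i) d ≤
      2 * (φ (∑ i ∈ Finset.range d, n i + 1) - φ (∑ i ∈ Finset.range d, n i)) - 1 := by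
  have hN : 0 ≤ ∑ i ∈ Finset.range d, n i :=
    Finset.sum_nonneg fun i hi => hn0 i (by rw [Finset.mem_range] at hi; omega)
  unfold clsCost
  simp only [sum_sg]
  have h1 : ∑ l ∈ Finset.range d, (φ (∑ i ∈ Finset.range (l + 1), n i +
      (if j < l + 1 then 1 else 0)) - φ (∑ i ∈ Finset.range (l + 1), n i)) =
      ∑ l ∈ Finset.Ioc j d, (φ (∑ i ∈ Finset.range l, n i + 1) - φ (∑ i ∈ Finset.range l, n i)) := by
    rw [← sum_levels _ (le_refl d)]
    apply Finset.sum_congr rfl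
    intro l hl
    rw [Finset.mem_range] at hl
    by_cases h1 : j < l + 1
    · rw [if_pos h1, if_pos (by omega)]
    · rw [if_neg h1, if_neg (by omega)]
      simp
  rw [h1]
  have h2 := H.geom hp d hjd hn0 hn
  have := H.pos _ hN
  by_contra hcon
  nlinarith

end OneClass

/-- The bin nearest to `j` satisfying `P`, looking first downwards from `j`, then upwards. -/
noncomputable def nearest (P : ℕ → Prop) (j : ℕ) : ℕ :=
  if ∃ i ≤ j, P i then Nat.findGreatest P j else sInf {i | P i}

lemma nearest_spec {P : ℕ → Prop} (h : ∃ i, P i) (j : ℕ) : P (nearest P j) := by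
  unfold nearest
  split_ifs with h1
  · obtain ⟨i, hi, hP⟩ := h1
    exact Nat.findGreatest_spec hi hP
  · exact Nat.sInf_mem (s := {i | P i}) h

lemma nearest_self {P : ℕ → Prop} {j : ℕ} (h : P j) : nearest P j = j := by
  unfold nearest
  rw [if_pos ⟨j, le_rfl, h⟩]
  exact le_antisymm (Nat.findGreatest_le _) (Nat.le_findGreatest le_rfl h)

lemma nearest_gap {P : ℕ → Prop} {j i : ℕ} (h1 : nearest P j < i) (h2 : i ≤ j) : ¬ P i := by
  unfold nearest at h1
  intro hP
  rw [if_pos ⟨i, h2, hP⟩] at h1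
  exact absurd (Nat.le_findGreatest h2 hP) (by omega)

lemma nearest_mono {P : ℕ → Prop} {j j' : ℕ} (hjj : j ≤ j') :
    nearest P j ≤ nearest P j' := by
  unfold nearest
  split_ifs with h1 h2 h2
  · obtain ⟨i, hi, hP⟩ := h1
    exact Nat.le_findGreatest ((Nat.findGreatest_le j).trans hjj) (Nat.findGreatest_spec hi hP)
  · obtain ⟨i, hi, hP⟩ := h1
    exact absurd ⟨i, hi.trans hjj, hP⟩ h2
  · obtain ⟨i, hi, hP⟩ := h2
    exact Nat.sInf_le (s := {i | P i}) (Nat.findGreatest_spec hi hP)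
  · exact le_rfl

namespace Sys

variable {f : ℕ} [NeZero f] {S : Sys f} {d : ℕ} {L : ZMod f → ℤ} {τ : ℕ → ZMod f → ℤ}

lemma Feas.ok_nonpos (H : S.Feas d L τ) {h : ZMod f} {Δ : ℕ → ℤ}
    (hn : ∀ i < d, 0 ≤ S.cnt τ i h + Δ i)
    (hD : ∀ l ≤ d, ∑ i ∈ Finset.range l, Δ i ≤ 0) : S.ClassOK d L τ h Δ 0 :=
  ⟨hn, by linarith [hD d le_rfl, H.tot_le h], (S.cls h).cost_le hn hD⟩

lemma Feas.ok_top (H : S.Feas d L τ) {h : ZMod f} {Δ : ℕ → ℤ}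
    (hn : ∀ i < d, 0 ≤ S.cnt τ i h + Δ i)
    (hD : ∀ l ≤ d, ∑ i ∈ Finset.range l, Δ i ≤ 0) (hd : ∑ i ∈ Finset.range d, Δ i ≤ -1) :
    S.ClassOK d L τ h Δ (-(S.φ h (S.tot τ d h) - S.φ h (S.tot τ d h - 1))) :=
  ⟨hn, by linarith [hD d le_rfl, H.tot_le h], (S.cls h).cost_le_top hn hD hd⟩

lemma ClassOK.mono {h : ZMod f} {Δ : ℕ → ℤ} {B B' : ℤ} (H : S.ClassOK d L τ h Δ B) (hB : B ≤ B') :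
    S.ClassOK d L τ h Δ B' := ⟨H.nonneg, H.le, H.cost.trans hB⟩

lemma Feas.ok_drop (H : S.Feas d L τ) {h : ZMod f} {Δ : ℕ → ℤ}
    (hn : ∀ i < d, 0 ≤ S.cnt τ i h + Δ i)
    (hD : ∀ l ≤ d, ∑ i ∈ Finset.range l, Δ i ≤ 0) (hd : ∑ i ∈ Finset.range d, Δ i ≤ -1) :
    S.ClassOK d L τ h Δ (-1) := by
  refine (H.ok_top hn hD hd).mono ?_
  have h1 : 0 ≤ ∑ i ∈ Finset.range d, (S.cnt τ i h + Δ i) :=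
    Finset.sum_nonneg fun i hi => hn i (by rwa [Finset.mem_range] at hi)
  rw [Finset.sum_add_distrib] at h1
  have h2 := (S.cls h).pos (S.tot τ d h - 1) (by unfold tot; linarith)
  rw [sub_add_cancel] at h2
  linarith

/-- A bin is free at a cut if its cut variable is positive there. -/
def Free (d : ℕ) (τ : ℕ → ZMod f → ℤ) (h : ZMod f) (i : ℕ) : Prop := i < d ∧ 1 ≤ τ i h

/-- The amount carried across the next cut, when `c` is carried by bin `j` across cut `h`. -/
noncomputable def nextc (S : Sys f) (τ : ℕ → ZMod f → ℤ) (h : ZMod f) (j : ℕ) (c : ℤ) : ℤ :=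
  if τ j (h + 1) = 0 then 1 else max 1 (S.p * c - S.cnt τ j h)

/-- One step of a walk: the amount `c` carried by bin `j` across cut `h` is passed on to the
nearest bin which is free at cut `h + 1`. This never costs anything, and strictly saves if bin `j`
is not free at cut `h + 1`. -/
lemma Feas.step (H : S.Feas d L τ) {h : ZMod f} (hfree : ∃ i, Free d τ (h + 1) i) {j : ℕ}
    (hj : j < d) {c : ℤ} (hc : 1 ≤ c) (hcτ : c ≤ τ j h) :
    1 ≤ S.nextc τ h j c ∧
    S.nextc τ h j c ≤ τ (nearest (Free d τ (h + 1)) j) (h + 1) ∧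
    S.ClassOK d L τ h
      (fun i => sg (nearest (Free d τ (h + 1)) j) (S.nextc τ h j c) i - S.p * sg j c i)
      (if τ j (h + 1) = 0 then -1 else 0) := by
  have hp := S.hp
  have hpc : 2 ≤ S.p * c := by nlinarith
  have hτ0 := H.τ_nonneg j hj (h + 1)
  have hn0 := H.cnt_nonneg j hj h
  have hβ := S.β_nonneg j h
  have hpτ : S.p * c ≤ S.p * τ j h := by nlinarith
  have hcnt : S.cnt τ j h = S.p * τ j h + S.β j h - τ j (h + 1) := rfl
  have hspec := nearest_spec hfree j
  have hD : ∀ (j' : ℕ) (c' : ℤ) (l : ℕ), ∑ i ∈ Finset.range l, (sg j' c' i - S.p * sg j c i) =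
      (if j' < l then c' else 0) - S.p * (if j < l then c else 0) := by
    intro j' c' l
    rw [Finset.sum_sub_distrib, ← Finset.mul_sum, sum_sg, sum_sg]
  by_cases hb : τ j (h + 1) = 0
  · have hnc : S.nextc τ h j c = 1 := by unfold nextc; rw [if_pos hb]
    rw [hnc, if_pos hb]
    refine ⟨le_rfl, hspec.2, ?_⟩
    set j' := nearest (Free d τ (h + 1)) j with hj'
    have hne : j' ≠ j := by
      intro he
      have := hspec.2
      rw [he] at this
      omega
    have hnn : ∀ i < d, 0 ≤ S.cnt τ i h + (sg j' 1 i - S.p * sg j c i) := by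
      intro i hi
      have h1 := H.cnt_nonneg i hi h
      unfold sg
      by_cases hij : i = j
      · subst hij
        rw [if_neg (by omega), if_pos rfl]
        omega
      · rw [if_neg hij]
        split_ifs <;> omega
    rcases Nat.lt_or_ge j' j with hlt | hge
    · have hcost : clsCost (S.φ h) (fun i => S.cnt τ i h) (fun i => sg j' 1 i - S.p * sg j c i) d
          ≤ -1 := by
        apply (S.cls h).cost_switch S.hp S.hq hc hlt hj (fun i hi => H.cnt_nonneg i hi h)
        · intro i hi hi'
          have h1 : ¬ Free d τ (h + 1) i := nearest_gap hi' (by omega)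
          have h2 : τ i (h + 1) ≤ 0 := by
            by_contra hcon
            exact h1 ⟨by omega, by omega⟩
          have h3 := H.τ_nonneg i (by omega) h
          have h4 : 0 ≤ S.p * τ i h := by positivity
          have h5 := S.β_pos i h (by omega)
          unfold cnt
          omega
        · rw [hcnt]
          omega
      refine ⟨hnn, ?_, hcost⟩
      rw [hD, if_pos (by omega), if_pos hj]
      have := H.tot_le h
      omega
    · apply H.ok_drop hnn
      · intro l hl
        rw [hD]
        split_ifs <;> simp <;> omega
      · rw [hD, if_pos hspec.1, if_pos hj]
        omega
  · have hF : Free d τ (h + 1) j := ⟨hj, by omega⟩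
    have hnc : S.nextc τ h j c = max 1 (S.p * c - S.cnt τ j h) := by unfold nextc; rw [if_neg hb]
    rw [nearest_self hF, hnc, if_neg hb]
    refine ⟨le_max_left _ _, ?_, ?_⟩
    · apply max_le hF.2
      omega
    · apply H.ok_nonpos
      · intro i hi
        have h1 := H.cnt_nonneg i hi h
        unfold sg
        split_ifs with hij
        · subst hij
          omega
        · simpa using h1
      · intro l hl
        rw [hD]
        split_ifs
        · omega
        · simp

end Sys

/-! ### A common tight cut -/

namespace Sys

/-- Follow the nearest free bins around the cycle of cuts, starting from bin `j` at cut `0`. -/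
noncomputable def follow {f : ℕ} (d : ℕ) (τ : ℕ → ZMod f → ℤ) (j : ℕ) : ℕ → ℕ
  | 0 => j
  | s + 1 => nearest (Free d τ ((s : ZMod f) + 1)) (follow d τ j s)

lemma follow_mono {f d : ℕ} {τ : ℕ → ZMod f → ℤ} {j j' : ℕ} (h : j ≤ j') (s : ℕ) :
    follow d τ j s ≤ follow d τ j' s := by
  induction s with
  | zero => exact h
  | succ s ih => exact nearest_mono ih

variable {f : ℕ} [NeZero f] {S : Sys f} {d : ℕ} {L : ZMod f → ℤ} {τ : ℕ → ZMod f → ℤ}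

/-- If every cut has a free bin, some starting bin makes `follow` periodic. -/
lemma exists_loop (hfree : ∀ h : ZMod f, ∃ i, Free d τ h i) :
    ∃ J : ℕ → ℕ, (∀ s, J (s + f) = J s) ∧ (∀ s : ℕ, Free d τ (s : ZMod f) (J s)) ∧
      ∀ s : ℕ, J (s + 1) = nearest (Free d τ ((s : ZMod f) + 1)) (J s) := by
  have hspec : ∀ j s, Free d τ ((s + 1 : ℕ) : ZMod f) (follow d τ j (s + 1)) := by
    intro j s
    push_cast
    exact nearest_spec (hfree _) _
  have hf : 0 < f := Nat.pos_of_ne_zero (NeZero.ne f)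
  obtain ⟨g, rfl⟩ : ∃ g, f = g + 1 := ⟨f - 1, by omega⟩
  have hex : ∃ j, follow d τ j (g + 1) ≤ j := ⟨d, (hspec d g).1.le⟩
  have hle := Nat.find_spec hex
  have hge := Nat.find_min' hex (follow_mono (d := d) (τ := τ) hle (g + 1))
  set j := Nat.find hex
  have hj : follow d τ j (g + 1) = j := le_antisymm hle hge
  have hper : ∀ s, follow d τ j (s + (g + 1)) = follow d τ j s := by
    intro s
    induction s with
    | zero => rw [zero_add, hj]; rfl
    | succ s ih =>
      rw [show s + 1 + (g + 1) = (s + (g + 1)) + 1 by ring]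
      change nearest _ _ = nearest _ _
      rw [ih]
      congr 2
      push_cast
      have : ((g + 1 : ℕ) : ZMod (g + 1)) = 0 := by simp
      push_cast at this
      rw [this, add_zero]
  refine ⟨follow d τ j, hper, ?_, fun s => rfl⟩
  intro s
  have h1 := hspec j (s + g)
  rw [show s + g + 1 = s + (g + 1) by ring, hper] at h1
  simpa using h1

/-- At an optimum there is no bin that is free at every cut. -/
lemma Opt.not_all_free (H : S.Opt d L τ) {j : ℕ} (hj : j < d) (hτ : ∀ h, 1 ≤ τ j h) : False := by
  have hp := S.hp
  obtain ⟨b, -, hb⟩ := Finset.exists_min_image (Finset.univ : Finset (ZMod f)) (τ j)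
    ⟨0, Finset.mem_univ _⟩
  have hb : ∀ h, τ j b ≤ τ j h := fun h => hb h (Finset.mem_univ _)
  let c : ℕ → ℤ := fun s => Nat.rec (τ j b)
    (fun s c => min (τ j (b + (s : ZMod f) + 1)) (S.p * c)) s
  have c0 : c 0 = τ j b := rfl
  have cs : ∀ s, c (s + 1) = min (τ j (b + (s : ZMod f) + 1)) (S.p * c s) := fun s => rfl
  have hc1 : ∀ s, τ j b ≤ c s := by
    intro s
    induction s with
    | zero => exact le_rfl
    | succ s ih =>
      rw [cs]
      apply le_min (hb _)
      have := hτ b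
      nlinarith
  have hc2 : ∀ s : ℕ, c s ≤ τ j (b + (s : ZMod f)) := by
    intro s
    cases s with
    | zero => simp [c0]
    | succ s =>
      rw [cs]
      push_cast
      rw [← add_assoc]
      exact min_le_left _ _
  have hcf : c f = τ j b := by
    apply le_antisymm _ (hc1 f)
    have := hc2 f
    simpa using this
  have hcp : ∀ s, 1 ≤ c s := fun s => (hτ b).trans (hc1 s)
  -- the walk cannot grow by the factor `p` at every step, since it returns to its start
  obtain ⟨s₀, hs₀, hlt⟩ : ∃ s < f, c (s + 1) < S.p * c s := by
    by_contra hcon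
    push Not at hcon
    have : ∀ s ≤ f, c 0 + s ≤ c s := by
      intro s
      induction s with
      | zero => simp
      | succ s ih =>
        intro hs
        have h1 := hcon s (by omega)
        have h2 := ih (by omega)
        have h3 := hcp s
        push_cast
        nlinarith
    have h1 := this f le_rfl
    have hf : 0 < f := Nat.pos_of_ne_zero (NeZero.ne f)
    rw [hcf, c0] at h1
    omega
  have hD : ∀ s l, ∑ i ∈ Finset.range l, (sg j (c (s + 1)) i - S.p * sg j (c s) i) =
      if j < l then c (s + 1) - S.p * c s else 0 := by
    intro s l
    rw [Finset.sum_sub_distrib, ← Finset.mul_sum, sum_sg, sum_sg]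
    split_ifs <;> simp
  have hle : ∀ s, c (s + 1) ≤ S.p * c s := fun s => by rw [cs]; exact min_le_right _ _
  have hnn : ∀ s : ℕ, ∀ i < d, 0 ≤ S.cnt τ i (b + (s : ZMod f)) +
      (sg j (c (s + 1)) i - S.p * sg j (c s) i) := by
    intro s i hi
    have h1 := H.feas.cnt_nonneg i hi (b + (s : ZMod f))
    unfold sg
    split_ifs with hij
    · subst hij
      have h2 := S.β_nonneg i (b + (s : ZMod f))
      have h3 : S.p * c s ≤ S.p * τ i (b + (s : ZMod f)) := by
        have := hc2 s
        nlinarith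
      have h4 := cs s
      unfold cnt at *
      omega
    · simpa using h1
  have := H.exch' b (fun i s => sg j (c s) i) (fun i _ => by simp only [hcf, c0])
    (fun i hi s hs => by
      unfold sg
      split_ifs with hij
      · rw [hij]; exact hc2 s
      · exact H.feas.τ_nonneg i hi _)
    (fun s => if s = s₀ then -1 else 0)
    (fun s hs => by
      split_ifs with h
      · subst h
        apply H.feas.ok_drop (hnn s)
        · intro l hl
          rw [hD]
          split_ifs
          · linarith [hle s]
          · exact le_rfl
        · rw [hD, if_pos hj]
          omega
      · apply H.feas.ok_nonpos (hnn s)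
        intro l hl
        rw [hD]
        split_ifs
        · linarith [hle s]
        · exact le_rfl)
  rw [Finset.sum_ite_eq' (Finset.range f) s₀, if_pos (Finset.mem_range.2 hs₀)] at this
  omega

/-- At an optimum, all bins are tight at some common cut. -/
lemma Opt.exists_tight (H : S.Opt d L τ) : ∃ o, ∀ i < d, τ i o = 0 := by
  by_contra hcon
  push Not at hcon
  have hfree : ∀ h : ZMod f, ∃ i, Free d τ h i := by
    intro h
    obtain ⟨i, hi, hne⟩ := hcon h
    exact ⟨i, hi, by have := H.feas.τ_nonneg i hi h; omega⟩
  obtain ⟨J, hper, hJ, hstep⟩ := exists_loop hfree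
  by_cases hbl : ∃ b : ℕ, τ (J b) ((b : ZMod f) + 1) = 0
  · obtain ⟨b, hb⟩ := hbl
    -- the walk along `J`, started just after the blocked cut
    let c : ℕ → ℤ := fun s => Nat.rec 1
      (fun s c => if s = 0 then 1 else S.nextc τ ((b : ZMod f) + (s : ZMod f)) (J (b + s)) c) s
    have cs : ∀ s, c (s + 1) = if s = 0 then 1 else
      S.nextc τ ((b : ZMod f) + (s : ZMod f)) (J (b + s)) (c s) := fun s => rfl
    have hJs : ∀ s : ℕ, J (b + (s + 1)) =
        nearest (Free d τ ((b : ZMod f) + (s : ZMod f) + 1)) (J (b + s)) := by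
      intro s
      rw [← add_assoc, hstep]
      push_cast
      rfl
    have hJf : ∀ s : ℕ, Free d τ ((b : ZMod f) + (s : ZMod f)) (J (b + s)) := by
      intro s
      have := hJ (b + s)
      push_cast at this
      exact this
    have hc : ∀ s, 1 ≤ s → 1 ≤ c s ∧ c s ≤ τ (J (b + s)) ((b : ZMod f) + (s : ZMod f)) := by
      intro s hs
      induction s, hs using Nat.le_induction with
      | base =>
        have := (hJf 1).2
        have h1 : c 1 = 1 := rfl
        rw [h1]
        exact ⟨le_rfl, this⟩
      | succ s hs ih =>
        have h1 := H.feas.step (hfree ((b : ZMod f) + (s : ZMod f) + 1)) (hJf s).1 ih.1 ih.2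
        rw [cs, if_neg (by omega), hJs]
        push_cast
        rw [← add_assoc]
        exact ⟨h1.1, h1.2.1⟩
    have hf : 0 < f := Nat.pos_of_ne_zero (NeZero.ne f)
    let c' : ℕ → ℤ := fun s => if s = 0 then c f else c s
    have hc' : ∀ s, 1 ≤ c' s ∧ c' s ≤ τ (J (b + s)) ((b : ZMod f) + (s : ZMod f)) := by
      intro s
      by_cases hs : s = 0
      · subst hs
        have h1 := hc f hf
        rw [hper] at h1
        simpa [c'] using h1
      · simp only [c', if_neg hs]
        exact hc s (by omega)
    have hnext : ∀ s, c' (s + 1) =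
        S.nextc τ ((b : ZMod f) + (s : ZMod f)) (J (b + s)) (c' s) := by
      intro s
      by_cases hs : s = 0
      · subst hs
        have h1 : c' (0 + 1) = 1 := rfl
        rw [h1]
        unfold nextc
        rw [if_pos (by simpa using hb)]
      · have h1 : c' (s + 1) = c (s + 1) := rfl
        have h2 : c' s = c s := by simp only [c', if_neg hs]
        rw [h1, h2, cs, if_neg hs]
    have := H.exch' (b : ZMod f) (fun i s => sg (J (b + s)) (c' s) i)
      (fun i _ => by
        have h1 : c' f = c' 0 := by simp [c']
        simp only [h1, hper, add_zero])
      (fun i hi s hs => by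
        unfold sg
        split_ifs with hij
        · rw [hij]; exact (hc' s).2
        · exact H.feas.τ_nonneg i hi _)
      (fun s => if s = 0 then -1 else 0)
      (fun s hs => by
        have h1 := (H.feas.step (hfree ((b : ZMod f) + (s : ZMod f) + 1)) (hJf s).1
          (hc' s).1 (hc' s).2).2.2
        rw [← hnext s, ← hJs s] at h1
        refine h1.mono ?_
        by_cases hs0 : s = 0
        · subst hs0
          rw [if_pos (by simpa using hb), if_pos rfl]
        · rw [if_neg hs0]
          split_ifs <;> omega)
    rw [Finset.sum_ite_eq' (Finset.range f) 0, if_pos (Finset.mem_range.2 hf)] at this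
    omega
  · push Not at hbl
    have hconst : ∀ s, J s = J 0 := by
      intro s
      induction s with
      | zero => rfl
      | succ s ih =>
        have h1 : Free d τ ((s : ZMod f) + 1) (J s) := by
          refine ⟨(hJ s).1, ?_⟩
          have := hbl s
          have := H.feas.τ_nonneg (J s) (hJ s).1 ((s : ZMod f) + 1)
          omega
        rw [hstep, nearest_self h1, ih]
    refine H.not_all_free (hJ 0).1 ?_
    intro h
    have := (hJ h.val).2
    rw [hconst] at this
    simpa using this

end Sys

/-! ### Exchanging two items along a walk -/

namespace Sys

variable {f : ℕ} [NeZero f] {S : Sys f} {d : ℕ} {L : ZMod f → ℤ} {τ : ℕ → ZMod f → ℤ}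

/-- The tail of a walk inside one bin `j`: an amount `c₀` crossing cut `s₁` is absorbed by the items
of bin `j` as fast as possible. -/
lemma Feas.exists_tail (H : S.Feas d L τ) (b : ZMod f) {j : ℕ} (hj : j < d) {s₁ : ℕ} (hs₁ : 1 ≤ s₁)
    {c₀ : ℤ} (h0 : 0 ≤ c₀) (h1 : c₀ ≤ τ j (b + (s₁ : ZMod f))) :
    ∃ c : ℕ → ℤ, (∀ s < s₁, c s = 0) ∧ c s₁ = c₀ ∧
      (∀ s, s₁ ≤ s → c (s + 1) = max 0 (S.p * c s - S.cnt τ j (b + (s : ZMod f)))) ∧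
      (∀ s, s₁ ≤ s → 0 ≤ c s ∧ c s ≤ τ j (b + (s : ZMod f))) ∧
      (∀ O : ℕ, s₁ ≤ O → τ j (b + (O : ZMod f)) = 0 → ∀ s, O ≤ s → c s = 0) := by
  have hp := S.hp
  let c : ℕ → ℤ := fun s => Nat.rec 0
    (fun s c => if s + 1 = s₁ then c₀ else max 0 (S.p * c - S.cnt τ j (b + (s : ZMod f)))) s
  have cs : ∀ s, c (s + 1) = if s + 1 = s₁ then c₀ else
    max 0 (S.p * c s - S.cnt τ j (b + (s : ZMod f))) := fun s => rfl
  have e0 : ∀ s < s₁, c s = 0 := by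
    intro s
    induction s with
    | zero => intro _; rfl
    | succ s ih =>
      intro hs
      rw [cs, if_neg (by omega), ih (by omega)]
      have := H.cnt_nonneg j hj (b + (s : ZMod f))
      simpa using this
  have e1 : c s₁ = c₀ := by
    obtain ⟨e, rfl⟩ : ∃ e, s₁ = e + 1 := ⟨s₁ - 1, by omega⟩
    rw [cs, if_pos rfl]
  have e2 : ∀ s, s₁ ≤ s → c (s + 1) = max 0 (S.p * c s - S.cnt τ j (b + (s : ZMod f))) := by
    intro s hs
    rw [cs, if_neg (by omega)]
  have e3 : ∀ s, s₁ ≤ s → 0 ≤ c s ∧ c s ≤ τ j (b + (s : ZMod f)) := by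
    intro s hs
    induction s, hs using Nat.le_induction with
    | base => rw [e1]; exact ⟨h0, h1⟩
    | succ s hs ih =>
      rw [e2 s hs]
      refine ⟨le_max_left _ _, max_le ?_ ?_⟩
      · exact H.τ_nonneg j hj _
      · have h2 := S.β_nonneg j (b + (s : ZMod f))
        have h3 : S.p * c s ≤ S.p * τ j (b + (s : ZMod f)) := by nlinarith
        unfold cnt
        push_cast
        rw [← add_assoc]
        omega
  refine ⟨c, e0, e1, e2, e3, ?_⟩
  intro O hO hτ s hs
  induction s, hs using Nat.le_induction with
  | base =>
    have := e3 O hO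
    omega
  | succ s hs ih =>
    rw [e2 s (by omega), ih]
    have := H.cnt_nonneg j hj (b + (s : ZMod f))
    simpa using this

/-- Part of the exchange argument of `Opt.no_wall`: the initial segment of the walk, from the
class `b` to the class `b + A`. -/
lemma Feas.exists_walk (H : S.Feas d L τ) (b : ZMod f) (A : ℕ)
    (hfree : ∀ s : ℕ, 1 ≤ s → s ≤ A → ∃ i, Free d τ (b + (s : ZMod f)) i) :
    ∃ (J : ℕ → ℕ) (c : ℕ → ℤ), c 1 = 1 ∧
      (∀ i, J 1 < i → i ≤ d → ¬ Free d τ (b + 1) i) ∧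
      (∀ s : ℕ, 1 ≤ s → s ≤ A → J s < d ∧ 1 ≤ c s ∧ c s ≤ τ (J s) (b + (s : ZMod f))) ∧
      (∀ s : ℕ, 1 ≤ s → s < A → S.ClassOK d L τ (b + (s : ZMod f))
        (fun i => sg (J (s + 1)) (c (s + 1)) i - S.p * sg (J s) (c s) i) 0) := by
  let J : ℕ → ℕ := fun s => Nat.rec d
    (fun s j => nearest (Free d τ (b + (s : ZMod f) + 1)) j) s
  have Js : ∀ s : ℕ, J (s + 1) = nearest (Free d τ (b + (s : ZMod f) + 1)) (J s) := fun s => rfl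
  let c : ℕ → ℤ := fun s => Nat.rec 1
      (fun s c => if s = 0 then 1 else S.nextc τ (b + (s : ZMod f)) (J s) c) s
  have cs : ∀ s, c (s + 1) = if s = 0 then 1 else
    S.nextc τ (b + (s : ZMod f)) (J s) (c s) := fun s => rfl
  have hfree' : ∀ s : ℕ, s < A → ∃ i, Free d τ (b + (s : ZMod f) + 1) i := by
    intro s hs
    have := hfree (s + 1) (by omega) (by omega)
    push_cast at this
    rwa [← add_assoc] at this
  have main : ∀ s : ℕ, 1 ≤ s → s ≤ A → J s < d ∧ 1 ≤ c s ∧ c s ≤ τ (J s) (b + (s : ZMod f)) := by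
    intro s hs
    induction s, hs using Nat.le_induction with
    | base =>
      intro hA
      have h1 := nearest_spec (hfree' 0 (by omega)) (J 0)
      rw [← Js 0] at h1
      refine ⟨h1.1, le_rfl, ?_⟩
      have h2 : c 1 = 1 := rfl
      rw [h2]
      simpa using h1.2
    | succ s hs ih =>
      intro hA
      obtain ⟨i1, i2, i3⟩ := ih (by omega)
      have h1 := H.step (hfree' s (by omega)) i1 i2 i3
      have h2 := nearest_spec (hfree' s (by omega)) (J s)
      rw [← Js] at h1 h2
      rw [cs, if_neg (by omega)]
      push_cast
      rw [← add_assoc]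
      exact ⟨h2.1, h1.1, h1.2.1⟩
  refine ⟨J, c, rfl, ?_, main, ?_⟩
  · intro i h1 h2
    have := nearest_gap (P := Free d τ (b + ((0 : ℕ) : ZMod f) + 1)) (j := J 0) h1 h2
    simpa using this
  · intro s hs hsA
    obtain ⟨i1, i2, i3⟩ := main s hs (by omega)
    have h1 := (H.step (hfree' s hsA) i1 i2 i3).2.2
    rw [← Js] at h1
    have h2 : c (s + 1) = S.nextc τ (b + (s : ZMod f)) (J s) (c s) := by
      rw [cs, if_neg (by omega)]
    rw [← h2] at h1
    refine h1.mono ?_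
    split_ifs <;> omega

/-- Part of `Opt.no_wall`: combining the initial segment of the walk with a final segment. -/
lemma Opt.walk_finish (H : S.Opt d L τ) (b : ZMod f) (A : ℕ) (hA : 1 ≤ A) (hAf : A < f)
    (hL : S.tot τ d b + 1 ≤ L b) {J : ℕ → ℕ} {c : ℕ → ℤ} (hc1 : c 1 = 1)
    (hJ1 : ∀ i, J 1 < i → i ≤ d → ¬ Free d τ (b + 1) i)
    (hJ : ∀ s : ℕ, 1 ≤ s → s ≤ A → J s < d ∧ 1 ≤ c s ∧ c s ≤ τ (J s) (b + (s : ZMod f)))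
    (hwalk : ∀ s : ℕ, 1 ≤ s → s < A → S.ClassOK d L τ (b + (s : ZMod f))
        (fun i => sg (J (s + 1)) (c (s + 1)) i - S.p * sg (J s) (c s) i) 0)
    (η : ℕ → ℕ → ℤ) (hηA : ∀ i < d, η i A = sg (J A) (c A) i) (hηf : ∀ i < d, η i f = 0)
    (hη : ∀ s : ℕ, A ≤ s → s < f → ∀ i < d, η i s ≤ τ i (b + (s : ZMod f))) {x : ℤ}
    (hηcls : ∀ s : ℕ, A ≤ s → s < f → S.ClassOK d L τ (b + (s : ZMod f))
      (fun i => η i (s + 1) - S.p * η i s) (if s = A then -x else 0))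
    (hx : 2 * (S.φ b (S.tot τ d b + 1) - S.φ b (S.tot τ d b)) ≤ x) : False := by
  let δ : ℕ → ℕ → ℤ := fun i s => if s = 0 then 0 else if s < A then sg (J s) (c s) i else
    if i < d then η i s else 0
  have hδ1 : ∀ i < d, ∀ s, 1 ≤ s → s ≤ A → δ i s = sg (J s) (c s) i := by
    intro i hi s h1 h2
    simp only [δ]
    rw [if_neg (by omega)]
    split_ifs with h
    · rfl
    · have : s = A := by omega
      rw [this, hηA i hi]
  have hδ2 : ∀ i < d, ∀ s, A ≤ s → δ i s = η i s := by
    intro i hi s h1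
    simp only [δ]
    rw [if_neg (by omega), if_neg (by omega), if_pos hi]
  have hδ0 : ∀ i, δ i 0 = 0 := fun i => rfl
  have hcongr : ∀ (h : ZMod f) (Δ Δ' : ℕ → ℤ) (B : ℤ), (∀ i < d, Δ i = Δ' i) →
      S.ClassOK d L τ h Δ B → S.ClassOK d L τ h Δ' B := by
    intro h Δ Δ' B he hK
    have hs : ∀ l ≤ d, ∑ i ∈ Finset.range l, Δ i = ∑ i ∈ Finset.range l, Δ' i := by
      intro l hl
      exact Finset.sum_congr rfl fun i hi => he i (by rw [Finset.mem_range] at hi; omega)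
    refine ⟨fun i hi => by rw [← he i hi]; exact hK.nonneg i hi, ?_, ?_⟩
    · rw [← hs d le_rfl]; exact hK.le
    · refine le_trans (le_of_eq ?_) hK.cost
      unfold clsCost
      apply Finset.sum_congr rfl
      intro l hl
      rw [Finset.mem_range] at hl
      rw [hs (l + 1) (by omega)]
  have key := H.exch' b δ (fun i hi => by rw [hδ0, hδ2 i hi f (by omega), hηf i hi])
    (fun i hi s hs => by
      rcases Nat.eq_zero_or_pos s with rfl | h0
      · rw [hδ0]; exact H.feas.τ_nonneg i hi _
      rcases Nat.lt_or_ge s A with h1 | h1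
      · rw [hδ1 i hi s h0 h1.le]
        unfold sg
        split_ifs with hij
        · rw [hij]; exact (hJ s h0 h1.le).2.2
        · exact H.feas.τ_nonneg i hi _
      · rw [hδ2 i hi s h1]
        exact hη s h1 hs i hi)
    (fun s => (if s = 0 then
      2 * (S.φ b (S.tot τ d b + 1) - S.φ b (S.tot τ d b)) - 1 else 0) +
        (if s = A then -x else 0))
    (fun s hs => by
      rcases Nat.eq_zero_or_pos s with rfl | h0
      · rw [if_pos rfl, if_neg (by omega), add_zero]
        have hb : b + ((0 : ℕ) : ZMod f) = b := by simp
        rw [hb]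
        apply hcongr b (fun i => sg (J 1) 1 i)
        · intro i hi
          rw [hδ0, hδ1 i hi (0 + 1) (by omega) (by omega), zero_add, hc1]
          simp
        · have hJ1d := (hJ 1 le_rfl hA).1
          refine ⟨?_, ?_, ?_⟩
          · intro i hi
            have := H.feas.cnt_nonneg i hi b
            unfold sg
            split_ifs <;> omega
          · rw [sum_sg, if_pos hJ1d]
            exact hL
          · apply (S.cls b).cost_start S.hp S.hq hJ1d (fun i hi => H.feas.cnt_nonneg i hi b)
            intro i hi hi1
            have h1 := hJ1 i hi1 hi.le
            have h2 : τ i (b + 1) ≤ 0 := by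
              by_contra hcon
              exact h1 ⟨hi, by omega⟩
            have h3 := H.feas.τ_nonneg i hi b
            have h4 := S.β_pos i b (by omega)
            have hp := S.hp
            have h5 : 0 ≤ S.p * τ i b := by positivity
            unfold cnt
            omega
      rcases Nat.lt_or_ge s A with h1 | h1
      · rw [if_neg (by omega), if_neg (by omega), add_zero]
        apply hcongr _ _ _ _ _ (hwalk s h0 h1)
        intro i hi
        rw [hδ1 i hi s h0 h1.le, hδ1 i hi (s + 1) (by omega) (by omega)]
      · rw [if_neg (by omega), zero_add]
        apply hcongr _ _ _ _ _ (hηcls s h1 hs)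
        intro i hi
        rw [hδ2 i hi s h1, hδ2 i hi (s + 1) (by omega)])
  rw [Finset.sum_add_distrib, Finset.sum_ite_eq' (Finset.range f) 0,
    Finset.sum_ite_eq' (Finset.range f) A, if_pos (Finset.mem_range.2 (by omega)),
    if_pos (Finset.mem_range.2 hAf)] at key
  omega

end Sys

namespace Sys

variable {f : ℕ} [NeZero f] {S : Sys f} {d : ℕ} {L : ZMod f → ℤ} {τ : ℕ → ZMod f → ℤ}

/-- If the class `b + A` has a heavy top item lying in a bin `i` before `j`, while bin `j` has no
item of this class but is free at the cut `b + A`, then an item of class `b + A` is moved from bin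
`i` to bin `j`, and lighter items are moved back from `j` to `i`; this saves weight. -/
lemma Opt.no_swap (H : S.Opt d L τ) (b : ZMod f) (A O : ℕ) (hAO : A < O) (hO : O ≤ f)
    {i j : ℕ} (hij : i < j) (hj : j < d) (htight : τ j (b + (O : ZMod f)) = 0)
    (hτ : 1 ≤ τ j (b + (A : ZMod f))) (hnj : S.cnt τ j (b + (A : ZMod f)) = 0)
    (hni : 1 ≤ S.cnt τ i (b + (A : ZMod f)))
    (hlast : ∀ i' < d, i < i' → S.cnt τ i' (b + (A : ZMod f)) = 0)
    (hmax : ∀ s : ℕ, A < s → s < O → 1 ≤ S.tot τ d (b + (s : ZMod f)) →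
      S.φ (b + (s : ZMod f)) (S.tot τ d (b + (s : ZMod f))) -
        S.φ (b + (s : ZMod f)) (S.tot τ d (b + (s : ZMod f)) - 1) <
      S.φ (b + (A : ZMod f)) (S.tot τ d (b + (A : ZMod f))) -
        S.φ (b + (A : ZMod f)) (S.tot τ d (b + (A : ZMod f)) - 1)) : False := by
  have hp := S.hp
  have hF := H.feas
  have hτA : 1 ≤ τ j (b + ((A + 1 : ℕ) : ZMod f)) := by
    have h1 := S.β_nonneg j (b + (A : ZMod f))
    have h2 : S.p * 1 ≤ S.p * τ j (b + (A : ZMod f)) := by nlinarith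
    unfold cnt at hnj
    push_cast
    rw [← add_assoc]
    omega
  obtain ⟨g, g0, g1, g2, g3, g4⟩ := hF.exists_tail b hj (s₁ := A + 1) (by omega)
    (c₀ := 1) (by omega) hτA
  have gO := g4 O (by omega) htight
  have gnn : ∀ s, 0 ≤ g s := by
    intro s
    rcases Nat.lt_or_ge s (A + 1) with h | h
    · rw [g0 s h]
    · exact (g3 s h).1
  let E : ℕ → ℤ := fun s => g (s + 1) - S.p * g s
  have E0 : ∀ s < A, E s = 0 := by
    intro s hs
    simp only [E]
    rw [g0 s (by omega), g0 (s + 1) (by omega)]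
    simp
  have EA : E A = 1 := by
    simp only [E]
    rw [g0 A (by omega), g1]
    simp
  have E1 : ∀ s, A < s → E s ≤ 0 ∧ -E s ≤ S.cnt τ j (b + (s : ZMod f)) := by
    intro s hs
    have h1 := hF.cnt_nonneg j hj (b + (s : ZMod f))
    have h2 : 0 ≤ S.p * g s := by
      have := gnn s
      positivity
    have h3 := g2 s (by omega)
    simp only [E]
    omega
  have EO : ∀ s, O ≤ s → E s = 0 := by
    intro s hs
    simp only [E]
    rw [gO s hs, gO (s + 1) (by omega)]
    simp
  let δ : ℕ → ℕ → ℤ := fun i' s => sg j (g s) i' - sg i (g s) i'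
  have hΔ : ∀ i' s, δ i' (s + 1) - S.p * δ i' s = sg j (E s) i' - sg i (E s) i' := by
    intro i' s
    simp only [δ, E]
    unfold sg
    split_ifs <;> ring
  have hD : ∀ s l, ∑ i' ∈ Finset.range l, (sg j (E s) i' - sg i (E s) i') =
      (if j < l then E s else 0) - (if i < l then E s else 0) := by
    intro s l
    rw [Finset.sum_sub_distrib, sum_sg, sum_sg]
  have key := H.exch b δ
    (fun i' hi' => by
      simp only [δ]
      rw [g0 0 (by omega), gO f hO])
    (fun i' hi' s hs => by
      have h1 := hF.τ_nonneg i' hi' (b + (s : ZMod f))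
      have h2 := gnn s
      simp only [δ]
      unfold sg
      by_cases h3 : i' = j
      · subst h3
        rw [if_pos rfl, if_neg (by omega)]
        rcases Nat.lt_or_ge s (A + 1) with h | h
        · rw [g0 s h]
          omega
        · have := (g3 s h).2
          omega
      · rw [if_neg h3]
        split_ifs <;> omega)
    (fun s hs i' hi' => by
      rw [hΔ]
      have h1 := hF.cnt_nonneg i' hi' (b + (s : ZMod f))
      unfold sg
      rcases lt_trichotomy s A with h | h | h
      · simpa [E0 s h] using h1
      · subst h
        rw [EA]
        by_cases h3 : i' = i
        · subst h3
          rw [if_neg (by omega), if_pos rfl]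
          omega
        · rw [if_neg h3]
          split_ifs <;> omega
      · have h2 := E1 s h
        by_cases h3 : i' = j
        · subst h3
          rw [if_pos rfl, if_neg (by omega)]
          omega
        · rw [if_neg h3]
          split_ifs <;> omega)
    (fun s hs => by
      simp only [hΔ]
      rw [hD, if_pos hj, if_pos (by omega)]
      have := hF.tot_le (b + (s : ZMod f))
      omega)
  simp only [hΔ] at key
  unfold clsCost at key
  rw [Finset.sum_comm] at key
  simp only [hD] at key
  have hN : ∀ l s, ∑ i' ∈ Finset.range l, S.cnt τ i' (b + (s : ZMod f)) =
    S.tot τ l (b + (s : ZMod f)) := fun l s => rfl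
  simp only [hN] at key
  have hlev : ∀ l ∈ Finset.range d, ∑ s ∈ Finset.range f,
      (S.φ (b + (s : ZMod f)) (S.tot τ (l + 1) (b + (s : ZMod f)) +
        ((if j < l + 1 then E s else 0) - (if i < l + 1 then E s else 0))) -
        S.φ (b + (s : ZMod f)) (S.tot τ (l + 1) (b + (s : ZMod f)))) ≤
      if l = i then -1 else 0 := by
    intro l hl
    rw [Finset.mem_range] at hl
    by_cases h1 : i < l + 1
    swap
    · rw [if_neg (by omega)]
      simp only [if_neg h1, if_neg (show ¬ j < l + 1 by omega)]
      simp
    by_cases h2 : j < l + 1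
    · rw [if_neg (by omega)]
      simp only [if_pos h1, if_pos h2]
      simp
    simp only [if_pos h1, if_neg h2, zero_sub]
    have hlj : l + 1 ≤ j := by omega
    -- the bins after `i` contain no item of class `b + A`
    have htA : S.tot τ (l + 1) (b + (A : ZMod f)) = S.tot τ d (b + (A : ZMod f)) := by
      apply Finset.sum_subset (Finset.range_mono (by omega))
      intro i' h3 h4
      rw [Finset.mem_range] at h3 h4
      exact hlast i' h3 (by omega)
    have htA1 : 1 ≤ S.tot τ d (b + (A : ZMod f)) := by
      refine hni.trans ?_
      apply Finset.single_le_sum (f := fun i' => S.cnt τ i' (b + (A : ZMod f)))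
      · intro i' hi'
        rw [Finset.mem_range] at hi'
        exact hF.cnt_nonneg i' hi' _
      · rw [Finset.mem_range]; omega
    have hsm := S.small_base b (fun s => S.tot τ (l + 1) (b + (s : ZMod f)))
      (fun s => S.tot τ (l + 1) (b + (s : ZMod f)) + if A < s then - E s else 0)
      (b + (A : ZMod f)) (S.tot τ d (b + (A : ZMod f)) - 1) (by omega)
      (fun s _ => hF.tot_nonneg (by omega) _)
      (fun s _ => by
        split_ifs with h
        · have := E1 s h
          omega
        · omega)
      (fun s hs hlt => by
        have hA : A < s := by
          by_contra hcon
          rw [if_neg hcon] at hlt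
          omega
        rw [if_pos hA] at hlt ⊢
        have hsO : s < O := by
          by_contra hcon
          rw [EO s (by omega)] at hlt
          omega
        have h3 := E1 s hA
        have h4 := hF.tot_mono (l := l + 1) (m := j) hlj hj.le (b + (s : ZMod f))
        have h5 := hF.tot_mono (l := j + 1) (m := d) hj le_rfl (b + (s : ZMod f))
        have h6 : S.tot τ (j + 1) (b + (s : ZMod f)) = S.tot τ j (b + (s : ZMod f)) +
          S.cnt τ j (b + (s : ZMod f)) := Finset.sum_range_succ _ _
        have h7 := hF.tot_nonneg (l := l + 1) (by omega) (b + (s : ZMod f))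
        have h8 := hmax s hA hsO (by omega)
        have h9 := (S.cls (b + (s : ZMod f))).mono
          (S.tot τ (l + 1) (b + (s : ZMod f)) + -E s - 1)
          (S.tot τ d (b + (s : ZMod f)) - 1) (by omega) (by omega)
        rw [sub_add_cancel, sub_add_cancel] at h9
        rw [sub_add_cancel]
        omega)
    rw [sub_add_cancel] at hsm
    have hsplit : ∀ s ∈ Finset.range f,
        S.φ (b + (s : ZMod f)) (S.tot τ (l + 1) (b + (s : ZMod f)) + -E s) -
          S.φ (b + (s : ZMod f)) (S.tot τ (l + 1) (b + (s : ZMod f))) =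
        (S.φ (b + (s : ZMod f)) (S.tot τ (l + 1) (b + (s : ZMod f)) +
            if A < s then - E s else 0) -
          S.φ (b + (s : ZMod f)) (S.tot τ (l + 1) (b + (s : ZMod f)))) +
        if s = A then -(S.φ (b + (A : ZMod f)) (S.tot τ d (b + (A : ZMod f))) -
        S.φ (b + (A : ZMod f)) (S.tot τ d (b + (A : ZMod f)) - 1)) else 0 := by
      intro s hs
      rcases lt_trichotomy s A with h | h | h
      · rw [if_neg (by omega), if_neg (by omega), E0 s h]
        simp
      · subst h
        rw [if_neg (by omega), if_pos rfl, EA, htA, add_zero, ← sub_eq_add_neg]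
        ring
      · rw [if_pos h, if_neg (by omega)]
        ring
    rw [Finset.sum_congr rfl hsplit, Finset.sum_add_distrib, Finset.sum_ite_eq' (Finset.range f) A,
      if_pos (Finset.mem_range.2 (by omega))]
    split_ifs <;> omega
  have h1 := key.trans (Finset.sum_le_sum hlev)
  rw [Finset.sum_ite_eq' (Finset.range d) i, if_pos (Finset.mem_range.2 (by omega))] at h1
  omega

/-- At an optimum the following is impossible: the class `b` has a further available item of weight
`z`, some class `b + A` has a top item heavier than `z`, and there are free bins at all the cuts
from `b + 1` on up to a cut `b + O` beyond `b + A` at which all bins are tight; where `A` is the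
last such class before `O`. -/
lemma Opt.no_wall (H : S.Opt d L τ) (b : ZMod f) (A O : ℕ) (hA : 1 ≤ A) (hAO : A < O) (hO : O ≤ f)
    (htight : ∀ i < d, τ i (b + (O : ZMod f)) = 0)
    (hfree : ∀ s : ℕ, 1 ≤ s → s < O → ∃ i, Free d τ (b + (s : ZMod f)) i)
    (hL : S.tot τ d b + 1 ≤ L b) (hN : 1 ≤ S.tot τ d (b + (A : ZMod f)))
    (hx : S.φ b (S.tot τ d b + 1) - S.φ b (S.tot τ d b) <
      S.φ (b + (A : ZMod f)) (S.tot τ d (b + (A : ZMod f))) -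
        S.φ (b + (A : ZMod f)) (S.tot τ d (b + (A : ZMod f)) - 1))
    (hmax : ∀ s : ℕ, A < s → s < O → 1 ≤ S.tot τ d (b + (s : ZMod f)) →
      S.φ (b + (s : ZMod f)) (S.tot τ d (b + (s : ZMod f))) -
        S.φ (b + (s : ZMod f)) (S.tot τ d (b + (s : ZMod f)) - 1) ≤
      S.φ b (S.tot τ d b + 1) - S.φ b (S.tot τ d b)) : False := by
  have hp := S.hp
  have hF := H.feas
  have hne : b ≠ b + (A : ZMod f) := by
    intro h
    have h1 : (A : ZMod f) = 0 := by simpa using h.symm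
    rw [ZMod.natCast_eq_zero_iff] at h1
    exact absurd (Nat.le_of_dvd hA h1) (by omega)
  have hx2 : 2 * (S.φ b (S.tot τ d b + 1) - S.φ b (S.tot τ d b)) ≤
      S.φ (b + (A : ZMod f)) (S.tot τ d (b + (A : ZMod f))) -
        S.φ (b + (A : ZMod f)) (S.tot τ d (b + (A : ZMod f)) - 1) := by
    have h1 := S.sep b (b + (A : ZMod f)) (S.tot τ d b) (S.tot τ d (b + (A : ZMod f)) - 1) hne
      (hF.tot_nonneg le_rfl _) (by omega)
    have h2 := (S.cls b).pos _ (hF.tot_nonneg le_rfl b)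
    rw [sub_add_cancel] at h1
    omega
  obtain ⟨J, c, hc1, hJ1, hJ, hwalk⟩ := hF.exists_walk b A
    (fun s h1 h2 => hfree s h1 (by omega))
  obtain ⟨hj, hcA, hcτ⟩ := hJ A hA le_rfl
  set j := J A with hjdef
  obtain ⟨t, t0, t1, t2, t3, t4⟩ := hF.exists_tail b hj hA (c₀ := c A) (by omega) hcτ
  have tO := t4 O hAO.le (htight j hj)
  have hpt : ∀ s, A ≤ s → 0 ≤ S.p * t s := fun s hs => by
    have := (t3 s hs).1
    positivity
  have htA : 2 ≤ S.p * t A := by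
    rw [t1]
    nlinarith
  by_cases hn : 1 ≤ S.cnt τ j (b + (A : ZMod f))
  · -- the walk ends in bin `j`, absorbed by its items
    have hD : ∀ s l, ∑ i ∈ Finset.range l, (sg j (t (s + 1)) i - S.p * sg j (t s) i) =
        if j < l then t (s + 1) - S.p * t s else 0 := by
      intro s l
      rw [Finset.sum_sub_distrib, ← Finset.mul_sum, sum_sg, sum_sg]
      split_ifs <;> simp
    have hle : ∀ s, A ≤ s → t (s + 1) - S.p * t s ≤ 0 := by
      intro s hs
      have h1 := t2 s hs
      have h2 := hF.cnt_nonneg j hj (b + (s : ZMod f))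
      have h3 := hpt s hs
      omega
    have hnn : ∀ s, A ≤ s → ∀ i < d, 0 ≤ S.cnt τ i (b + (s : ZMod f)) +
        (sg j (t (s + 1)) i - S.p * sg j (t s) i) := by
      intro s hs i hi
      have h1 := hF.cnt_nonneg i hi (b + (s : ZMod f))
      have h2 := t2 s hs
      unfold sg
      split_ifs with h
      · subst h
        omega
      · simpa using h1
    refine H.walk_finish b A hA (by omega) hL hc1 hJ1 hJ hwalk (fun i s => sg j (t s) i)
      (fun i _ => by simp only [t1]; rfl) (fun i _ => by simp [tO f hO, sg])
      (fun s hs hsf i hi => ?_) (fun s hs hsf => ?_) hx2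
    · unfold sg
      split_ifs with h
      · rw [h]; exact (t3 s hs).2
      · exact hF.τ_nonneg i hi _
    · have hle' : ∀ l ≤ d, ∑ i ∈ Finset.range l, (sg j (t (s + 1)) i - S.p * sg j (t s) i) ≤ 0 := by
        intro l hl
        rw [hD]
        split_ifs
        · exact hle s hs
        · exact le_rfl
      split_ifs with h
      · subst h
        apply hF.ok_top (hnn s hs) hle'
        rw [hD, if_pos hj]
        have := t2 s hs
        omega
      · exact hF.ok_nonpos (hnn s hs) hle'
  have hn0 : S.cnt τ j (b + (A : ZMod f)) = 0 := by
    have := hF.cnt_nonneg j hj (b + (A : ZMod f))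
    omega
  by_cases hlater : ∃ i, j < i ∧ i < d ∧ 1 ≤ S.cnt τ i (b + (A : ZMod f))
  · -- a later bin gives up the heavy item
    obtain ⟨k, hjk, hk, hnk⟩ := hlater
    have ht1 : t (A + 1) = S.p * t A := by
      have h1 := t2 A le_rfl
      omega
    obtain ⟨g, g0, g1, g2, g3, g4⟩ := hF.exists_tail b hj (s₁ := A + 1) (by omega)
      (c₀ := 1) (by omega) (by have := (t3 (A + 1) (by omega)).2; omega)
    have gO := g4 O (by omega) (htight j hj)
    have gt : ∀ s, A + 1 ≤ s → g s ≤ t s := by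
      intro s hs
      induction s, hs using Nat.le_induction with
      | base => omega
      | succ s hs ih =>
        rw [g2 s hs, t2 s (by omega)]
        apply max_le_max le_rfl
        have : S.p * g s ≤ S.p * t s := by nlinarith
        omega
    have gnn : ∀ s, 0 ≤ g s := by
      intro s
      rcases Nat.lt_or_ge s (A + 1) with h | h
      · rw [g0 s h]
      · exact (g3 s h).1
    have hgA : g A = 0 := g0 A (by omega)
    let E : ℕ → ℤ := fun s => t (s + 1) - S.p * t s
    let G : ℕ → ℤ := fun s => g (s + 1) - S.p * g s
    let η : ℕ → ℕ → ℤ := fun i s => sg j (t s) i - sg k (g s) i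
    have hΔ : ∀ i s, η i (s + 1) - S.p * η i s = sg j (E s) i - sg k (G s) i := by
      intro i s
      simp only [η, E, G]
      unfold sg
      split_ifs <;> ring
    have hD : ∀ s l, ∑ i ∈ Finset.range l, (sg j (E s) i - sg k (G s) i) =
        (if j < l then E s else 0) - (if k < l then G s else 0) := by
      intro s l
      rw [Finset.sum_sub_distrib, sum_sg, sum_sg]
    have hEA : E A = 0 := by simp only [E]; omega
    have hGA : G A = 1 := by simp only [G]; rw [hgA, g1]; simp
    have hEG : ∀ s, A < s → E s ≤ 0 ∧ -E s ≤ S.cnt τ j (b + (s : ZMod f)) ∧ G s ≤ 0 ∧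
        E s ≤ G s := by
      intro s hs
      have h1 := hF.cnt_nonneg j hj (b + (s : ZMod f))
      have h2 := hpt s hs.le
      have h3 := t2 s hs.le
      have h4 := g2 s hs
      have h5 : S.p * g s ≤ S.p * t s := by
        have := gt s hs
        nlinarith
      have h6 : 0 ≤ S.p * g s := by
        have := gnn s
        positivity
      simp only [E, G]
      omega
    have hnn : ∀ s, A ≤ s → ∀ i < d, 0 ≤ S.cnt τ i (b + (s : ZMod f)) +
        (sg j (E s) i - sg k (G s) i) := by
      intro s hs i hi
      have h1 := hF.cnt_nonneg i hi (b + (s : ZMod f))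
      unfold sg
      rcases Nat.eq_or_lt_of_le hs with h | h
      · subst h
        rw [hEA, hGA]
        by_cases h3 : i = k
        · subst h3
          rw [if_neg (by omega), if_pos rfl]
          omega
        · rw [if_neg h3]
          split_ifs <;> omega
      · have h2 := hEG s h
        by_cases h3 : i = j
        · subst h3
          rw [if_pos rfl, if_neg (by omega)]
          omega
        · rw [if_neg h3]
          split_ifs <;> omega
    have hle : ∀ s, A ≤ s → ∀ l ≤ d, ∑ i ∈ Finset.range l, (sg j (E s) i - sg k (G s) i) ≤ 0 := by
      intro s hs l hl
      rw [hD]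
      rcases Nat.eq_or_lt_of_le hs with h | h
      · subst h
        rw [hEA, hGA]
        split_ifs <;> omega
      · have h2 := hEG s h
        split_ifs <;> omega
    refine H.walk_finish b A hA (by omega) hL hc1 hJ1 hJ hwalk η
      (fun i _ => by simp only [η, t1, hgA]; simp [sg, hjdef])
      (fun i _ => by simp [η, tO f hO, gO f hO, sg])
      (fun s hs hsf i hi => ?_) (fun s hs hsf => ?_) hx2
    · have h1 := hF.τ_nonneg i hi (b + (s : ZMod f))
      have h2 := gnn s
      simp only [η]
      unfold sg
      by_cases h3 : i = j
      · subst h3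
        rw [if_pos rfl, if_neg (by omega)]
        have := (t3 s hs).2
        omega
      · rw [if_neg h3]
        split_ifs <;> omega
    · simp only [hΔ]
      split_ifs with h
      · subst h
        apply hF.ok_top (hnn s hs) (hle s hs)
        rw [hD, if_pos hj, if_pos hk, hEA, hGA]
        omega
      · exact hF.ok_nonpos (hnn s hs) (hle s hs)
  · push Not at hlater
    -- all items of class `b + A` lie in earlier bins
    have hex : ∃ i, i < d ∧ 1 ≤ S.cnt τ i (b + (A : ZMod f)) := by
      by_contra hcon
      push Not at hcon
      have : S.tot τ d (b + (A : ZMod f)) ≤ 0 :=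
        Finset.sum_nonpos fun i hi => by
          have := hcon i (by rwa [Finset.mem_range] at hi)
          omega
      omega
    obtain ⟨i₀, hi₀, hn₀⟩ := hex
    have hspec := Nat.findGreatest_spec (P := fun i => i < d ∧ 1 ≤ S.cnt τ i (b + (A : ZMod f)))
      hi₀.le ⟨hi₀, hn₀⟩
    have hgr := fun i => Nat.findGreatest_is_greatest
      (P := fun i => i < d ∧ 1 ≤ S.cnt τ i (b + (A : ZMod f))) (n := d) (k := i)
    set i := Nat.findGreatest (fun i => i < d ∧ 1 ≤ S.cnt τ i (b + (A : ZMod f))) d with hi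
    have hij : i < j := by
      rcases lt_trichotomy i j with h | h | h
      · exact h
      · rw [h] at hspec
        omega
      · have := hlater i h hspec.1
        omega
    refine H.no_swap b A O hAO hO hij hj (htight j hj) (by omega) hn0 hspec.2 ?_ ?_
    · intro i' hi' hlt
      have h1 := hgr i' hlt hi'.le
      have h2 := hF.cnt_nonneg i' hi' (b + (A : ZMod f))
      by_contra hcon
      exact h1 ⟨hi', by omega⟩
    · intro s h1 h2 h3
      exact lt_of_le_of_lt (hmax s h1 h2 h3) hx

end Sys

/-! ### Uniqueness of the optimum -/

namespace Sys

variable {f : ℕ} [NeZero f] {S : Sys f} {d : ℕ} {L : ZMod f → ℤ} {τ : ℕ → ZMod f → ℤ}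

/-- Let `N'` be other class totals within the stock, such that the top item of class `a` is not used
by `N'` and is heavier than all the items used by `N'` but not by the optimum. Then the total
of the cut variables at `a` is larger for the optimum. -/
lemma Opt.cut_neg (H : S.Opt d L τ) {N' v : ZMod f → ℤ} (hN'L : ∀ h, N' h ≤ L h)
    (hv : ∀ h, N' h - S.tot τ d h = S.p * v h - v (h + 1)) {a : ZMod f}
    (ha0 : 0 ≤ N' a) (ha : N' a < S.tot τ d a)
    (htop : ∀ h, S.tot τ d h < N' h → S.φ h (N' h) - S.φ h (N' h - 1) <
      S.φ a (S.tot τ d a) - S.φ a (S.tot τ d a - 1)) : v a < 0 := by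
  have hp := S.hp
  have hF := H.feas
  have hf : 0 < f := Nat.pos_of_ne_zero (NeZero.ne f)
  let Y : ℕ → ℤ := fun s => max 0 (N' (a + (s : ZMod f)) - S.tot τ d (a + (s : ZMod f)))
  have hY : ∀ s, 0 ≤ Y s := fun s => le_max_left _ _
  let c : ℕ → ℤ := fun s => Nat.rec 0
    (fun s c => if s = 0 then 1 else max 0 (S.p * c - Y s)) s
  have c0 : c 0 = 0 := rfl
  have c1 : c 1 = 1 := rfl
  have cs : ∀ s, 1 ≤ s → c (s + 1) = max 0 (S.p * c s - Y s) := by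
    intro s hs
    change (if s = 0 then 1 else max 0 (S.p * c s - Y s)) = _
    rw [if_neg (by omega)]
  have cnn : ∀ s, 0 ≤ c s := by
    intro s
    rcases s with _ | s
    · exact le_rfl
    rcases Nat.eq_zero_or_pos s with rfl | hs
    · rw [zero_add, c1]; omega
    · rw [cs s hs]; exact le_max_left _ _
  by_contra hva
  push Not at hva
  rcases eq_or_ne (c f) 0 with hcf | hcf
  · -- the exchange: remove the top item of class `a`, and add lighter items
    have hex : ∃ i, i < d ∧ 1 ≤ S.cnt τ i a := by
      by_contra hcon
      push Not at hcon
      have : S.tot τ d a ≤ 0 :=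
        Finset.sum_nonpos fun i hi => by
          have := hcon i (by rwa [Finset.mem_range] at hi)
          omega
      omega
    obtain ⟨i₀, hi₀, hn₀⟩ := hex
    have hspec := Nat.findGreatest_spec (P := fun i => i < d ∧ 1 ≤ S.cnt τ i a)
      hi₀.le ⟨hi₀, hn₀⟩
    have hgr := fun i => Nat.findGreatest_is_greatest
      (P := fun i => i < d ∧ 1 ≤ S.cnt τ i a) (n := d) (k := i)
    set j := Nat.findGreatest (fun i => i < d ∧ 1 ≤ S.cnt τ i a) d with hjdef
    have hj := hspec.1
    let E : ℕ → ℤ := fun s => S.p * c s - c (s + 1)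
    have E0 : E 0 = -1 := by simp only [E]; rw [c0, zero_add, c1]; simp
    have E1 : ∀ s, 1 ≤ s → 0 ≤ E s ∧ E s ≤ Y s := by
      intro s hs
      have h1 := cs s hs
      have h2 := hY s
      have h3 : 0 ≤ S.p * c s := by
        have := cnn s
        positivity
      simp only [E]
      omega
    have hΔ : ∀ i s, sg j (-c (s + 1)) i - S.p * sg j (-c s) i = sg j (E s) i := by
      intro i s
      simp only [E]
      unfold sg
      split_ifs <;> ring
    have key := H.exch a (fun i s => sg j (-c s) i)
      (fun i hi => by simp only [c0, hcf])
      (fun i hi s hs => by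
        have h1 := hF.τ_nonneg i hi (a + (s : ZMod f))
        have h2 := cnn s
        unfold sg
        split_ifs <;> omega)
      (fun s hs i hi => by
        rw [hΔ]
        have h1 := hF.cnt_nonneg i hi (a + (s : ZMod f))
        unfold sg
        split_ifs with h
        · subst h
          rcases Nat.eq_zero_or_pos s with rfl | hs
          · rw [E0]
            have := hspec.2
            simp
            omega
          · have := E1 s hs
            omega
        · omega)
      (fun s hs => by
        simp only [hΔ]
        rw [sum_sg, if_pos hj]
        have h1 := hF.tot_le (a + (s : ZMod f))
        rcases Nat.eq_zero_or_pos s with rfl | hs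
        · rw [E0]
          omega
        · have h2 := E1 s hs
          have h3 := hN'L (a + (s : ZMod f))
          simp only [Y] at h2
          omega)
    simp only [hΔ] at key
    unfold clsCost at key
    rw [Finset.sum_comm] at key
    simp only [sum_sg] at key
    have hN : ∀ l s, ∑ i ∈ Finset.range l, S.cnt τ i (a + (s : ZMod f)) =
      S.tot τ l (a + (s : ZMod f)) := fun l s => rfl
    simp only [hN] at key
    have hlev : ∀ l ∈ Finset.range d, ∑ s ∈ Finset.range f,
        (S.φ (a + (s : ZMod f)) (S.tot τ (l + 1) (a + (s : ZMod f)) +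
          (if j < l + 1 then E s else 0)) -
          S.φ (a + (s : ZMod f)) (S.tot τ (l + 1) (a + (s : ZMod f)))) ≤
        if l = j then -1 else 0 := by
      intro l hl
      rw [Finset.mem_range] at hl
      by_cases h1 : j < l + 1
      swap
      · rw [if_neg (by omega)]
        simp only [if_neg h1]
        simp
      simp only [if_pos h1]
      have hta : S.tot τ (l + 1) a = S.tot τ d a := by
        apply Finset.sum_subset (Finset.range_mono (by omega))
        intro i' h3 h4
        rw [Finset.mem_range] at h3 h4
        have h5 := hgr i' (by omega) h3.le
        have h6 := hF.cnt_nonneg i' h3 a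
        by_contra hcon
        exact h5 ⟨h3, by omega⟩
      have hsm := S.small_base a (fun s => S.tot τ d (a + (s : ZMod f)))
        (fun s => S.tot τ d (a + (s : ZMod f)) + if 0 < s then E s else 0)
        a (S.tot τ d a - 1) (by omega)
        (fun s _ => hF.tot_nonneg le_rfl _)
        (fun s _ => by
          split_ifs with h
          · have := E1 s h
            omega
          · omega)
        (fun s hs hlt => by
          have hA : 0 < s := by
            by_contra hcon
            rw [if_neg hcon] at hlt
            omega
          rw [if_pos hA] at hlt ⊢
          have h3 := E1 s hA
          simp only [Y] at h3
          have h7 := hF.tot_nonneg le_rfl (a + (s : ZMod f))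
          have h8 := htop (a + (s : ZMod f)) (by omega)
          have h9 := (S.cls (a + (s : ZMod f))).mono
            (S.tot τ d (a + (s : ZMod f)) + E s - 1)
            (N' (a + (s : ZMod f)) - 1) (by omega) (by omega)
          rw [sub_add_cancel, sub_add_cancel] at h9
          rw [sub_add_cancel]
          omega)
      rw [sub_add_cancel] at hsm
      have hsplit : ∀ s ∈ Finset.range f,
          S.φ (a + (s : ZMod f)) (S.tot τ (l + 1) (a + (s : ZMod f)) + E s) -
            S.φ (a + (s : ZMod f)) (S.tot τ (l + 1) (a + (s : ZMod f))) ≤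
          (S.φ (a + (s : ZMod f)) (S.tot τ d (a + (s : ZMod f)) +
              if 0 < s then E s else 0) -
            S.φ (a + (s : ZMod f)) (S.tot τ d (a + (s : ZMod f)))) +
          if s = 0 then -(S.φ a (S.tot τ d a) - S.φ a (S.tot τ d a - 1)) else 0 := by
        intro s hs
        rcases Nat.eq_zero_or_pos s with rfl | h
        · rw [if_neg (by omega), if_pos rfl, E0]
          have : a + ((0 : ℕ) : ZMod f) = a := by simp
          rw [this, hta, add_zero, ← sub_eq_add_neg]
          linarith
        · rw [if_pos h, if_neg (by omega), add_zero]
          exact (S.cls (a + (s : ZMod f))).convex (hF.tot_nonneg (by omega) _)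
            (hF.tot_mono (by omega) le_rfl _) (E1 s h).1
      refine (Finset.sum_le_sum hsplit).trans ?_
      rw [Finset.sum_add_distrib, Finset.sum_ite_eq' (Finset.range f) 0,
        if_pos (Finset.mem_range.2 hf)]
      split_ifs <;> omega
    have h1 := key.trans (Finset.sum_le_sum hlev)
    rw [Finset.sum_ite_eq' (Finset.range d) j, if_pos (Finset.mem_range.2 hj)] at h1
    omega
  · -- the walk never dies out, so it forces `v` to grow around the cycle
    have hpos : ∀ m, ∀ s, s + m = f → 1 ≤ s → 1 ≤ c s := by
      intro m
      induction m with
      | zero =>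
        intro s hs _
        rw [add_zero] at hs
        rw [hs]
        have := cnn f
        omega
      | succ m ih =>
        intro s hs h1
        have h2 := ih (s + 1) (by omega) (by omega)
        rw [cs s h1] at h2
        by_contra hcon
        have h3 : c s = 0 := by have := cnn s; omega
        rw [h3] at h2
        have := hY s
        simp at h2
        omega
    have hgrow : ∀ s, 1 ≤ s → s ≤ f → c s + v a ≤ v (a + (s : ZMod f)) := by
      intro s hs
      induction s, hs using Nat.le_induction with
      | base =>
        intro _
        have h1 := hv a
        rw [c1, Nat.cast_one]
        nlinarith
      | succ s hs ih =>
        intro hsf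
        have ih := ih (by omega)
        have h1 := hv (a + (s : ZMod f))
        have h2 := hpos (f - s) s (by omega) hs
        have h3 := hpos (f - (s + 1)) (s + 1) (by omega) (by omega)
        have h4 := cs s hs
        have h5 : N' (a + (s : ZMod f)) - S.tot τ d (a + (s : ZMod f)) ≤ Y s := le_max_right _ _
        push_cast
        rw [← add_assoc]
        have h6 : c (s + 1) = S.p * c s - Y s := by omega
        nlinarith
    have h1 := hgrow f hf le_rfl
    have h2 := cnn f
    simp at h1
    omega

/-- The total of the cut variables at a cut. -/
def cut (d : ℕ) (τ : ℕ → ZMod f → ℤ) (h : ZMod f) : ℤ := ∑ i ∈ Finset.range d, τ i h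

lemma tot_sub_tot (S : Sys f) (d : ℕ) (τ τ' : ℕ → ZMod f → ℤ) (h : ZMod f) :
    S.tot τ' d h - S.tot τ d h =
      S.p * (cut d τ' h - cut d τ h) - (cut d τ' (h + 1) - cut d τ (h + 1)) := by
  unfold tot cut cnt
  simp only [← Finset.sum_sub_distrib, Finset.mul_sum]
  exact Finset.sum_congr rfl fun i _ => by ring

/-- Two optima with different class totals: impossible if the heaviest item used by only one of them
is used by `τ`. -/
lemma Opt.no_top (H : S.Opt d L τ) {τ' : ℕ → ZMod f → ℤ} (H' : S.Opt d L τ') {a : ZMod f}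
    (ha : S.tot τ' d a < S.tot τ d a)
    (htop : ∀ h, S.tot τ d h < S.tot τ' d h →
      S.φ h (S.tot τ' d h) - S.φ h (S.tot τ' d h - 1) <
      S.φ a (S.tot τ d a) - S.φ a (S.tot τ d a - 1)) : False := by
  have hp := S.hp
  have hF := H.feas
  have hF' := H'.feas
  have hf : 0 < f := Nat.pos_of_ne_zero (NeZero.ne f)
  set v : ZMod f → ℤ := fun h => cut d τ' h - cut d τ h with hvdef
  have hv : ∀ h, S.tot τ' d h - S.tot τ d h = S.p * v h - v (h + 1) := S.tot_sub_tot d τ τ'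
  have hva : v a < 0 := H.cut_neg hF'.tot_le hv (hF'.tot_nonneg le_rfl a) ha htop
  have hU' : ∀ h, 0 ≤ cut d τ' h := fun h => Finset.sum_nonneg fun i hi =>
    hF'.τ_nonneg i (by rwa [Finset.mem_range] at hi) h
  have hUfree : ∀ h, v h < 0 → ∃ i, Free d τ h i := by
    intro h hh
    by_contra hcon
    have : cut d τ h ≤ 0 := Finset.sum_nonpos fun i hi => by
      rw [Finset.mem_range] at hi
      by_contra h1
      exact hcon ⟨i, hi, by omega⟩
    have := hU' h
    simp only [hvdef] at hh
    omega
  obtain ⟨o, ho⟩ := H.exists_tight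
  have hvo : 0 ≤ v o := by
    have h1 : cut d τ o = 0 := Finset.sum_eq_zero fun i hi => ho i (by rwa [Finset.mem_range] at hi)
    have := hU' o
    simp only [hvdef]
    omega
  -- the nearest cut `b` before `a` with `v b ≥ 0`
  have hexr : ∃ r : ℕ, 0 ≤ v (a - (r : ZMod f)) := by
    obtain ⟨s, -, hs⟩ := exists_base o a
    exact ⟨s, by rw [hs]; simpa using hvo⟩
  obtain ⟨r, hr, hrmin⟩ : ∃ r : ℕ, 0 ≤ v (a - (r : ZMod f)) ∧
      ∀ r' < r, v (a - (r' : ZMod f)) < 0 :=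
    ⟨Nat.find hexr, Nat.find_spec hexr, fun r' h => by
      have := Nat.find_min hexr h
      omega⟩
  have hr1 : 1 ≤ r := by
    rcases Nat.eq_zero_or_pos r with rfl | h
    · simp at hr
      omega
    · exact h
  obtain ⟨b, hb⟩ : ∃ b, b = a - (r : ZMod f) := ⟨_, rfl⟩
  have hab : a = b + (r : ZMod f) := by rw [hb]; ring
  rw [← hb] at hr
  have hneg : ∀ s : ℕ, 1 ≤ s → s ≤ r → v (b + (s : ZMod f)) < 0 := by
    intro s h1 h2
    have := hrmin (r - s) (by omega)
    rw [Nat.cast_sub h2] at this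
    rw [hb]
    convert this using 2
    ring
  have hNb : S.tot τ d b + 1 ≤ S.tot τ' d b := by
    have h1 := hv b
    have h2 := hneg 1 le_rfl hr1
    rw [Nat.cast_one] at h2
    nlinarith
  have hz : S.φ b (S.tot τ d b + 1) - S.φ b (S.tot τ d b) <
      S.φ a (S.tot τ d a) - S.φ a (S.tot τ d a - 1) := by
    have h1 := htop b (by omega)
    have h2 := (S.cls b).mono (S.tot τ d b) (S.tot τ' d b - 1) (hF.tot_nonneg le_rfl b) (by omega)
    rw [sub_add_cancel] at h2
    omega
  -- the first all-tight cut after `b`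
  have hexO : ∃ s : ℕ, 1 ≤ s ∧ s ≤ f ∧ ∀ i < d, τ i (b + (s : ZMod f)) = 0 := by
    obtain ⟨s, hs, hs'⟩ := exists_base b o
    rcases Nat.eq_zero_or_pos s with rfl | h
    · refine ⟨f, hf, le_rfl, ?_⟩
      simp only [Nat.cast_zero, add_zero] at hs'
      simpa [← hs'] using ho
    · exact ⟨s, h, hs.le, by rw [← hs']; exact ho⟩
  obtain ⟨O, ⟨hO1, hOf, hOt⟩, hOmin⟩ : ∃ O : ℕ,
      (1 ≤ O ∧ O ≤ f ∧ ∀ i < d, τ i (b + (O : ZMod f)) = 0) ∧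
      ∀ s < O, ¬ (1 ≤ s ∧ s ≤ f ∧ ∀ i < d, τ i (b + (s : ZMod f)) = 0) :=
    ⟨Nat.find hexO, Nat.find_spec hexO, fun s h => Nat.find_min hexO h⟩
  have hrO : r < O := by
    by_contra hcon
    have h1 := hneg O hO1 (by omega)
    obtain ⟨i, hi, hi'⟩ := hUfree _ h1
    have := hOt i hi
    omega
  have hfree : ∀ s : ℕ, 1 ≤ s → s < O → ∃ i, Free d τ (b + (s : ZMod f)) i := by
    intro s h1 h2
    have h3 := hOmin s h2
    by_contra hcon
    refine h3 ⟨h1, by omega, ?_⟩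
    intro i hi
    have h4 := hF.τ_nonneg i hi (b + (s : ZMod f))
    by_contra h5
    exact hcon ⟨i, hi, by omega⟩
  -- the last class before `O` with a top item heavier than the next item of class `b`
  let P : ℕ → Prop := fun s => 1 ≤ s ∧ s < O ∧ 1 ≤ S.tot τ d (b + (s : ZMod f)) ∧
    S.φ b (S.tot τ d b + 1) - S.φ b (S.tot τ d b) <
      S.φ (b + (s : ZMod f)) (S.tot τ d (b + (s : ZMod f))) -
        S.φ (b + (s : ZMod f)) (S.tot τ d (b + (s : ZMod f)) - 1)
  have hPr : P r := by
    refine ⟨hr1, hrO, ?_, ?_⟩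
    · rw [← hab]
      have := hF'.tot_nonneg le_rfl a
      omega
    · rw [← hab]
      exact hz
  have hspec := Nat.findGreatest_spec (P := P) hrO.le hPr
  have hgr := fun s => Nat.findGreatest_is_greatest (P := P) (n := O) (k := s)
  set A := Nat.findGreatest P O
  obtain ⟨hA1, hAO, hAN, hAx⟩ := hspec
  refine H.no_wall b A O hA1 hAO hOf hOt hfree ?_ hAN hAx ?_
  · have := hF'.tot_le b
    omega
  · intro s h1 h2 h3
    by_contra hcon
    exact hgr s h1 h2.le ⟨by omega, h2, h3, by omega⟩

/-- The class totals of an optimum are unique. -/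
lemma Opt.tot_unique (H : S.Opt d L τ) {τ' : ℕ → ZMod f → ℤ} (H' : S.Opt d L τ') (h : ZMod f) :
    S.tot τ d h = S.tot τ' d h := by
  by_contra hne
  have hF := H.feas
  have hF' := H'.feas
  let top : ZMod f → ℤ := fun h => S.φ h (max (S.tot τ d h) (S.tot τ' d h)) -
    S.φ h (max (S.tot τ d h) (S.tot τ' d h) - 1)
  obtain ⟨a, ha, hmax⟩ := Finset.exists_max_image
    (Finset.univ.filter fun h => S.tot τ d h ≠ S.tot τ' d h) top
    ⟨h, by simpa using hne⟩
  rw [Finset.mem_filter] at ha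
  have hlt : ∀ h, h ≠ a → S.tot τ d h ≠ S.tot τ' d h → top h < top a := by
    intro h hha hh
    have h1 := hmax h (by simpa using hh)
    have b1 := hF.tot_nonneg le_rfl h
    have b2 := hF'.tot_nonneg le_rfl h
    have b3 := hF.tot_nonneg le_rfl a
    have b4 := hF'.tot_nonneg le_rfl a
    have h2 := S.sep h a (max (S.tot τ d h) (S.tot τ' d h) - 1)
      (max (S.tot τ d a) (S.tot τ' d a) - 1) hha (by omega) (by omega)
    have h3 := (S.cls h).pos (max (S.tot τ d h) (S.tot τ' d h) - 1) (by omega)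
    have h4 := (S.cls a).pos (max (S.tot τ d a) (S.tot τ' d a) - 1) (by have := ha.2; omega)
    simp only [sub_add_cancel] at h2 h3 h4
    simp only [top] at h1 ⊢
    omega
  rcases lt_or_gt_of_ne ha.2 with hlt' | hgt
  · apply H'.no_top H hlt'
    intro h hh
    have h1 := hlt h (by rintro rfl; omega) (by omega)
    simp only [top] at h1
    rwa [max_eq_left hh.le, max_eq_right hlt'.le] at h1
  · apply H.no_top H' hgt
    intro h hh
    have h1 := hlt h (by rintro rfl; omega) (by omega)
    simp only [top] at h1
    rwa [max_eq_right hh.le, max_eq_left hgt.le] at h1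

end Sys

namespace Sys

variable {f : ℕ} [NeZero f] {S : Sys f} {d : ℕ} {L : ZMod f → ℤ} {τ : ℕ → ZMod f → ℤ}

lemma Feas.cost_ge (H : S.Feas d L τ) : ∑ _l ∈ Finset.range d, ∑ h, S.φ h 0 ≤ S.cost d τ := by
  apply Finset.sum_le_sum
  intro l hl
  rw [Finset.mem_range] at hl
  apply Finset.sum_le_sum
  intro h _
  exact (S.cls h).le le_rfl (H.tot_nonneg (by omega) h)

lemma Feas.exists_opt (H : S.Feas d L τ) : ∃ O, S.Opt d L O := by
  obtain ⟨O, hO, hmin⟩ := WellFounded.has_min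
    (measure fun τ => (S.cost d τ - ∑ _l ∈ Finset.range d, ∑ h, S.φ h 0).toNat).wf
    {τ | S.Feas d L τ} ⟨τ, H⟩
  refine ⟨O, hO, ?_⟩
  intro τ' hτ'
  have h1 : ¬ ((S.cost d τ' - ∑ _l ∈ Finset.range d, ∑ h, S.φ h 0).toNat <
    (S.cost d O - ∑ _l ∈ Finset.range d, ∑ h, S.φ h 0).toNat) := hmin τ' hτ'
  have h2 := (hO : S.Feas d L O).cost_ge
  have h3 := hτ'.cost_ge
  omega

/-- Removing the last bin of an optimum leaves an optimum for the remaining bins, with the stock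
reduced to the items in use. -/
lemma Opt.restrict (H : S.Opt (d + 1) L τ) (hd : 1 ≤ d) :
    S.Opt d (fun h => S.tot τ (d + 1) h) τ := by
  have hp := S.hp
  have hF := H.feas
  have hFd : S.Feas d (fun h => S.tot τ (d + 1) h) τ :=
    ⟨fun i hi => hF.τ_nonneg i (by omega), fun i hi => hF.cnt_nonneg i (by omega),
      fun h => hF.tot_mono (by omega) le_rfl h⟩
  refine ⟨hFd, ?_⟩
  obtain ⟨O, hO⟩ := hFd.exists_opt
  suffices hle : S.cost d τ ≤ S.cost d O from
    fun σ hσ => hle.trans (hO.le σ hσ)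
  -- the optimum `O` for `d` bins is completed by a last bin holding the remaining items
  let w : ZMod f → ℤ := fun h => cut (d + 1) τ h - cut d O h
  have hw : ∀ h, S.p * w h + (S.p - 1) - w (h + 1) = S.tot τ (d + 1) h - S.tot O d h := by
    intro h
    have h1 := S.tot_sub_tot d O τ h
    have h2 : S.tot τ (d + 1) h = S.tot τ d h + S.cnt τ d h := Finset.sum_range_succ _ _
    have h3 : ∀ h, cut (d + 1) τ h = cut d τ h + τ d h := fun h => Finset.sum_range_succ _ _
    have h4 := S.β_pos d h hd
    simp only [w, h2, h3]
    unfold cnt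
    rw [h4]
    linarith
  have hcut : ∀ h, 0 ≤ cut (d + 1) τ h := fun h => Finset.sum_nonneg fun i hi =>
    hF.τ_nonneg i (by rwa [Finset.mem_range] at hi) h
  have hw0 : ∀ h, 0 ≤ w h := by
    by_contra hcon
    push Not at hcon
    obtain ⟨h₀, hh⟩ := hcon
    have hall : ∀ s : ℕ, w (h₀ + (s : ZMod f)) + 1 ≤ 0 := by
      intro s
      induction s with
      | zero => simpa using hh
      | succ s ih =>
        have h1 := hw (h₀ + (s : ZMod f))
        have h2 := hO.feas.tot_le (h₀ + (s : ZMod f))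
        push_cast
        rw [← add_assoc]
        nlinarith
    obtain ⟨o, ho⟩ := hO.exists_tight
    obtain ⟨s, -, rfl⟩ := exists_base h₀ o
    have h1 : cut d O (h₀ + (s : ZMod f)) = 0 :=
      Finset.sum_eq_zero fun i hi => ho i (by rwa [Finset.mem_range] at hi)
    have h2 := hall s
    have h3 := hcut (h₀ + (s : ZMod f))
    simp only [w] at h2
    omega
  let τ' : ℕ → ZMod f → ℤ := fun i h => if i < d then O i h else w h
  have c1 : ∀ i < d, ∀ h, S.cnt τ' i h = S.cnt O i h := by
    intro i hi h
    simp only [cnt, τ', if_pos hi]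
  have c2 : ∀ h, S.cnt τ' d h = S.tot τ (d + 1) h - S.tot O d h := by
    intro h
    rw [← hw h, ← S.β_pos d h hd]
    simp [cnt, τ']
  have t1 : ∀ l ≤ d, ∀ h, S.tot τ' l h = S.tot O l h := by
    intro l hl h
    exact Finset.sum_congr rfl fun i hi => c1 i (by rw [Finset.mem_range] at hi; omega) h
  have t2 : ∀ h, S.tot τ' (d + 1) h = S.tot τ (d + 1) h := by
    intro h
    have : S.tot τ' (d + 1) h = S.tot τ' d h + S.cnt τ' d h := Finset.sum_range_succ _ _
    rw [this, t1 d le_rfl, c2]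
    ring
  have hF' : S.Feas (d + 1) L τ' := by
    refine ⟨?_, ?_, ?_⟩
    · intro i hi h
      simp only [τ']
      split_ifs with h1
      · exact hO.feas.τ_nonneg i h1 h
      · exact hw0 h
    · intro i hi h
      rcases Nat.lt_or_ge i d with h1 | h1
      · rw [c1 i h1]; exact hO.feas.cnt_nonneg i h1 h
      · have : i = d := by omega
        rw [this, c2]
        have := hO.feas.tot_le h
        linarith
    · intro h
      rw [t2]
      exact hF.tot_le h
  have h1 := H.le τ' hF'
  unfold cost at *
  rw [Finset.sum_range_succ, Finset.sum_range_succ] at h1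
  simp only [t2] at h1
  have h2 : ∑ l ∈ Finset.range d, ∑ h, S.φ h (S.tot τ' (l + 1) h) =
      ∑ l ∈ Finset.range d, ∑ h, S.φ h (S.tot O (l + 1) h) := by
    apply Finset.sum_congr rfl
    intro l hl
    rw [Finset.mem_range] at hl
    exact Finset.sum_congr rfl fun h _ => by rw [t1 (l + 1) (by omega)]
  linarith

/-- The partial totals of an optimum are unique. -/
theorem Opt.unique {d : ℕ} : ∀ {L : ZMod f → ℤ} {τ τ' : ℕ → ZMod f → ℤ}, S.Opt d L τ →
    S.Opt d L τ' → ∀ l ≤ d, ∀ h, S.tot τ l h = S.tot τ' l h := by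
  induction d with
  | zero =>
    intro L τ τ' _ _ l hl h
    have : l = 0 := by omega
    subst this
    rfl
  | succ d ih =>
    intro L τ τ' H H' l hl h
    rcases Nat.lt_or_ge d l with h1 | h1
    · have : l = d + 1 := by omega
      subst this
      exact H.tot_unique H' h
    rcases Nat.eq_zero_or_pos d with rfl | hd
    · have : l = 0 := by omega
      subst this
      rfl
    have r1 := H.restrict hd
    have r2 := H'.restrict hd
    have he : (fun h => S.tot τ' (d + 1) h) = fun h => S.tot τ (d + 1) h :=
      funext fun h => (H.tot_unique H' h).symm
    rw [he] at r2
    exact ih r1 r2 l h1 h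

end Sys

/-! ### Digit sequences as stocks of items -/

/-- The residue class of a digit position; the cyclic successor `h + 1` of a class `h` holds the
positions one below those of `h`. -/
def cl (f : ℕ) (j : ℕ) : ZMod f := -(j : ZMod f)

/-- Sum of the entries of `x` at the positions below `P` in the class `h`. -/
def cc (f : ℕ) (P : ℕ) (x : ℕ → ℤ) (h : ZMod f) : ℤ :=
  ∑ j ∈ Finset.range P, if cl f j = h then x j else 0

/-- A digit sequence in base `p` all of whose digits are `p - 1` from some position on. Position
`j` holds `dig j` items of weight `p ^ j`. -/
structure DigSeq (p : ℕ) where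
  hp : 2 ≤ p
  dig : ℕ → ℤ
  nonneg : ∀ j, 0 ≤ dig j
  le : ∀ j, dig j ≤ p - 1
  K : ℕ
  tail : ∀ j, K ≤ j → dig j = p - 1

lemma cc_succ (f P : ℕ) (x : ℕ → ℤ) (h : ZMod f) :
    cc f (P + 1) x h = cc f P x h + if cl f P = h then x P else 0 :=
  Finset.sum_range_succ _ _

lemma cc_zero (f : ℕ) (x : ℕ → ℤ) (h : ZMod f) : cc f 0 x h = 0 := rfl

lemma cc_mono (f : ℕ) {x : ℕ → ℤ} (hx : ∀ j, 0 ≤ x j) (h : ZMod f) {P P' : ℕ} (hP : P ≤ P') :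
    cc f P x h ≤ cc f P' x h := by
  apply Finset.sum_le_sum_of_subset_of_nonneg
  · exact Finset.range_mono hP
  · intro j _ _
    split_ifs
    · exact hx j
    · exact le_rfl

lemma cl_inj {f : ℕ} {i j : ℕ} (h : cl f i = cl f j) (hij : i ≤ j) (hj : j < i + f) : i = j := by
  unfold cl at h
  rw [neg_inj, ZMod.natCast_eq_natCast_iff] at h
  have h1 := (Nat.modEq_iff_dvd' hij).1 h
  have h2 := Nat.eq_zero_of_dvd_of_lt h1 (by omega)
  omega

/-- A window of at most `f` positions meets each class at most once. -/
lemma cc_window {f : ℕ} {x : ℕ → ℤ} {b : ℤ} (hb : 0 ≤ b) (hx : ∀ j, x j ≤ b)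
    (h : ZMod f) (P : ℕ) : cc f (P + f) x h ≤ cc f P x h + b := by
  unfold cc
  rw [Finset.sum_range_add]
  gcongr
  by_cases he : ∃ s ∈ Finset.range f, cl f (P + s) = h
  · obtain ⟨s, hs, he⟩ := he
    rw [Finset.mem_range] at hs
    rw [Finset.sum_eq_single_of_mem s (by simpa using hs)]
    · rw [if_pos he]; exact hx _
    · intro s' hs' hne
      rw [Finset.mem_range] at hs'
      rw [if_neg]
      intro he'
      rw [← he] at he'
      apply hne
      rcases le_total s s' with h1 | h1
      · have := cl_inj he'.symm (by omega) (by omega); omega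
      · have := cl_inj he' (by omega) (by omega); omega
  · push Not at he
    rw [Finset.sum_eq_zero]
    · exact hb
    · intro s hs
      rw [if_neg (he s hs)]

lemma exists_cl (f : ℕ) [NeZero f] (h : ZMod f) (K : ℕ) : ∃ j, K ≤ j ∧ cl f j = h := by
  refine ⟨(-h).val + f * K, ?_, ?_⟩
  · have := Nat.pos_of_ne_zero (NeZero.ne f)
    nlinarith
  · simp [cl]

namespace DigSeq

variable {p : ℕ} (A : DigSeq p) (f : ℕ) [NeZero f]

/-- The number of items of class `h` at positions below `P`. -/
def C (h : ZMod f) (P : ℕ) : ℤ := cc f P A.dig h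

variable {f}

lemma C_mono (h : ZMod f) {P P' : ℕ} (hP : P ≤ P') : A.C f h P ≤ A.C f h P' :=
  cc_mono f A.nonneg h hP

lemma C_succ (h : ZMod f) (P : ℕ) :
    A.C f h (P + 1) = A.C f h P + if cl f P = h then A.dig P else 0 := cc_succ _ _ _ _

lemma exists_lt_C (h : ZMod f) (n : ℕ) : ∃ P, (n : ℤ) < A.C f h (P + 1) := by
  have hp := A.hp
  induction n with
  | zero =>
    obtain ⟨j, hj, he⟩ := exists_cl f h A.K
    refine ⟨j, ?_⟩
    have h1 : 0 ≤ A.C f h j := by simpa [C, cc_zero] using A.C_mono h (Nat.zero_le j)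
    rw [A.C_succ, if_pos he, A.tail j hj]
    push_cast
    omega
  | succ n ih =>
    obtain ⟨P, hP⟩ := ih
    obtain ⟨j, hj, he⟩ := exists_cl f h (max A.K (P + 1))
    refine ⟨j, ?_⟩
    have h1 := A.C_mono h (show P + 1 ≤ j from le_trans (le_max_right _ _) hj)
    rw [A.C_succ, if_pos he, A.tail j (le_trans (le_max_left _ _) hj)]
    push_cast
    omega

/-- The position of the `t`-th item of class `h`, items being counted from the bottom. -/
noncomputable def pos (h : ZMod f) (t : ℕ) : ℕ := Nat.find (A.exists_lt_C h t)

lemma lt_C_pos (h : ZMod f) (t : ℕ) : (t : ℤ) < A.C f h (A.pos h t + 1) :=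
  Nat.find_spec (A.exists_lt_C h t)

lemma C_pos_le (h : ZMod f) (t : ℕ) : A.C f h (A.pos h t) ≤ t := by
  rcases hP : A.pos h t with _ | P
  · simp [C, cc_zero]
  · exact not_lt.1 (Nat.find_min (A.exists_lt_C h t) (m := P) (by
      change P < A.pos h t
      omega))

lemma cl_pos (h : ZMod f) (t : ℕ) : cl f (A.pos h t) = h := by
  by_contra hne
  have h1 := A.lt_C_pos h t
  have h2 := A.C_pos_le h t
  rw [A.C_succ, if_neg hne] at h1
  omega

lemma le_pos {h : ZMod f} {t P : ℕ} (hP : A.C f h P ≤ t) : P ≤ A.pos h t := by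
  by_contra hcon
  have h1 := A.lt_C_pos h t
  have h2 := A.C_mono h (show A.pos h t + 1 ≤ P by omega)
  omega

lemma le_C_of_pos_lt {h : ZMod f} {t P : ℕ} (hP : A.pos h t < P) : (t : ℤ) + 1 ≤ A.C f h P := by
  have h1 := A.lt_C_pos h t
  have h2 := A.C_mono h (show A.pos h t + 1 ≤ P by omega)
  omega

lemma pos_mono (h : ZMod f) {s t : ℕ} (hst : s ≤ t) : A.pos h s ≤ A.pos h t :=
  A.le_pos ((A.C_pos_le h s).trans (by exact_mod_cast hst))

/-- The total weight of the `N` lightest items of class `h`. -/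
noncomputable def phi (h : ZMod f) (N : ℤ) : ℤ := ∑ t ∈ Finset.range N.toNat, (p : ℤ) ^ A.pos h t

lemma phi_zero (h : ZMod f) : A.phi h 0 = 0 := by simp [phi]

lemma phi_succ (h : ZMod f) (t : ℕ) :
    A.phi h ((t : ℤ) + 1) = A.phi h t + (p : ℤ) ^ A.pos h t := by
  unfold phi
  rw [show ((t : ℤ) + 1).toNat = t + 1 by omega, Finset.sum_range_succ]
  simp

/-- The number of items at position `j` among the `N` lightest items of class `h`. -/
def D (h : ZMod f) (j : ℕ) (N : ℤ) : ℤ := min (A.C f h (j + 1)) N - min (A.C f h j) N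

lemma sum_D (h : ZMod f) (P : ℕ) {N : ℤ} (hN : 0 ≤ N) :
    ∑ j ∈ Finset.range P, A.D h j N = min (A.C f h P) N := by
  unfold D
  rw [Finset.sum_range_sub (fun j => min (A.C f h j) N)]
  simp [C, cc_zero, hN]

lemma C_nonneg (h : ZMod f) (P : ℕ) : 0 ≤ A.C f h P := by
  simpa [C, cc_zero] using A.C_mono h (Nat.zero_le P)

lemma D_of_ne {h : ZMod f} {j : ℕ} (hj : cl f j ≠ h) (N : ℤ) : A.D h j N = 0 := by
  unfold D
  rw [A.C_succ, if_neg hj]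
  simp

lemma D_nonneg (h : ZMod f) (j : ℕ) (N : ℤ) : 0 ≤ A.D h j N := by
  unfold D
  have := A.C_mono h (show j ≤ j + 1 by omega)
  omega

lemma D_zero (h : ZMod f) (j : ℕ) : A.D h j 0 = 0 := by
  unfold D
  have := A.C_nonneg h j
  have := A.C_nonneg h (j + 1)
  omega

lemma D_mono (h : ZMod f) (j : ℕ) {N N' : ℤ} (hN : N ≤ N') : A.D h j N ≤ A.D h j N' := by
  unfold D
  have := A.C_mono h (show j ≤ j + 1 by omega)
  omega

lemma D_le (h : ZMod f) (j : ℕ) (N : ℤ) : A.D h j N ≤ A.dig j := by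
  unfold D
  have h1 := A.C_succ h j
  have h2 := A.nonneg j
  have := A.C_mono h (show j ≤ j + 1 by omega)
  split_ifs at h1 <;> omega

lemma D_C {h : ZMod f} {j P : ℕ} (hj : j < P) :
    A.D h j (A.C f h P) = if cl f j = h then A.dig j else 0 := by
  unfold D
  have h1 := A.C_succ h j
  have h2 := A.C_mono h (show j ≤ P by omega)
  have h3 := A.C_mono h (show j + 1 ≤ P by omega)
  rw [min_eq_left h2, min_eq_left h3]
  omega

lemma sum_D_mul (h : ZMod f) (P : ℕ) (N : ℕ) (hN : (N : ℤ) ≤ A.C f h P) :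
    ∑ j ∈ Finset.range P, A.D h j N * (p : ℤ) ^ j = A.phi h N := by
  induction N with
  | zero => simp [D_zero, phi_zero]
  | succ N ih =>
    push_cast at hN ⊢
    rw [A.phi_succ, ← ih (by omega)]
    have hpos : A.pos h N < P := by
      by_contra hcon
      have h1 := A.C_mono h (show P ≤ A.pos h N by omega)
      have h2 := A.C_pos_le h N
      omega
    have key : ∀ j, A.D h j ((N : ℤ) + 1) = A.D h j N + if j = A.pos h N then 1 else 0 := by
      intro j
      have h1 := A.lt_C_pos h N
      have h2 := A.C_pos_le h N
      unfold D
      split_ifs with hj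
      · subst hj
        omega
      · rcases Nat.lt_or_gt_of_ne hj with h3 | h3
        · have := A.C_mono h (show j + 1 ≤ A.pos h N by omega)
          have := A.C_mono h (show j ≤ A.pos h N by omega)
          omega
        · have := A.C_mono h (show A.pos h N + 1 ≤ j by omega)
          have := A.C_mono h (show A.pos h N + 1 ≤ j + 1 by omega)
          omega
    simp only [key, add_mul, Finset.sum_add_distrib, ite_mul, one_mul, zero_mul,
      Finset.sum_ite_eq', Finset.mem_range, if_pos hpos]

lemma phi_C (h : ZMod f) (P : ℕ) :
    A.phi h (A.C f h P) = ∑ j ∈ Finset.range P, if cl f j = h then A.dig j * (p : ℤ) ^ j else 0 := by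
  have h0 := A.C_nonneg h P
  have h1 := A.sum_D_mul h P (A.C f h P).toNat (by omega)
  rw [Int.toNat_of_nonneg h0] at h1
  rw [← h1]
  apply Finset.sum_congr rfl
  intro j hj
  rw [Finset.mem_range] at hj
  rw [A.D_C hj]
  split_ifs <;> simp

lemma phi_mono (h : ZMod f) {s t : ℤ} (hst : s ≤ t) : A.phi h s ≤ A.phi h t := by
  unfold phi
  apply Finset.sum_le_sum_of_subset_of_nonneg
  · exact Finset.range_mono (by omega)
  · intro j _ _
    positivity

lemma phi_nonneg (h : ZMod f) (s : ℤ) : 0 ≤ A.phi h s := by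
  unfold phi
  positivity

lemma sum_dig_lt (P : ℕ) : ∑ j ∈ Finset.range P, A.dig j * (p : ℤ) ^ j < (p : ℤ) ^ P := by
  induction P with
  | zero => simp
  | succ P ih =>
    rw [Finset.sum_range_succ, pow_succ]
    have h1 := A.le P
    have h2 : (0 : ℤ) < (p : ℤ) ^ P := pow_pos (by have := A.hp; omega) _
    nlinarith

lemma phi_sub {h : ZMod f} {t : ℤ} (ht : 0 ≤ t) :
    A.phi h (t + 1) - A.phi h t = (p : ℤ) ^ A.pos h t.toNat := by
  obtain ⟨n, rfl⟩ := Int.eq_ofNat_of_zero_le ht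
  rw [A.phi_succ]
  simp

lemma oneClass (h : ZMod f) : OneClass (p : ℤ) ((p ^ f : ℕ) : ℤ) (A.phi h) := by
  have hp := A.hp
  have hp1 : (1 : ℤ) ≤ p := by omega
  refine ⟨?_, ?_, ?_⟩
  · intro t ht
    rw [A.phi_sub ht]
    exact one_le_pow₀ hp1
  · intro s t hs hst
    rw [A.phi_sub hs, A.phi_sub (hs.trans hst)]
    exact pow_le_pow_right₀ hp1 (A.pos_mono h (by omega))
  · intro t ht
    have h1 := A.phi_sub (h := h) (t := t + p - 1) (by omega)
    rw [sub_add_cancel] at h1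
    rw [A.phi_sub ht, h1]
    push_cast
    rw [← pow_add]
    apply pow_le_pow_right₀ hp1
    apply A.le_pos
    have h2 := cc_window (f := f) (b := (p : ℤ) - 1) (by omega) A.le h (A.pos h t.toNat)
    have h3 := A.C_pos_le h t.toNat
    rw [add_comm f]
    unfold C at *
    omega

/-- Weights of items of different classes are different powers of `p`. -/
lemma sep (h h' : ZMod f) (s t : ℤ) (hne : h ≠ h') (hs : 0 ≤ s) (ht : 0 ≤ t) :
    2 * (A.phi h (s + 1) - A.phi h s) ≤ A.phi h' (t + 1) - A.phi h' t ∨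
    2 * (A.phi h' (t + 1) - A.phi h' t) ≤ A.phi h (s + 1) - A.phi h s := by
  have hp := A.hp
  have key : ∀ a b : ℕ, a < b → 2 * (p : ℤ) ^ a ≤ (p : ℤ) ^ b := by
    intro a b hab
    calc 2 * (p : ℤ) ^ a ≤ p * (p : ℤ) ^ a := by gcongr; exact_mod_cast hp
      _ = (p : ℤ) ^ (a + 1) := by ring
      _ ≤ _ := pow_le_pow_right₀ (by omega) hab
  rw [A.phi_sub hs, A.phi_sub ht]
  have : A.pos h s.toNat ≠ A.pos h' t.toNat := by
    intro he
    apply hne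
    rw [← A.cl_pos h s.toNat, he, A.cl_pos]
  rcases Nat.lt_or_gt_of_ne this with h1 | h1
  · exact Or.inl (key _ _ h1)
  · exact Or.inr (key _ _ h1)

/-- All items lighter than `p ^ P` weigh less than `p ^ P` together. -/
lemma small (u w : ZMod f → ℤ) (a : ZMod f) (t : ℤ) (ht : 0 ≤ t) (hu : ∀ h, 0 ≤ u h)
    (huw : ∀ h, u h ≤ w h)
    (hlt : ∀ h, u h < w h → A.phi h (w h) - A.phi h (w h - 1) < A.phi a (t + 1) - A.phi a t) :
    ∑ h, (A.phi h (w h) - A.phi h (u h)) < A.phi a (t + 1) - A.phi a t := by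
  have hp := A.hp
  rw [A.phi_sub ht] at *
  set P := A.pos a t.toNat
  have key : ∀ h, A.phi h (w h) - A.phi h (u h) ≤ A.phi h (A.C f h P) := by
    intro h
    rcases (huw h).eq_or_lt with he | hl
    · rw [he, sub_self]; exact A.phi_nonneg _ _
    · have h1 := hlt h hl
      have h2 := A.phi_sub (h := h) (t := w h - 1) (by have := hu h; omega)
      rw [sub_add_cancel] at h2
      rw [h2] at h1
      have h3 : A.pos h (w h - 1).toNat < P :=
        (pow_lt_pow_iff_right₀ (by exact_mod_cast hp)).1 h1
      have h4 := A.le_C_of_pos_lt h3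
      have h5 := A.phi_mono h (show w h ≤ A.C f h P by have := hu h; omega)
      have := A.phi_nonneg h (u h)
      linarith
  refine lt_of_le_of_lt (Finset.sum_le_sum fun h _ => key h) ?_
  refine lt_of_le_of_lt (le_of_eq ?_) (A.sum_dig_lt P)
  simp only [phi_C]
  rw [Finset.sum_comm]
  simp

/-- Among the ways of taking a given number `N` of items of class `h`, taking the lightest ones
has the least weight, and is the only one of that weight. -/
lemma phi_le {h : ZMod f} {P : ℕ} {x : ℕ → ℤ} (hx : ∀ j < P, x j ≤ A.dig j)
    (hx0 : ∀ j < P, 0 ≤ x j) :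
    A.phi h (cc f P x h) ≤ ∑ j ∈ Finset.range P, (if cl f j = h then x j * (p : ℤ) ^ j else 0) ∧
    (A.phi h (cc f P x h) = ∑ j ∈ Finset.range P, (if cl f j = h then x j * (p : ℤ) ^ j else 0) →
      ∀ j < P, cl f j = h → x j = A.D h j (cc f P x h)) := by
  have hp := A.hp
  set N := cc f P x h with hN
  have hX0 : ∀ i ≤ P, 0 ≤ cc f i x h := by
    intro i hi
    apply Finset.sum_nonneg
    intro j hj
    rw [Finset.mem_range] at hj
    split_ifs
    · exact hx0 j (by omega)
    · exact le_rfl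
  have hXC : ∀ i ≤ P, cc f i x h ≤ A.C f h i := by
    intro i hi
    apply Finset.sum_le_sum
    intro j hj
    rw [Finset.mem_range] at hj
    split_ifs
    · exact hx j (by omega)
    · exact le_rfl
  have hXN : ∀ i ≤ P, cc f i x h ≤ N := by
    intro i hi
    apply Finset.sum_le_sum_of_subset_of_nonneg
    · exact Finset.range_mono hi
    · intro j hj _
      rw [Finset.mem_range] at hj
      split_ifs
      · exact hx0 j (by omega)
      · exact le_rfl
  have hN0 : 0 ≤ N := hX0 P le_rfl
  -- summation by parts
  have abel : ∀ i ≤ P, ∑ j ∈ Finset.range i, (if cl f j = h then x j * (p : ℤ) ^ j else 0) +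
      (min (A.C f h i) N - cc f i x h) * (p : ℤ) ^ i =
      ∑ j ∈ Finset.range i, A.D h j N * (p : ℤ) ^ j +
      ∑ j ∈ Finset.range i, (min (A.C f h (j + 1)) N - cc f (j + 1) x h) *
        ((p : ℤ) ^ (j + 1) - (p : ℤ) ^ j) := by
    intro i hi
    induction i with
    | zero => simp [C, cc_zero, hN0]
    | succ i ih =>
      have ih := ih (by omega)
      rw [Finset.sum_range_succ, Finset.sum_range_succ, Finset.sum_range_succ]
      have h1 := cc_succ f i x h
      unfold D at *
      split_ifs at h1 ⊢
      · have : x i = cc f (i + 1) x h - cc f i x h := by omega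
        rw [this]
        linear_combination ih
      · rw [add_zero] at h1
        rw [h1] at *
        linear_combination ih
  have hfin := abel P le_rfl
  rw [min_eq_right (hXC P le_rfl), ← hN, sub_self, zero_mul, add_zero] at hfin
  have h2 := A.sum_D_mul h P N.toNat (by have := hXC P le_rfl; omega)
  rw [Int.toNat_of_nonneg hN0] at h2
  rw [h2] at hfin
  have hterm : ∀ j ∈ Finset.range P, 0 ≤ (min (A.C f h (j + 1)) N - cc f (j + 1) x h) *
        ((p : ℤ) ^ (j + 1) - (p : ℤ) ^ j) := by
    intro j hj
    rw [Finset.mem_range] at hj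
    apply mul_nonneg
    · have := hXC (j + 1) (by omega)
      have := hXN (j + 1) (by omega)
      omega
    · rw [sub_nonneg]
      exact pow_le_pow_right₀ (by omega) (by omega)
  have hnn := Finset.sum_nonneg hterm
  refine ⟨by linarith, ?_⟩
  intro he
  have h0 := (Finset.sum_eq_zero_iff_of_nonneg hterm).1 (by linarith)
  have h3 : ∀ j ≤ P, cc f j x h = min (A.C f h j) N := by
    intro j hj
    rcases j with _ | j
    · simp [C, cc_zero, hN0]
    · have h4 := h0 j (by rw [Finset.mem_range]; omega)
      have h5 : (p : ℤ) ^ j < (p : ℤ) ^ (j + 1) := pow_lt_pow_right₀ (by omega) (by omega)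
      rcases mul_eq_zero.1 h4 with h6 | h6 <;> linarith
  intro j hj hc
  have h4 := cc_succ f j x h
  rw [if_pos hc, h3 j (by omega), h3 (j + 1) (by omega)] at h4
  unfold D
  omega

end DigSeq

/-! ### Residues modulo `p ^ f - 1` and cut variables -/

/-- The base-`p` number whose digits are the cyclic sequence `c` read from `h` on. -/
def cyc {f : ℕ} (p : ℕ) (c : ZMod f → ℤ) (h : ZMod f) : ℤ :=
  ∑ s ∈ Finset.range f, (p : ℤ) ^ (f - 1 - s) * c (h + (s : ZMod f))

section Cyc

variable {f : ℕ} [NeZero f] {p : ℕ}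

lemma cyc_succ (c : ZMod f → ℤ) (h : ZMod f) :
    cyc p c (h + 1) = p * cyc p c h - ((p : ℤ) ^ f - 1) * c h := by
  obtain ⟨g, hg⟩ : ∃ g, f = g + 1 := ⟨f - 1, by have := NeZero.ne f; omega⟩
  unfold cyc
  have e1 : ∑ s ∈ Finset.range f, (p : ℤ) ^ (f - 1 - s) * c (h + 1 + (s : ZMod f)) =
      ∑ s ∈ Finset.range g, (p : ℤ) ^ (g - s) * c (h + 1 + (s : ZMod f)) + c h := by
    have hz : h + 1 + (g : ZMod f) = h := by
      have : ((g + 1 : ℕ) : ZMod f) = 0 := by rw [← hg]; simp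
      push_cast at this
      linear_combination this
    have e3 : Finset.range f = Finset.range (g + 1) := by rw [hg]
    rw [e3, Finset.sum_range_succ, hz, show f - 1 - g = 0 by omega, show f - 1 = g by omega]
    simp
  have e2 : ∑ s ∈ Finset.range f, (p : ℤ) ^ (f - 1 - s) * c (h + (s : ZMod f)) =
      ∑ s ∈ Finset.range g, (p : ℤ) ^ (g - (s + 1)) * c (h + 1 + (s : ZMod f)) +
        (p : ℤ) ^ g * c h := by
    have e3 : Finset.range f = Finset.range (g + 1) := by rw [hg]
    rw [e3, Finset.sum_range_succ', show f - 1 = g by omega]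
    simp only [Nat.cast_zero, add_zero, Nat.sub_zero, Nat.cast_add, Nat.cast_one]
    congr 1
    apply Finset.sum_congr rfl
    intro s _
    rw [show h + ((s : ZMod f) + 1) = h + 1 + s by ring]
  rw [e1, e2, mul_add, Finset.mul_sum]
  have e4 : ∀ s ∈ Finset.range g, (p : ℤ) * ((p : ℤ) ^ (g - (s + 1)) * c (h + 1 + (s : ZMod f))) =
      (p : ℤ) ^ (g - s) * c (h + 1 + (s : ZMod f)) := by
    intro s hs
    rw [Finset.mem_range] at hs
    rw [show g - s = g - (s + 1) + 1 by omega, pow_succ]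
    ring
  rw [Finset.sum_congr rfl e4]
  have e5 : (p : ℤ) ^ f = p ^ g * p := by rw [← pow_succ, hg]
  rw [e5]
  ring

lemma cyc_const (h : ZMod f) : cyc p (fun _ => (p : ℤ) - 1) h = (p : ℤ) ^ f - 1 := by
  unfold cyc
  rw [← Finset.sum_mul, Finset.sum_range_reflect (fun s => (p : ℤ) ^ s), geom_sum_mul]

lemma cyc_mono {c c' : ZMod f → ℤ} (hc : ∀ h, c h ≤ c' h) (h : ZMod f) :
    cyc p c h ≤ cyc p c' h := by
  unfold cyc
  gcongr
  exact hc _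

lemma cyc_zero (h : ZMod f) : cyc p (0 : ZMod f → ℤ) h = 0 := by simp [cyc]

lemma cyc_nonneg {c : ZMod f → ℤ} (hc : ∀ h, 0 ≤ c h) (h : ZMod f) : 0 ≤ cyc p c h := by
  have := cyc_mono (p := p) (c := 0) hc h
  rwa [cyc_zero] at this

lemma cyc_pos (hp : 2 ≤ p) {c : ZMod f → ℤ} (hc : ∀ h, 0 ≤ c h) {a : ZMod f} (ha : 0 < c a)
    (h : ZMod f) : 0 < cyc p c h := by
  obtain ⟨s, hs, rfl⟩ := Sys.exists_base h a
  refine Finset.sum_pos' ?_ ⟨s, by simpa using hs, ?_⟩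
  · intro i _
    have := hc (h + (i : ZMod f))
    positivity
  · have : (0 : ℤ) < p := by omega
    positivity

lemma cyc_of_cut (c β τ : ZMod f → ℤ) (hc : ∀ h, c h = p * τ h + β h - τ (h + 1)) (h : ZMod f) :
    cyc p c h = cyc p β h + ((p : ℤ) ^ f - 1) * τ h := by
  have h1 : cyc p c h = cyc p β h + (p * cyc p τ h - cyc p τ (h + 1)) := by
    unfold cyc
    rw [Finset.mul_sum, ← Finset.sum_sub_distrib, ← Finset.sum_add_distrib]
    apply Finset.sum_congr rfl
    intro s _
    rw [hc, show h + (s : ZMod f) + 1 = h + 1 + s by ring]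
    ring
  rw [h1, cyc_succ]
  ring

/-- Cut variables exist for counts with the right residue, and are nonnegative when the cyclic
numbers of the counts are not too small. -/
lemma exists_cut (hp : 2 ≤ p) (c β : ZMod f → ℤ) (a : ZMod f)
    (hdvd : ((p : ℤ) ^ f - 1) ∣ cyc p c a - cyc p β a)
    (hlt : ∀ h, cyc p β h - cyc p c h < (p : ℤ) ^ f - 1) :
    ∃ τ : ZMod f → ℤ, (∀ h, 0 ≤ τ h) ∧ ∀ h, c h = p * τ h + β h - τ (h + 1) := by
  have hQ : (0 : ℤ) < (p : ℤ) ^ f - 1 := by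
    rw [sub_pos]
    exact one_lt_pow₀ (by omega) (NeZero.ne f)
  have hall : ∀ h, ((p : ℤ) ^ f - 1) ∣ cyc p c h - cyc p β h := by
    intro h
    obtain ⟨s, -, rfl⟩ := Sys.exists_base a h
    induction s with
    | zero => simpa using hdvd
    | succ s ih =>
      push_cast
      rw [← add_assoc, cyc_succ, cyc_succ]
      have : (p : ℤ) * cyc p c (a + s) - (↑p ^ f - 1) * c (a + s) -
          (p * cyc p β (a + s) - (↑p ^ f - 1) * β (a + s)) =
          p * (cyc p c (a + s) - cyc p β (a + s)) - (↑p ^ f - 1) * (c (a + s) - β (a + s)) := by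
        ring
      rw [this]
      exact dvd_sub (ih.mul_left _) (dvd_mul_right _ _)
  choose τ hτ using hall
  refine ⟨τ, ?_, ?_⟩
  · intro h
    have h1 := hlt h
    have h2 := hτ h
    by_contra hcon
    push Not at hcon
    nlinarith
  · intro h
    have h1 := hτ (h + 1)
    rw [cyc_succ, cyc_succ] at h1
    apply mul_left_cancel₀ hQ.ne'
    linear_combination (-1 : ℤ) * h1 + p * hτ h

lemma cyc_one (c : ZMod f → ℤ) : cyc p c 1 = ∑ h, (p : ℤ) ^ (-h).val * c h := by
  rw [Sys.sum_base 1]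
  unfold cyc
  apply Finset.sum_congr rfl
  intro s hs
  rw [Finset.mem_range] at hs
  congr 2
  have : -(1 + (s : ZMod f)) = ((f - 1 - s : ℕ) : ZMod f) := by
    rw [Nat.sub_sub, Nat.cast_sub (by omega)]
    simp
  rw [this, ZMod.val_natCast, Nat.mod_eq_of_lt (by omega)]

lemma pow_mod_dvd (j : ℕ) : ((p : ℤ) ^ f - 1) ∣ (p : ℤ) ^ j - (p : ℤ) ^ (j % f) := by
  have h1 : ((p : ℤ) ^ f - 1) ∣ ((p : ℤ) ^ f) ^ (j / f) - 1 ^ (j / f) := sub_dvd_pow_sub_pow _ _ _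
  have h2 : (p : ℤ) ^ j = (p : ℤ) ^ (j % f) * ((p : ℤ) ^ f) ^ (j / f) := by
    rw [← pow_mul, ← pow_add, Nat.mod_add_div]
  rw [h2]
  rw [one_pow] at h1
  have : (p : ℤ) ^ (j % f) * ((p : ℤ) ^ f) ^ (j / f) - (p : ℤ) ^ (j % f) =
    (p : ℤ) ^ (j % f) * (((p : ℤ) ^ f) ^ (j / f) - 1) := by ring
  rw [this]
  exact h1.mul_left _

/-- Modulo `p ^ f - 1`, a number is determined by its class counts. -/
lemma residue (K : ℕ) (x : ℕ → ℤ) : ((p : ℤ) ^ f - 1) ∣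
    ∑ j ∈ Finset.range K, x j * (p : ℤ) ^ j - cyc p (cc f K x) 1 := by
  have h1 : cyc p (cc f K x) 1 = ∑ j ∈ Finset.range K, x j * (p : ℤ) ^ (j % f) := by
    rw [cyc_one]
    unfold cc
    simp only [Finset.mul_sum]
    rw [Finset.sum_comm]
    apply Finset.sum_congr rfl
    intro j _
    simp only [mul_ite, mul_zero, Finset.sum_ite_eq, Finset.mem_univ, if_true]
    simp only [cl, neg_neg, ZMod.val_natCast]
    ring
  rw [h1, ← Finset.sum_sub_distrib]
  apply Finset.dvd_sum
  intro j _
  rw [← mul_sub]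
  exact (pow_mod_dvd j).mul_left _

end Cyc

/-- The `j`-th base-`p` digit. -/
def dg (p n j : ℕ) : ℕ := n / p ^ j % p

lemma dg_lt {p : ℕ} (hp : 2 ≤ p) (n j : ℕ) : dg p n j < p := Nat.mod_lt _ (by omega)

lemma sum_dg (p n K : ℕ) : ∑ j ∈ Finset.range K, dg p n j * p ^ j = n % p ^ K := by
  induction K with
  | zero => simp [Nat.mod_one]
  | succ K ih =>
    rw [Finset.sum_range_succ, ih, Nat.mod_pow_succ, dg, mul_comm]

lemma sum_dg_of_lt {p n K : ℕ} (h : n < p ^ K) : ∑ j ∈ Finset.range K, dg p n j * p ^ j = n := by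
  rw [sum_dg, Nat.mod_eq_of_lt h]

lemma dg_sum {p : ℕ} (hp : 2 ≤ p) (i : ℕ) : ∀ (K : ℕ) (z : ℕ → ℕ), (∀ j < K, z j < p) →
    dg p (∑ j ∈ Finset.range K, z j * p ^ j) i = if i < K then z i else 0 := by
  induction i with
  | zero =>
    intro K z hz
    rcases K with _ | K
    · simp [dg]
    · rw [Finset.sum_range_succ']
      simp only [pow_succ, ← mul_assoc, ← Finset.sum_mul]
      have := hz 0 (by omega)
      simp [dg, Nat.mod_eq_of_lt this]
  | succ i ih =>
    intro K z hz
    rcases K with _ | K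
    · simp [dg]
    · have h1 := ih K (fun j => z (j + 1)) (fun j hj => hz (j + 1) (by omega))
      rw [Finset.sum_range_succ']
      simp only [pow_succ, ← mul_assoc, ← Finset.sum_mul]
      have h0 := hz 0 (by omega)
      unfold dg at *
      rw [pow_succ', ← Nat.div_div_eq_div_mul]
      simp only [pow_zero, mul_one, add_lt_add_iff_right]
      rw [Nat.add_div_of_dvd_right (dvd_mul_left _ _), Nat.mul_div_cancel _ (by omega),
        Nat.div_eq_of_lt h0, add_zero, h1]

lemma sum_dg_le (p n K : ℕ) : ∑ j ∈ Finset.range K, dg p n j * p ^ j ≤ n := by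
  rw [sum_dg]; exact Nat.mod_le _ _

/-- A sequence of offsets in class coordinates representing a given residue. -/
lemma exists_offset {f p : ℕ} [NeZero f] (hp : 2 ≤ p) (k : ℕ) : ∃ β : ZMod f → ℤ,
    (∀ h, 0 ≤ β h) ∧ (∀ h, cyc p β h < (p : ℤ) ^ f - 1) ∧
    ((p : ℤ) ^ f - 1) ∣ (k : ℤ) - cyc p β 1 := by
  have hQ0 : 1 < p ^ f := one_lt_pow₀ (by omega) (NeZero.ne f)
  set ρ := k % (p ^ f - 1) with hρ
  have hρlt : ρ < p ^ f - 1 := Nat.mod_lt _ (by omega)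
  have hQ : (0 : ℤ) < (p : ℤ) ^ f - 1 := by
    have : (1 : ℤ) < (p : ℤ) ^ f := by exact_mod_cast hQ0
    omega
  have hQc : ((p ^ f - 1 : ℕ) : ℤ) = (p : ℤ) ^ f - 1 := by
    rw [Nat.cast_sub hQ0.le]; simp
  have hres := residue (f := f) (p := p) f (fun j => (dg p ρ j : ℤ))
  have hsum : ∑ j ∈ Finset.range f, (dg p ρ j : ℤ) * (p : ℤ) ^ j = ρ := by
    exact_mod_cast sum_dg_of_lt (p := p) (n := ρ) (K := f) (by omega)
  rw [hsum] at hres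
  set β : ZMod f → ℤ := cc f f (fun j => (dg p ρ j : ℤ)) with hβ
  have hβ0 : ∀ h, 0 ≤ β h := by
    intro h
    apply Finset.sum_nonneg
    intro j _
    split_ifs <;> positivity
  have hβ1 : ∀ h, β h ≤ (p : ℤ) - 1 := by
    intro h
    have h1 := cc_window (f := f) (x := fun j => (dg p ρ j : ℤ)) (b := (p : ℤ) - 1) (by omega)
      (fun j => by have := dg_lt hp ρ j; omega) h 0
    rw [cc_zero, zero_add, zero_add] at h1
    exact h1
  refine ⟨β, hβ0, ?_, ?_⟩
  · intro h
    by_contra hcon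
    push Not at hcon
    have hall : ∀ s : ℕ, (p : ℤ) ^ f - 1 ≤ cyc p β (h + (s : ZMod f)) := by
      intro s
      induction s with
      | zero => simpa using hcon
      | succ s ih =>
        push_cast
        rw [← add_assoc, cyc_succ]
        have := hβ1 (h + s)
        nlinarith
    obtain ⟨s, -, hs⟩ := Sys.exists_base h (1 : ZMod f)
    have h1 := hall s
    rw [← hs] at h1
    have h2 := cyc_mono (p := p) hβ1 1
    rw [cyc_const] at h2
    have h3 : cyc p β 1 = (p : ℤ) ^ f - 1 := le_antisymm h2 h1
    rw [h3, dvd_sub_self_right, ← hQc] at hres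
    have h4 : ρ = 0 := Nat.eq_zero_of_dvd_of_lt (by exact_mod_cast hres) hρlt
    have h5 : β = 0 := by
      funext h
      simp [hβ, h4, cc, dg]
    rw [h5, cyc_zero] at h3
    omega
  · have h1 : ((p : ℤ) ^ f - 1) ∣ (k : ℤ) - ρ := by
      rw [← hQc]
      have := (Nat.modEq_iff_dvd.1 (Nat.mod_modEq k (p ^ f - 1)))
      exact this
    have := dvd_add h1 hres
    rwa [sub_add_sub_cancel] at this

/-! ### Tuples without carrying and the optimisation problem -/

/-- The base-`p` digits of `k` below position `k` (which are all of them), continued by `p - 1`;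
the continuation only serves to have an unlimited supply of items. -/
def digSeqOf {p : ℕ} (hp : 2 ≤ p) (k : ℕ) : DigSeq p where
  hp := hp
  dig j := if j < k then (dg p k j : ℤ) else p - 1
  nonneg j := by split_ifs <;> omega
  le j := by
    have := dg_lt hp k j
    split_ifs <;> omega
  K := k
  tail j hj := by rw [if_neg (by omega)]

/-- The optimisation problem attached to the digits of `k` and to an offset `β₀` of the first
bin. -/
noncomputable def sysOf {p : ℕ} (f : ℕ) [NeZero f] (hp : 2 ≤ p) (k : ℕ) (β₀ : ZMod f → ℤ)
    (hβ : ∀ h, 0 ≤ β₀ h) : Sys f where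
  p := p
  q := (p ^ f : ℕ)
  hp := by exact_mod_cast hp
  hq := by
    have : 1 < p ^ f := one_lt_pow₀ (by omega) (NeZero.ne f)
    exact_mod_cast this
  β i h := if i = 0 then β₀ h else p - 1
  β_zero h := by simpa using hβ h
  β_pos i h hi := by rw [if_neg (by omega)]
  φ := (digSeqOf hp k).phi
  cls := (digSeqOf hp k).oneClass
  sep := (digSeqOf hp k).sep
  small := (digSeqOf hp k).small

/-- The defining conditions of `Wset`, for a tuple given as a function on `ℕ`. -/
structure WSeq (p q d k : ℕ) (m : ℕ → ℕ) : Prop where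
  sum_eq : ∑ i ∈ Finset.range (d + 1), m i = k
  dg_eq : ∀ j, ∑ i ∈ Finset.range (d + 1), dg p (m i) j = dg p k j
  mid_pos : ∀ i, 1 ≤ i → i < d → 0 < m i
  mid_dvd : ∀ i, 1 ≤ i → i < d → (q - 1) ∣ m i
  last_dvd : (q - 1) ∣ m d

/-- The weight as the sum of the partial sums of the tuple. -/
def wtSeq (d : ℕ) (m : ℕ → ℕ) : ℕ := ∑ l ∈ Finset.range d, ∑ i ∈ Finset.range (l + 1), m i

lemma mem_Wset_iff {p q d k : ℕ} (hp : 2 ≤ p) (m : ℕ → ℕ) :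
    (fun i : Fin (d + 1) => m i) ∈ Wset p q d k ↔ WSeq p q d k m := by
  unfold Wset NoCarry
  simp only [Set.mem_ofPred_eq, Nat.getD_digits _ _ hp, Fin.val_last]
  rw [Fin.sum_univ_eq_sum_range (fun i => m i)]
  have h1 : ∀ j, ∑ i : Fin (d + 1), m i / p ^ j % p = ∑ i ∈ Finset.range (d + 1), dg p (m i) j :=
    fun j => Fin.sum_univ_eq_sum_range (fun i => m i / p ^ j % p) (d + 1)
  simp only [h1]
  constructor
  · rintro ⟨⟨a, b⟩, c, e⟩
    exact ⟨a, b, fun i hi hid => (c ⟨i, by omega⟩ hi hid).1,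
      fun i hi hid => (c ⟨i, by omega⟩ hi hid).2, e⟩
  · rintro ⟨a, b, c, c', e⟩
    exact ⟨⟨a, b⟩, fun i hi hid => ⟨c i hi hid, c' i hi hid⟩, e⟩

lemma wt_eq_wtSeq {d : ℕ} (m : ℕ → ℕ) : wt (fun i : Fin (d + 1) => m i) = wtSeq d m := by
  unfold wt wtSeq
  rw [Fin.sum_univ_eq_sum_range (fun i => (d - i) * m i)]
  induction d with
  | zero => simp
  | succ d ih =>
    rw [Finset.sum_range_succ (fun l => ∑ i ∈ Finset.range (l + 1), m i), ← ih,
      Finset.sum_range_succ (fun i => (d + 1 - i) * m i), ← Finset.sum_add_distrib]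
    simp only [Nat.sub_self, zero_mul, add_zero]
    apply Finset.sum_congr rfl
    intro i hi
    rw [Finset.mem_range] at hi
    rw [show d + 1 - i = d - i + 1 by omega]
    ring

section Translate

variable {p f : ℕ} [NeZero f] (hp : 2 ≤ p) {k d : ℕ} {β₀ : ZMod f → ℤ} (hβ : ∀ h, 0 ≤ β₀ h)

/-- Splitting a weighted digit sum by classes. -/
lemma sum_class (K : ℕ) (x : ℕ → ℤ) : ∑ j ∈ Finset.range K, x j * (p : ℤ) ^ j =
    ∑ h : ZMod f, ∑ j ∈ Finset.range K, if cl f j = h then x j * (p : ℤ) ^ j else 0 := by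
  rw [Finset.sum_comm]
  simp

lemma cc_finset_sum (K l : ℕ) (x : ℕ → ℕ → ℤ) (h : ZMod f) :
    cc f K (fun j => ∑ i ∈ Finset.range l, x i j) h =
    ∑ i ∈ Finset.range l, cc f K (x i) h := by
  unfold cc
  rw [Finset.sum_comm]
  apply Finset.sum_congr rfl
  intro j _
  split_ifs <;> simp

lemma WSeq.le {q : ℕ} {m : ℕ → ℕ} (H : WSeq p q d k m) {i : ℕ} (hi : i ≤ d) : m i ≤ k := by
  rw [← H.sum_eq]
  exact Finset.single_le_sum (f := m) (fun _ _ => Nat.zero_le _)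
    (by rw [Finset.mem_range]; omega)

lemma WSeq.eq_sum (hp : 2 ≤ p) {q : ℕ} {m : ℕ → ℕ} (H : WSeq p q d k m) {i : ℕ} (hi : i ≤ d) :
    (m i : ℤ) = ∑ j ∈ Finset.range k, (dg p (m i) j : ℤ) * (p : ℤ) ^ j := by
  have := sum_dg_of_lt (p := p) (n := m i) (K := k)
    ((H.le hi).trans_lt (Nat.lt_pow_self (by omega)))
  exact_mod_cast this.symm

/-- A tuple in `W` gives a feasible configuration with the same class counts. -/
lemma WSeq.exists_feas (hβlt : ∀ h, cyc p β₀ h < (p : ℤ) ^ f - 1)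
    (hβk : ((p : ℤ) ^ f - 1) ∣ (k : ℤ) - cyc p β₀ 1) (hd : 1 ≤ d) {m : ℕ → ℕ} (H : WSeq p (p ^ f) d k m) :
    ∃ τ, (sysOf f hp k β₀ hβ).Feas d (fun h => (digSeqOf hp k).C f h k) τ ∧
      ∀ l ≤ d, ∀ h, (sysOf f hp k β₀ hβ).tot τ l h =
        cc f k (fun j => ∑ i ∈ Finset.range l, (dg p (m i) j : ℤ)) h := by
  have hQ0 : 1 < p ^ f := one_lt_pow₀ (by omega) (NeZero.ne f)
  have hQc : ((p ^ f - 1 : ℕ) : ℤ) = (p : ℤ) ^ f - 1 := by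
    rw [Nat.cast_sub hQ0.le]; simp
  have hdvd : ∀ i, 1 ≤ i → i ≤ d → ((p : ℤ) ^ f - 1) ∣ (m i : ℤ) := by
    intro i hi hid
    rw [← hQc]
    rcases hid.eq_or_lt with rfl | h1
    · exact_mod_cast H.last_dvd
    · exact_mod_cast H.mid_dvd i hi h1
  have hdvd0 : ((p : ℤ) ^ f - 1) ∣ (k : ℤ) - m 0 := by
    have h1 := H.sum_eq
    rw [Finset.sum_range_succ'] at h1
    have h2 : (k : ℤ) - m 0 = ∑ i ∈ Finset.range d, (m (i + 1) : ℤ) := by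
      rw [← h1]; push_cast; ring
    rw [h2]
    apply Finset.dvd_sum
    intro i hi
    rw [Finset.mem_range] at hi
    exact hdvd (i + 1) (by omega) (by omega)
  have hc0 : ∀ i, ∀ h, 0 ≤ cc f k (fun j => (dg p (m i) j : ℤ)) h := by
    intro i h
    apply Finset.sum_nonneg
    intro j _
    split_ifs <;> positivity
  have hex : ∀ i, ∃ t : ZMod f → ℤ, i < d → (∀ h, 0 ≤ t h) ∧
      ∀ h, cc f k (fun j => (dg p (m i) j : ℤ)) h =
        p * t h + (if i = 0 then β₀ h else (p : ℤ) - 1) - t (h + 1) := by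
    intro i
    by_cases hid : i < d
    swap
    · exact ⟨0, fun h => absurd h hid⟩
    have hres := residue (f := f) (p := p) k (fun j => (dg p (m i) j : ℤ))
    rw [← H.eq_sum hp hid.le] at hres
    rcases Nat.eq_zero_or_pos i with rfl | hi
    · obtain ⟨t, ht, ht'⟩ := exists_cut hp (cc f k (fun j => (dg p (m 0) j : ℤ))) β₀ 1 (by
          obtain ⟨a, ha⟩ := hβk
          obtain ⟨b, hb⟩ := hdvd0
          obtain ⟨c, hc⟩ := hres
          exact ⟨a - b - c, by linear_combination ha - hb - hc⟩) (fun h => by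
            have := cyc_nonneg (p := p) (hc0 0) h
            have := hβlt h
            linarith)
      exact ⟨t, fun _ => ⟨ht, by simpa using ht'⟩⟩
    · have hpos : ∃ a, 0 < cc f k (fun j => (dg p (m i) j : ℤ)) a := by
        by_contra hcon
        push Not at hcon
        have h1 : cc f k (fun j => (dg p (m i) j : ℤ)) = 0 :=
          funext fun a => le_antisymm (hcon a) (hc0 i a)
        have h2 := H.eq_sum hp hid.le
        rw [sum_class (f := f)] at h2
        have h3 := H.mid_pos i hi hid
        rw [Finset.sum_eq_zero] at h2
        · omega
        intro a _
        have h4 : cc f k (fun j => (dg p (m i) j : ℤ)) a = 0 := congrFun h1 a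
        unfold cc at h4
        rw [Finset.sum_eq_zero_iff_of_nonneg (fun j _ => by split_ifs <;> positivity)] at h4
        apply Finset.sum_eq_zero
        intro j hj
        have h5 := h4 j hj
        split_ifs at h5 ⊢
        · simp only at h5
          rw [h5, zero_mul]
        · rfl
      obtain ⟨a, ha⟩ := hpos
      obtain ⟨t, ht, ht'⟩ := exists_cut hp (cc f k (fun j => (dg p (m i) j : ℤ)))
        (fun _ => (p : ℤ) - 1) 1 (by
          rw [cyc_const]
          refine dvd_sub ?_ dvd_rfl
          have := dvd_sub (hdvd i hi hid.le) hres
          rwa [sub_sub_cancel] at this) (fun h => by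
            rw [cyc_const]
            have := cyc_pos hp (hc0 i) ha h
            linarith)
      refine ⟨t, fun _ => ⟨ht, ?_⟩⟩
      simpa [show i ≠ 0 by omega] using ht'
  choose τ hτ using hex
  have hcnt : ∀ i < d, ∀ h, (sysOf f hp k β₀ hβ).cnt τ i h =
      cc f k (fun j => (dg p (m i) j : ℤ)) h := fun i hi h => ((hτ i hi).2 h).symm
  have htot : ∀ l ≤ d, ∀ h, (sysOf f hp k β₀ hβ).tot τ l h =
        cc f k (fun j => ∑ i ∈ Finset.range l, (dg p (m i) j : ℤ)) h := by
    intro l hl h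
    rw [cc_finset_sum k l (fun i j => (dg p (m i) j : ℤ))]
    exact Finset.sum_congr rfl fun i hi => hcnt i (by rw [Finset.mem_range] at hi; omega) h
  refine ⟨τ, ⟨fun i hi => (hτ i hi).1, ?_, ?_⟩, htot⟩
  · intro i hi h
    rw [hcnt i hi]
    exact hc0 i h
  · intro h
    rw [htot d le_rfl]
    apply Finset.sum_le_sum
    intro j hj
    rw [Finset.mem_range] at hj
    split_ifs
    · have h1 := H.dg_eq j
      rw [Finset.sum_range_succ] at h1
      simp only [digSeqOf, if_pos hj]
      rw [← h1]
      push_cast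
      have : (0 : ℤ) ≤ dg p (m d) j := by positivity
      linarith
    · exact le_rfl

/-- The weight of a tuple is at least the cost of its configuration; in case of equality the tuple
is determined by the configuration. -/
lemma WSeq.cost_le {m : ℕ → ℕ} (H : WSeq p (p ^ f) d k m) {τ : ℕ → ZMod f → ℤ}
    (htot : ∀ l ≤ d, ∀ h, (sysOf f hp k β₀ hβ).tot τ l h =
        cc f k (fun j => ∑ i ∈ Finset.range l, (dg p (m i) j : ℤ)) h) :
    (sysOf f hp k β₀ hβ).cost d τ ≤ (wtSeq d m : ℤ) ∧
    ((sysOf f hp k β₀ hβ).cost d τ = (wtSeq d m : ℤ) → ∀ l ≤ d, ∀ j < k,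
      ∑ i ∈ Finset.range l, (dg p (m i) j : ℤ) =
        (digSeqOf hp k).D (cl f j) j ((sysOf f hp k β₀ hβ).tot τ l (cl f j))) := by
  set A := digSeqOf hp k with hA
  have hx : ∀ l ≤ d, ∀ j < k, ∑ i ∈ Finset.range l, (dg p (m i) j : ℤ) ≤ A.dig j := by
    intro l hl j hj
    have h1 : A.dig j = dg p k j := by simp only [hA, digSeqOf, if_pos hj]
    rw [h1, ← H.dg_eq j]
    push_cast
    apply Finset.sum_le_sum_of_subset_of_nonneg (Finset.range_mono (by omega))
    intros
    positivity
  have key := fun (l : ℕ) (hl : l ≤ d) (h : ZMod f) => A.phi_le (h := h) (hx l hl)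
    (fun j _ => Finset.sum_nonneg fun i _ => by positivity)
  have hw : (wtSeq d m : ℤ) = ∑ l ∈ Finset.range d, ∑ h : ZMod f, ∑ j ∈ Finset.range k,
      if cl f j = h then (∑ i ∈ Finset.range (l + 1), (dg p (m i) j : ℤ)) * (p : ℤ) ^ j else 0 := by
    unfold wtSeq
    push_cast
    apply Finset.sum_congr rfl
    intro l hl
    rw [Finset.mem_range] at hl
    rw [← sum_class k (fun j => ∑ i ∈ Finset.range (l + 1), (dg p (m i) j : ℤ))]
    simp only [Finset.sum_mul]
    rw [Finset.sum_comm]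
    apply Finset.sum_congr rfl
    intro i hi
    rw [Finset.mem_range] at hi
    exact H.eq_sum hp (by omega)
  have hcost : (sysOf f hp k β₀ hβ).cost d τ = ∑ l ∈ Finset.range d, ∑ h : ZMod f,
      A.phi h (cc f k (fun j => ∑ i ∈ Finset.range (l + 1), (dg p (m i) j : ℤ)) h) := by
    unfold Sys.cost
    apply Finset.sum_congr rfl
    intro l hl
    rw [Finset.mem_range] at hl
    apply Finset.sum_congr rfl
    intro h _
    rw [htot (l + 1) (by omega)]
    rfl
  rw [hw, hcost]
  have hle : ∀ l ∈ Finset.range d, ∑ h : ZMod f,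
      A.phi h (cc f k (fun j => ∑ i ∈ Finset.range (l + 1), (dg p (m i) j : ℤ)) h) ≤
      ∑ h : ZMod f, ∑ j ∈ Finset.range k,
      if cl f j = h then (∑ i ∈ Finset.range (l + 1), (dg p (m i) j : ℤ)) * (p : ℤ) ^ j else 0 := by
    intro l hl
    rw [Finset.mem_range] at hl
    exact Finset.sum_le_sum fun h _ => (key (l + 1) (by omega) h).1
  refine ⟨Finset.sum_le_sum hle, ?_⟩
  intro he l hl j hj
  rcases l with _ | l
  · rw [htot 0 (by omega)]
    simp [cc, DigSeq.D_zero]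
  · have h1 := (Finset.sum_eq_sum_iff_of_le hle).1 he l (by rw [Finset.mem_range]; omega)
    have h2 := (Finset.sum_eq_sum_iff_of_le (fun h _ => (key (l + 1) hl h).1)).1 h1 (cl f j)
      (Finset.mem_univ _)
    rw [htot (l + 1) hl]
    exact (key (l + 1) hl (cl f j)).2 h2 j hj rfl

/-- A feasible configuration is realised by a tuple in `W` whose weight is the cost. -/
lemma exists_WSeq (hβk : ((p : ℤ) ^ f - 1) ∣ (k : ℤ) - cyc p β₀ 1) (hd : 1 ≤ d) {τ : ℕ → ZMod f → ℤ}
    (H : (sysOf f hp k β₀ hβ).Feas d (fun h => (digSeqOf hp k).C f h k) τ) :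
    ∃ m, WSeq p (p ^ f) d k m ∧ (wtSeq d m : ℤ) = (sysOf f hp k β₀ hβ).cost d τ := by
  have hQ0 : 1 < p ^ f := one_lt_pow₀ (by omega) (NeZero.ne f)
  have hQc : ((p ^ f - 1 : ℕ) : ℤ) = (p : ℤ) ^ f - 1 := by
    rw [Nat.cast_sub hQ0.le]; simp
  set A := digSeqOf hp k with hA
  set S := sysOf f hp k β₀ hβ with hS
  let y : ℕ → ℕ → ℤ := fun l j => A.D (cl f j) j (S.tot τ l (cl f j))
  have hdig : ∀ j < k, A.dig j = dg p k j := fun j hj => by simp only [hA, digSeqOf, if_pos hj]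
  have hy0 : ∀ j, y 0 j = 0 := fun j => by simp [y, Sys.tot, DigSeq.D_zero]
  have hymono : ∀ i < d, ∀ j, y i j ≤ y (i + 1) j := fun i hi j =>
    A.D_mono _ _ (H.tot_mono (by omega) (by omega) _)
  have hyle : ∀ l, ∀ j < k, y l j ≤ dg p k j := fun l j hj => by
    rw [← hdig j hj]; exact A.D_le _ _ _
  have hynn : ∀ l j, 0 ≤ y l j := fun l j => A.D_nonneg _ _ _
  -- the class counts of the digits `y l` are the totals
  have hcc : ∀ l ≤ d, ∀ h, cc f k (y l) h = S.tot τ l h := by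
    intro l hl h
    have h1 : cc f k (y l) h = ∑ j ∈ Finset.range k, A.D h j (S.tot τ l h) := by
      apply Finset.sum_congr rfl
      intro j _
      split_ifs with hc
      · subst hc; rfl
      · rw [A.D_of_ne hc]
    rw [h1, A.sum_D h k (H.tot_nonneg hl h), min_eq_right]
    exact (H.tot_mono hl le_rfl h).trans (H.tot_le h)
  have hphi : ∀ l ≤ d, ∑ j ∈ Finset.range k, y l j * (p : ℤ) ^ j =
      ∑ h, A.phi h (S.tot τ l h) := by
    intro l hl
    rw [sum_class (f := f)]
    apply Finset.sum_congr rfl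
    intro h _
    have h0 := H.tot_nonneg hl h
    have h1 := A.sum_D_mul h k (S.tot τ l h).toNat (by
      rw [Int.toNat_of_nonneg h0]
      exact (H.tot_mono hl le_rfl h).trans (H.tot_le h))
    rw [Int.toNat_of_nonneg h0] at h1
    rw [← h1]
    apply Finset.sum_congr rfl
    intro j _
    split_ifs with hc
    · subst hc; rfl
    · rw [A.D_of_ne hc, zero_mul]
  let z : ℕ → ℕ → ℕ := fun i j =>
    if i < d then (y (i + 1) j - y i j).toNat else ((dg p k j : ℤ) - y d j).toNat
  have hz : ∀ i < d, ∀ j, (z i j : ℤ) = y (i + 1) j - y i j := by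
    intro i hi j
    have := hymono i hi j
    simp only [z, if_pos hi]
    omega
  have hzd : ∀ j < k, (z d j : ℤ) = dg p k j - y d j := by
    intro j hj
    have := hyle d j hj
    simp only [z, lt_irrefl, if_false]
    omega
  have hsumz : ∀ l ≤ d, ∀ j, ∑ i ∈ Finset.range l, (z i j : ℤ) = y l j := by
    intro l hl j
    induction l with
    | zero => simp [hy0]
    | succ l ih => rw [Finset.sum_range_succ, ih (by omega), hz l (by omega)]; ring
  have hsumzd : ∀ j < k, ∑ i ∈ Finset.range (d + 1), z i j = dg p k j := by
    intro j hj
    have : (∑ i ∈ Finset.range (d + 1), (z i j : ℤ)) = dg p k j := by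
      rw [Finset.sum_range_succ, hsumz d le_rfl, hzd j hj]; ring
    exact_mod_cast this
  have hzlt : ∀ i ≤ d, ∀ j < k, z i j < p := by
    intro i hi j hj
    refine lt_of_le_of_lt ?_ (dg_lt hp k j)
    rw [← hsumzd j hj]
    exact Finset.single_le_sum (f := fun i => z i j) (fun _ _ => Nat.zero_le _)
      (by rw [Finset.mem_range]; omega)
  let m : ℕ → ℕ := fun i => ∑ j ∈ Finset.range k, z i j * p ^ j
  have hkk : k < p ^ k := Nat.lt_pow_self (by omega)
  have hmz : ∀ i, (m i : ℤ) = ∑ j ∈ Finset.range k, (z i j : ℤ) * (p : ℤ) ^ j := fun i => by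
    simp [m]
  have hccz : ∀ i < d, ∀ h, cc f k (fun j => (z i j : ℤ)) h = S.cnt τ i h := by
    intro i hi h
    have h1 : cc f k (fun j => (z i j : ℤ)) h = cc f k (y (i + 1)) h - cc f k (y i) h := by
      unfold cc
      rw [← Finset.sum_sub_distrib]
      apply Finset.sum_congr rfl
      intro j _
      split_ifs
      · exact hz i hi j
      · simp
    rw [h1, hcc _ (by omega), hcc _ (by omega)]
    unfold Sys.tot
    rw [Finset.sum_range_succ]
    ring
  have hcyc : ∀ i < d, cyc p (cc f k (fun j => (z i j : ℤ))) 1 =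
      cyc p (S.β i) 1 + ((p : ℤ) ^ f - 1) * τ i 1 := fun i hi =>
    cyc_of_cut _ _ (τ i) (hccz i hi) 1
  have hmid : ∀ i, 1 ≤ i → i < d → cyc p (cc f k (fun j => (z i j : ℤ))) 1 =
      ((p : ℤ) ^ f - 1) * (τ i 1 + 1) := by
    intro i hi hid
    have : S.β i = fun _ => (p : ℤ) - 1 := funext fun h => S.β_pos i h hi
    rw [hcyc i hid, this, cyc_const]
    ring
  have hmiddvd : ∀ i, 1 ≤ i → i < d → (p ^ f - 1) ∣ m i := by
    intro i hi hid
    have hres := residue (f := f) (p := p) k (fun j => (z i j : ℤ))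
    rw [← hmz, hmid i hi hid] at hres
    have := (dvd_add_right hres).2 (dvd_mul_right ((p : ℤ) ^ f - 1) (τ i 1 + 1))
    rw [sub_add_cancel, ← hQc] at this
    exact_mod_cast this
  have hsum : ∑ i ∈ Finset.range (d + 1), m i = k := by
    simp only [m]
    rw [Finset.sum_comm]
    simp only [← Finset.sum_mul]
    refine Eq.trans (Finset.sum_congr rfl ?_) (sum_dg_of_lt hkk)
    intro j hj
    rw [Finset.mem_range] at hj
    rw [hsumzd j hj]
  refine ⟨m, ⟨hsum, ?_, ?_, hmiddvd, ?_⟩, ?_⟩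
  · intro j
    have h1 : ∀ i ∈ Finset.range (d + 1), dg p (m i) j = if j < k then z i j else 0 := by
      intro i hi
      rw [Finset.mem_range] at hi
      exact dg_sum hp j k (z i) (hzlt i (by omega))
    rw [Finset.sum_congr rfl h1]
    split_ifs with hj
    · exact hsumzd j hj
    · have : k < p ^ j := Nat.lt_of_lt_of_le hkk (Nat.pow_le_pow_right (by omega) (by omega))
      simp [dg, Nat.div_eq_of_lt this]
  · intro i hi hid
    by_contra hcon
    have h0 : m i = 0 := by omega
    have h1 : ∀ j ∈ Finset.range k, z i j = 0 := by
      intro j hj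
      have := (Finset.sum_eq_zero_iff.1 h0) j hj
      rcases Nat.mul_eq_zero.1 this with h2 | h2
      · exact h2
      · have : 0 < p ^ j := pow_pos (by omega) _
        omega
    have h2 : cc f k (fun j => (z i j : ℤ)) = 0 := by
      funext h
      apply Finset.sum_eq_zero
      intro j hj
      simp [h1 j hj]
    have h3 := hmid i hi hid
    rw [h2, cyc_zero] at h3
    have h4 := H.τ_nonneg i hid 1
    have h5 : (0 : ℤ) < (p : ℤ) ^ f - 1 := by rw [← hQc]; exact_mod_cast (by omega)
    nlinarith
  · -- the last entry has the right residue since all other entries and the total do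
    have h0 : ((p : ℤ) ^ f - 1) ∣ (k : ℤ) - m 0 := by
      have hres := residue (f := f) (p := p) k (fun j => (z 0 j : ℤ))
      have hb : S.β 0 = β₀ := by funext h; simp [hS, sysOf]
      rw [← hmz, hcyc 0 (by omega), hb] at hres
      obtain ⟨a, ha⟩ := hβk
      obtain ⟨b, hb⟩ := hres
      exact ⟨a - b - τ 0 1, by linear_combination ha - hb⟩
    obtain ⟨e, he⟩ : ∃ e, d = e + 1 := ⟨d - 1, by omega⟩
    have h1 := hsum
    rw [Finset.sum_range_succ, he, Finset.sum_range_succ', ← he] at h1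
    have h2 : (m d : ℤ) = (k : ℤ) - m 0 - ∑ i ∈ Finset.range e, (m (i + 1) : ℤ) := by
      rw [← h1]; push_cast; ring
    have h3 : ((p : ℤ) ^ f - 1) ∣ (m d : ℤ) := by
      rw [h2]
      refine dvd_sub h0 (Finset.dvd_sum ?_)
      intro i hi
      rw [Finset.mem_range] at hi
      rw [← hQc]
      exact_mod_cast hmiddvd (i + 1) (by omega) (by omega)
    rw [← hQc] at h3
    exact_mod_cast h3
  · unfold wtSeq Sys.cost
    push_cast
    apply Finset.sum_congr rfl
    intro l hl
    rw [Finset.mem_range] at hl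
    simp only [hmz]
    rw [Finset.sum_comm]
    simp only [← Finset.sum_mul, hsumz (l + 1) (show l + 1 ≤ d by omega)]
    exact hphi (l + 1) (by omega)

end Translate

/-- Two tuples of minimal weight agree. -/
theorem WSeq.eq_of_min {p f : ℕ} (hf : 0 < f) (hp : 2 ≤ p) {k d : ℕ} (hd : 1 ≤ d) {m m' : ℕ → ℕ}
    (H : WSeq p (p ^ f) d k m) (H' : WSeq p (p ^ f) d k m')
    (hmin : ∀ n, WSeq p (p ^ f) d k n → wtSeq d m ≤ wtSeq d n)
    (hmin' : ∀ n, WSeq p (p ^ f) d k n → wtSeq d m' ≤ wtSeq d n) :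
    ∀ i ≤ d, m i = m' i := by
  have : NeZero f := ⟨by omega⟩
  obtain ⟨β₀, hβ, hβlt, hβk⟩ := exists_offset (f := f) hp k
  set S := sysOf f hp k β₀ hβ with hS
  set A := digSeqOf hp k with hA
  have key : ∀ n, WSeq p (p ^ f) d k n →
      (∀ n', WSeq p (p ^ f) d k n' → wtSeq d n ≤ wtSeq d n') →
      ∃ τ, S.Opt d (fun h => A.C f h k) τ ∧ ∀ l ≤ d, ∀ j < k,
        ∑ i ∈ Finset.range l, (dg p (n i) j : ℤ) = A.D (cl f j) j (S.tot τ l (cl f j)) := by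
    intro n hn hnmin
    obtain ⟨τ, hτ, htot⟩ := hn.exists_feas hp hβ hβlt hβk hd
    obtain ⟨h1, h2⟩ := hn.cost_le hp hβ htot
    have h3 : ∀ τ', S.Feas d (fun h => A.C f h k) τ' → (wtSeq d n : ℤ) ≤ S.cost d τ' := by
      intro τ' hτ'
      obtain ⟨n', hn', he⟩ := exists_WSeq hp hβ hβk hd hτ'
      rw [← he]
      exact_mod_cast hnmin n' hn'
    exact ⟨τ, ⟨hτ, fun τ' hτ' => h1.trans (h3 τ' hτ')⟩, h2 (le_antisymm h1 (h3 τ hτ))⟩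
  obtain ⟨τ, hO, hD⟩ := key m H hmin
  obtain ⟨τ', hO', hD'⟩ := key m' H' hmin'
  have hu := hO.unique hO'
  have hlt : ∀ i < d, m i = m' i := by
    intro i hi
    have h1 : ∀ j < k, (dg p (m i) j : ℤ) = dg p (m' i) j := by
      intro j hj
      have a1 := hD i hi.le j hj
      have a2 := hD (i + 1) hi j hj
      have b1 := hD' i hi.le j hj
      have b2 := hD' (i + 1) hi j hj
      rw [Finset.sum_range_succ, a1] at a2
      rw [Finset.sum_range_succ, b1] at b2
      rw [hu i hi.le, hu (i + 1) hi] at a2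
      linarith
    have h2 := H.eq_sum hp hi.le
    rw [Finset.sum_congr rfl (fun j hj => by rw [h1 j (by simpa using hj)]),
      ← H'.eq_sum hp hi.le] at h2
    exact_mod_cast h2
  intro i hi
  rcases hi.eq_or_lt with rfl | hi
  · have h1 := H.sum_eq
    have h2 := H'.sum_eq
    rw [Finset.sum_range_succ] at h1 h2
    have h3 : ∑ j ∈ Finset.range i, m j = ∑ j ∈ Finset.range i, m' j :=
      Finset.sum_congr rfl fun j hj => hlt j (by simpa using hj)
    omega
  · exact hlt i hi

/-- The weight has a unique minimiser on `W`, unless `W` is empty. -/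
theorem exists_unique_min {p f : ℕ} (hf : 0 < f) (hp : 2 ≤ p) {k d : ℕ} (hd : 1 ≤ d)
    (hW : (Wset p (p ^ f) d k).Nonempty) :
    ∃ M ∈ Wset p (p ^ f) d k, ∀ m ∈ Wset p (p ^ f) d k, m ≠ M → wt M < wt m := by
  have hext : ∀ m : Fin (d + 1) → ℕ, ∃ n : ℕ → ℕ, m = fun i : Fin (d + 1) => n i := by
    intro m
    refine ⟨fun i => if h : i < d + 1 then m ⟨i, h⟩ else 0, ?_⟩
    funext i
    simp only
    rw [dif_pos i.isLt]
  obtain ⟨M, hM, hmin⟩ := exists_minimalFor_of_wellFoundedLT (· ∈ Wset p (p ^ f) d k) wt hW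
  have hle : ∀ m ∈ Wset p (p ^ f) d k, wt M ≤ wt m := fun m hm => by
    by_contra hcon
    exact hcon (hmin hm (by omega))
  refine ⟨M, hM, ?_⟩
  intro m hm hne
  by_contra hcon
  apply hne
  obtain ⟨n, rfl⟩ := hext m
  obtain ⟨N, rfl⟩ := hext M
  have h1 := WSeq.eq_of_min hf hp hd ((mem_Wset_iff hp n).1 hm) ((mem_Wset_iff hp N).1 hM) (by
    intro n' hn'
    have := hle _ ((mem_Wset_iff hp n').2 hn')
    simp only [wt_eq_wtSeq] at *
    omega) (by
    intro n' hn'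
    have := hle _ ((mem_Wset_iff hp n').2 hn')
    simp only [wt_eq_wtSeq] at *
    omega)
  funext i
  exact h1 i (by omega)

/-! ### Kummer's theorem for multinomial coefficients -/

section Multinomial

variable {p : ℕ}

lemma sum_digits_step (hp : 2 ≤ p) (n : ℕ) :
    (Nat.digits p n).sum = n % p + (Nat.digits p (n / p)).sum := by
  rcases Nat.eq_zero_or_pos n with rfl | hn
  · simp
  · rw [Nat.digits_def' (by omega) hn]
    simp

lemma dg_div (n j : ℕ) : dg p (n / p) j = dg p n (j + 1) := by
  unfold dg
  rw [Nat.div_div_eq_div_mul, pow_succ']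

lemma sum_digits_eq (hp : 2 ≤ p) (K : ℕ) : ∀ n < p ^ K,
    (Nat.digits p n).sum = ∑ j ∈ Finset.range K, dg p n j := by
  induction K with
  | zero =>
    intro n hn
    have : n = 0 := by simpa using hn
    simp [this]
  | succ K ih =>
    intro n hn
    rw [sum_digits_step hp, ih (n / p) (Nat.div_lt_of_lt_mul (by rwa [← pow_succ'])),
      Finset.sum_range_succ']
    simp only [dg_div]
    simp [dg, add_comm]

variable [hpp : Fact p.Prime]

lemma sum_digits_add_le (x y : ℕ) :
    (Nat.digits p (x + y)).sum ≤ (Nat.digits p x).sum + (Nat.digits p y).sum := by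
  have h1 := sub_one_mul_padicValNat_factorial (p := p) x
  have h2 := sub_one_mul_padicValNat_factorial (p := p) y
  have h3 := sub_one_mul_padicValNat_factorial (p := p) (x + y)
  have a1 := Nat.digit_sum_le p x
  have a2 := Nat.digit_sum_le p y
  have a3 := Nat.digit_sum_le p (x + y)
  have h4 : padicValNat p x.factorial + padicValNat p y.factorial ≤
      padicValNat p (x + y).factorial := by
    rw [← padicValNat.mul (Nat.factorial_ne_zero x) (Nat.factorial_ne_zero y)]
    exact (padicValNat_dvd_iff_le (Nat.factorial_ne_zero _)).1
      (pow_padicValNat_dvd.trans (Nat.factorial_mul_factorial_dvd_factorial_add x y))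
  have h5 := Nat.mul_le_mul_left (p - 1) h4
  rw [mul_add] at h5
  omega

lemma sum_digits_sum_le {n : ℕ} (m : Fin n → ℕ) :
    (Nat.digits p (∑ i, m i)).sum ≤ ∑ i, (Nat.digits p (m i)).sum := by
  induction n with
  | zero => simp
  | succ n ih =>
    rw [Fin.sum_univ_succ, Fin.sum_univ_succ]
    exact (sum_digits_add_le _ _).trans (Nat.add_le_add_left (ih _) _)

/-- If the digit sums add up, there is no carrying. -/
lemma dg_add_of_sum_digits {n : ℕ} (j : ℕ) : ∀ m : Fin n → ℕ,
    ∑ i, (Nat.digits p (m i)).sum = (Nat.digits p (∑ i, m i)).sum →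
    ∑ i, dg p (m i) j = dg p (∑ i, m i) j := by
  have hp := hpp.out.two_le
  induction j with
  | zero =>
    intro m hm
    have key := carry_free_step m hm
    simp only [dg, pow_zero, Nat.div_one]
    exact key.1
  | succ j ih =>
    intro m hm
    obtain ⟨-, h2, h3⟩ := carry_free_step m hm
    simp only [← dg_div]
    rw [ih _ h3, h2]
where
  carry_free_step (m : Fin n → ℕ)
      (hm : ∑ i, (Nat.digits p (m i)).sum = (Nat.digits p (∑ i, m i)).sum) :
      ∑ i, m i % p = (∑ i, m i) % p ∧ ∑ i, m i / p = (∑ i, m i) / p ∧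
      ∑ i, (Nat.digits p (m i / p)).sum = (Nat.digits p (∑ i, m i / p)).sum := by
    have hp := hpp.out.two_le
    have hsum : ∑ i, m i = ∑ i, m i % p + p * ∑ i, m i / p := by
      rw [Finset.mul_sum, ← Finset.sum_add_distrib]
      exact Finset.sum_congr rfl fun i _ => (Nat.mod_add_div _ _).symm
    have e1 : (∑ i, m i) % p = (∑ i, m i % p) % p := by
      rw [hsum, Nat.add_mul_mod_self_left]
    have e2 : (∑ i, m i) / p = (∑ i, m i % p) / p + ∑ i, m i / p := by
      rw [hsum, Nat.add_mul_div_left _ _ (by omega)]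
    rw [sum_digits_step hp (∑ i, m i)] at hm
    simp only [fun i => sum_digits_step hp (m i), Finset.sum_add_distrib] at hm
    have h1 := sum_digits_add_le (p := p) ((∑ i, m i % p) / p) (∑ i, m i / p)
    have h2 := Nat.digit_sum_le p ((∑ i, m i % p) / p)
    have h3 := sum_digits_sum_le (p := p) (fun i => m i / p)
    rw [← e2] at h1
    have h4 := Nat.mod_add_div (∑ i, m i % p) p
    have h5 : (∑ i, m i % p) / p = 0 := by
      by_contra hne
      have : 2 * ((∑ i, m i % p) / p) ≤ p * ((∑ i, m i % p) / p) := Nat.mul_le_mul_right _ hp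
      omega
    rw [h5] at h4 e2 h2
    rw [zero_add] at e2
    rw [e1]
    rw [e2] at hm h1
    refine ⟨by omega, e2.symm, by omega⟩

/-- Kummer's theorem for multinomial coefficients: `p` does not divide the coefficient exactly when
there is no carrying. -/
lemma multinomial_not_dvd_iff {n : ℕ} (m : Fin n → ℕ) :
    ¬ p ∣ Nat.multinomial Finset.univ m ↔ NoCarry p m (∑ i, m i) := by
  have hp := hpp.out.two_le
  have hspec := Nat.multinomial_spec Finset.univ m
  have hM0 : Nat.multinomial Finset.univ m ≠ 0 := (Nat.multinomial_pos _ _).ne'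
  have hprod : ∀ s : Finset (Fin n), (p - 1) * padicValNat p (∏ i ∈ s, (m i).factorial) +
      ∑ i ∈ s, (Nat.digits p (m i)).sum = ∑ i ∈ s, m i := by
    intro s
    induction s using Finset.induction_on with
    | empty => simp
    | insert a s ha ih =>
      rw [Finset.prod_insert ha, Finset.sum_insert ha, Finset.sum_insert ha,
        padicValNat.mul (Nat.factorial_ne_zero _)
          (Finset.prod_ne_zero_iff.2 fun i _ => Nat.factorial_ne_zero _), mul_add,
        sub_one_mul_padicValNat_factorial]
      have := Nat.digit_sum_le p (m a)
      omega
  have h1 := hprod Finset.univ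
  have h2 := sub_one_mul_padicValNat_factorial (p := p) (∑ i, m i)
  have h3 := Nat.digit_sum_le p (∑ i, m i)
  rw [← hspec, padicValNat.mul (Finset.prod_ne_zero_iff.2 fun i _ => Nat.factorial_ne_zero _) hM0,
    mul_add] at h2
  have h4 : ¬ p ∣ Nat.multinomial Finset.univ m ↔
      padicValNat p (Nat.multinomial Finset.univ m) = 0 := by
    rw [padicValNat.eq_zero_iff]
    have : p ≠ 1 := by omega
    tauto
  have h5 : padicValNat p (Nat.multinomial Finset.univ m) = 0 ↔
      ∑ i, (Nat.digits p (m i)).sum = (Nat.digits p (∑ i, m i)).sum := by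
    constructor
    · intro h
      rw [h] at h2
      omega
    · intro h
      have : (p - 1) * padicValNat p (Nat.multinomial Finset.univ m) = 0 := by omega
      rcases Nat.mul_eq_zero.1 this with h | h
      · omega
      · exact h
  rw [h4, h5]
  unfold NoCarry
  simp only [Nat.getD_digits _ _ hp, true_and]
  constructor
  · intro h j
    exact dg_add_of_sum_digits j m h
  · intro h
    have hlt : ∀ i, m i < p ^ (∑ i, m i) := fun i =>
      (Finset.single_le_sum (f := m) (fun _ _ => Nat.zero_le _) (Finset.mem_univ i)).trans_lt
        (Nat.lt_pow_self (by omega))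
    rw [sum_digits_eq hp _ _ (Nat.lt_pow_self (n := ∑ i, m i) (by omega)),
      Finset.sum_congr rfl fun i _ => sum_digits_eq hp _ _ (hlt i), Finset.sum_comm]
    exact Finset.sum_congr rfl fun j _ => h j

end Multinomial

/-! ### Expansion of the restricted power sum -/

section PowerSum

variable {F : Type} [Field F] [Fintype F]

lemma sum_pow_ne_zero (n : ℕ) :
    (∑ x : F, if x = 0 then 0 else x ^ n) = if Fintype.card F - 1 ∣ n then -1 else 0 := by
  rw [← FiniteField.sum_pow_units F n, Fintype.sum_eq_add_sum_subtype_ne _ (0 : F), if_pos rfl,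
    zero_add]
  symm
  apply Fintype.sum_equiv unitsEquivNeZero
  intro x
  simp

lemma sum_pow_all (n : ℕ) :
    (∑ x : F, x ^ n) = if 0 < n ∧ Fintype.card F - 1 ∣ n then -1 else 0 := by
  rcases Nat.eq_zero_or_pos n with rfl | hn
  · simp
  · have h1 := sum_pow_ne_zero (F := F) n
    simp only [hn, true_and]
    rw [← h1]
    apply Finset.sum_congr rfl
    intro x _
    split_ifs with hx
    · rw [hx, zero_pow hn.ne']
    · rfl

/-- The coefficient with which the exponent tuple `m` contributes to the restricted power sum. -/
noncomputable def tupleCoeff (F : Type) [Field F] [Fintype F] {e : ℕ} (m : Fin (e + 2) → ℕ) : F :=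
  (Nat.multinomial Finset.univ m : F) *
    ∏ j : Fin (e + 1), ∑ x : F, if j = Fin.last e ∧ x = 0 then 0 else x ^ m j.succ

lemma tupleCoeff_ne_zero_iff {p f q : ℕ} (hp : p.Prime) (hq : q = p ^ f)
    (hF : Fintype.card F = q) {e k : ℕ} (m : Fin (e + 2) → ℕ) (hm : ∑ i, m i = k) :
    tupleCoeff F m ≠ 0 ↔ m ∈ Wset p q (e + 1) k := by
  have : Fact p.Prime := ⟨hp⟩
  have : CharP F p := charP_of_card_eq_prime_pow (hF.trans hq)
  unfold tupleCoeff Wset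
  rw [mul_ne_zero_iff, Finset.prod_ne_zero_iff, ne_eq, CharP.cast_eq_zero_iff F p,
    multinomial_not_dvd_iff, hm, Set.mem_ofPred_eq]
  apply and_congr_right
  intro _
  have hlast : (∑ x : F, if Fin.last e = Fin.last e ∧ x = 0 then 0 else x ^ m (Fin.last e).succ) ≠ 0
      ↔ (q - 1) ∣ m (Fin.last (e + 1)) := by
    simp only [true_and]
    rw [sum_pow_ne_zero, hF, Fin.succ_last]
    split_ifs with h <;> simp [h]
  have hmid : ∀ j : Fin (e + 1), j ≠ Fin.last e →
      ((∑ x : F, if j = Fin.last e ∧ x = 0 then 0 else x ^ m j.succ) ≠ 0 ↔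
        0 < m j.succ ∧ (q - 1) ∣ m j.succ) := by
    intro j hj
    simp only [hj, false_and, if_false]
    rw [sum_pow_all, hF]
    split_ifs with h <;> simp [h]
  constructor
  · intro h
    refine ⟨?_, hlast.1 (h _ (Finset.mem_univ _))⟩
    intro i hi hid
    obtain ⟨j, rfl⟩ := Fin.exists_succ_eq.2 (show i ≠ 0 by rintro rfl; simp at hi)
    refine (hmid j ?_).1 (h j (Finset.mem_univ _))
    rintro rfl
    simp at hid
  · rintro ⟨h1, h2⟩ j -
    by_cases hj : j = Fin.last e
    · subst hj; exact hlast.2 h2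
    · refine (hmid j hj).2 (h1 j.succ (by simp) ?_)
      have := Fin.val_lt_last hj
      simpa using this

/-- The expansion of the restricted power sum over all exponent tuples. -/
lemma rPowerSum_eq (e k : ℕ) : rPowerSum F X (e + 1) k =
    ∑ m ∈ Finset.piAntidiag (Finset.univ : Finset (Fin (e + 2))) k,
      C (tupleCoeff F m) * X ^ wt m := by
  have hmon : ∀ b : Fin (e + 1) → F, monicPoly F (e + 1) (b ∘ Fin.rev) =
      ∑ i : Fin (e + 2), C ((Fin.cons 1 b : Fin (e + 2) → F) i) * X ^ (e + 1 - (i : ℕ)) := by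
    intro b
    unfold monicPoly
    rw [Fin.sum_univ_succ (fun i : Fin (e + 2) =>
      C ((Fin.cons 1 b : Fin (e + 2) → F) i) * X ^ (e + 1 - (i : ℕ)))]
    simp only [Fin.cons_zero, map_one, one_mul, Fin.val_zero, Nat.sub_zero, Fin.cons_succ,
      Fin.val_succ]
    congr 1
    apply Fintype.sum_equiv Fin.revPerm
    intro i
    simp only [Function.comp_apply, Fin.revPerm_apply, Fin.val_rev]
    congr 2
    have := i.isLt
    omega
  have hdvd : ∀ b : Fin (e + 1) → F, X ∣ monicPoly F (e + 1) (b ∘ Fin.rev) ↔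
      b (Fin.last e) = 0 := by
    intro b
    rw [X_dvd_iff]
    unfold monicPoly
    rw [Fin.sum_univ_succ]
    simp [coeff_X_pow]
  have hre : rPowerSum F X (e + 1) k = ∑ b : Fin (e + 1) → F,
      if b (Fin.last e) = 0 then 0 else
        (∑ i : Fin (e + 2), C ((Fin.cons 1 b : Fin (e + 2) → F) i) * X ^ (e + 1 - (i : ℕ))) ^ k := by
    unfold rPowerSum
    symm
    apply Fintype.sum_equiv (Equiv.arrowCongr Fin.revPerm (Equiv.refl F))
    intro b
    have hb : Equiv.arrowCongr Fin.revPerm (Equiv.refl F) b = b ∘ Fin.rev := by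
      funext i; simp [Equiv.arrowCongr]
    rw [hb, hmon]
    simp only [← hmon, hdvd]
  have hterm : ∀ (b : Fin (e + 1) → F) (m : Fin (e + 2) → ℕ),
      ∏ i : Fin (e + 2), (C ((Fin.cons 1 b : Fin (e + 2) → F) i) * X ^ (e + 1 - (i : ℕ))) ^ m i =
      C (∏ j : Fin (e + 1), b j ^ m j.succ) * X ^ wt m := by
    intro b m
    simp only [mul_pow, Finset.prod_mul_distrib, ← pow_mul]
    rw [Finset.prod_pow_eq_pow_sum]
    congr 1
    rw [Fin.prod_univ_succ]
    simp [map_prod]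
  have hprod : ∀ m : Fin (e + 2) → ℕ,
      (∏ j : Fin (e + 1), ∑ x : F, if j = Fin.last e ∧ x = 0 then 0 else x ^ m j.succ) =
      ∑ b : Fin (e + 1) → F, if b (Fin.last e) = 0 then 0 else ∏ j, b j ^ m j.succ := by
    intro m
    rw [Finset.prod_univ_sum, Fintype.piFinset_univ]
    apply Finset.sum_congr rfl
    intro b _
    split_ifs with hb
    · exact Finset.prod_eq_zero (Finset.mem_univ (Fin.last e)) (by simp [hb])
    · apply Finset.prod_congr rfl
      intro j _
      rw [if_neg]
      rintro ⟨rfl, h⟩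
      exact hb h
  rw [hre]
  simp only [Finset.sum_pow_eq_sum_piAntidiag, hterm]
  have hswap : ∀ b : Fin (e + 1) → F, (if b (Fin.last e) = 0 then (0 : F[X]) else
      ∑ m ∈ Finset.piAntidiag (Finset.univ : Finset (Fin (e + 2))) k,
        (Nat.multinomial Finset.univ m : F[X]) * (C (∏ j, b j ^ m j.succ) * X ^ wt m)) =
      ∑ m ∈ Finset.piAntidiag (Finset.univ : Finset (Fin (e + 2))) k,
        (Nat.multinomial Finset.univ m : F[X]) *
          (C (if b (Fin.last e) = 0 then 0 else ∏ j, b j ^ m j.succ) * X ^ wt m) := by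
    intro b
    split_ifs <;> simp
  simp only [hswap]
  rw [Finset.sum_comm]
  apply Finset.sum_congr rfl
  intro m _
  unfold tupleCoeff
  rw [hprod, ← Finset.mul_sum, ← Finset.sum_mul, ← map_sum, map_mul, map_natCast, mul_assoc]

end PowerSum

theorem stmt11 (p f q : ℕ) (hp : p.Prime) (hf : 0 < f) (hq : q = p ^ f)
    (F : Type) [Field F] [Fintype F] (hF : Fintype.card F = q)
    (d k : ℕ) (hd : 1 ≤ d) (hk : 0 < k) (hne : rPowerSum F X d k ≠ 0) :
    ∃ M ∈ Wset p q d k,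
      (∀ m ∈ Wset p q d k, m ≠ M → wt M < wt m) ∧
      (rPowerSum F X d k).natTrailingDegree = wt M := by
  obtain ⟨e, rfl⟩ : ∃ e, d = e + 1 := ⟨d - 1, by omega⟩
  have hiff : ∀ m ∈ Finset.piAntidiag (Finset.univ : Finset (Fin (e + 2))) k,
      (tupleCoeff F m ≠ 0 ↔ m ∈ Wset p q (e + 1) k) := fun m hm =>
    tupleCoeff_ne_zero_iff hp hq hF m (Finset.mem_piAntidiag.1 hm).1
  have hexp := rPowerSum_eq (F := F) e k
  have hW : (Wset p q (e + 1) k).Nonempty := by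
    by_contra hcon
    rw [Set.not_nonempty_iff_eq_empty] at hcon
    apply hne
    rw [hexp]
    apply Finset.sum_eq_zero
    intro m hm
    have h1 := hiff m hm
    rw [hcon] at h1
    have h2 : tupleCoeff F m = 0 := by
      by_contra h
      exact h1.1 h
    simp [h2]
  obtain ⟨M, hM, hmin⟩ : ∃ M ∈ Wset p q (e + 1) k,
      ∀ m ∈ Wset p q (e + 1) k, m ≠ M → wt M < wt m := by
    subst hq
    exact exists_unique_min hf hp.two_le hd hW
  refine ⟨M, hM, hmin, ?_⟩
  have hMmem : M ∈ Finset.piAntidiag (Finset.univ : Finset (Fin (e + 2))) k :=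
    Finset.mem_piAntidiag.2 ⟨hM.1.1, fun i _ => Finset.mem_univ i⟩
  have hcoeff : ∀ n, (rPowerSum F X (e + 1) k).coeff n =
      ∑ m ∈ Finset.piAntidiag (Finset.univ : Finset (Fin (e + 2))) k,
        if n = wt m then tupleCoeff F m else 0 := by
    intro n
    rw [hexp, finsetSum_coeff]
    simp only [coeff_C_mul_X_pow]
  apply le_antisymm
  · apply natTrailingDegree_le_of_ne_zero
    rw [hcoeff, Finset.sum_eq_single_of_mem M hMmem, if_pos rfl]
    · exact (hiff M hMmem).2 hM
    · intro m hm hmM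
      split_ifs with h
      · by_contra h0
        have := hmin m ((hiff m hm).1 h0) hmM
        omega
      · rfl
  · apply le_natTrailingDegree hne
    intro n hn
    rw [hcoeff]
    apply Finset.sum_eq_zero
    intro m hm
    split_ifs with h
    · by_contra h0
      have h1 := (hiff m hm).1 h0
      by_cases hmM : m = M
      · subst hmM; omega
      · have := hmin m h1 hmM
        omega
    · rfl
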